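/- Let r < 0.546 be a fixed real number. For each n, let φ_n be a random EC3 formula on n variables with m = ⌊rn⌋ clauses, each clause chosen independently and uniformly with replacement from the C(n,3) possible 3-element clauses. Then lim_{n→∞} Pr[φ_n is satisfiable] = 1. -/

import Mathlib

/-!
The formula is explored variable by variable, and satisfiability is proved by an induction on the
number of variables in which every probability is a ratio of cardinalities (`pr`).

**Slots.** A clause is replaced by three independent uniform slots; conditioning on the clauses
being non-degenerate and forgetting the order of the slots costs a constant factor (`unsat_le`).
A residual formula `Cfg` has three-clauses, xors (what is left of a three-clause when one of its
variables is false) and touched slots, single slots whose values are restricted to a set `A` of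
value vectors. Revealing the variable of a touched slot hits some clauses: the partner in a hit xor
is touched, and so are the two remaining slots of a hit three-clause. What remains is again
uniformly distributed (`reveal`).

**Strategy.** As long as three-clauses are left, an xor is opened, or a three-clause if there
is no xor or the end phase has begun, and all consequences of a choice of values are followed. A
touched slot is active, with a planned value, or belongs to a dormant pair, the rest of a
three-clause whose revealed variable is planned false; when no slot is active any more, the dormant
pairs become xors. As long as touched slots lie in distinct components of the xor graph, the plan
meets no contradiction; at the end, the xor graph is acyclic and hence satisfiable
(`Acyc.colorable`).

**Collisions.** Two given slots are connected in the xor graph with probability `O(1/N)` (`walk`,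
`conn_le`). One such collision does not cause failure: the set `A` is flexible, that is, every slot
may take both values (`Flex`), so the value vectors compatible with the collision are not exhausted,
and the exploration continues with another plan, which fails with probability `O(1/N)` again. Hence
one round of the exploration fails with probability `O(1/N ^ 2)`, and the whole exploration with
probability `O(1/n)`.

**Density.** The active slots form a two-type branching process: a slot planned true produces slots
planned false, through xors and three-clauses, and a slot planned false produces slots planned true,
through xors. It is subcritical along the fluid limit when the density is at most `0.546`
(`key_ineq`). That the process stays close to the fluid limit is expressed by an exponential
potential `PP`, whose drift is negative (`PP_step`). When less than a fraction `0.24` of the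
variables remains, `PP` changes to a potential that controls the process until the three-clauses
are used up.

These estimates are combined in the functions `W0`, `W1`, `W2`, `Wa`, which dominate their own
averages under one step (`Super`, `superBounds`) and therefore bound the failure probabilities
(`Super.level`). At the start, `W0` is `O(1/n)` (`W0_start`, `main_bound`).
-/

open Filter Topology

/-- A clause of an EC3 (Positive 1-in-3 SAT) formula on `n` variables:
a 3-element subset of the variables. -/
def EC3Clause (n : ℕ) := {c : Finset (Fin n) // c.card = 3}

/-- An assignment satisfies a clause if exactly one of its variables is true. -/
def ClauseSat {n : ℕ} (σ : Fin n → Bool) (c : Finset (Fin n)) : Prop :=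
  (c.filter fun v => σ v = true).card = 1

/-- A formula (a length-`m` tuple of clauses, i.e. a multiset of clauses with
multiplicity recorded by indices) is satisfiable if some assignment satisfies
every clause. -/
def FormulaSatisfiable {n m : ℕ} (φ : Fin m → EC3Clause n) : Prop :=
  ∃ σ : Fin n → Bool, ∀ i : Fin m, ClauseSat σ (φ i).1

/-- The probability that a random EC3 formula on `n` variables with `m` clauses,
each chosen independently and uniformly with replacement among the `C(n,3)`
possible clauses, is satisfiable. -/
noncomputable def Psat (n m : ℕ) : ℝ :=
  (Nat.card {φ : Fin m → EC3Clause n // FormulaSatisfiable φ} : ℝ) /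
    (Nat.card (Fin m → EC3Clause n) : ℝ)

namespace EC3

/-! ### Xor graphs -/

/-- Connectivity in the multigraph on `V` whose edges are the pairs `c i`. -/
def Conn {U V : Type} (c : U → Fin 2 → V) : V → V → Prop :=
  Relation.EqvGen fun u v => ∃ i, c i 0 = u ∧ c i 1 = v

section Conn
variable {U W V V' : Type}

theorem Conn.refl (c : U → Fin 2 → V) (u : V) : Conn c u u := Relation.EqvGen.refl u
theorem Conn.symm {c : U → Fin 2 → V} {u v : V} (h : Conn c u v) : Conn c v u :=
  Relation.EqvGen.symm _ _ h
theorem Conn.trans {c : U → Fin 2 → V} {u v w : V} (h : Conn c u v) (h' : Conn c v w) :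
    Conn c u w := Relation.EqvGen.trans _ _ _ h h'
theorem Conn.edge (c : U → Fin 2 → V) (i : U) : Conn c (c i 0) (c i 1) :=
  Relation.EqvGen.rel _ _ ⟨i, rfl, rfl⟩
theorem Conn.edge' (c : U → Fin 2 → V) (i : U) (b b' : Fin 2) : Conn c (c i b) (c i b') := by
  have h := Conn.edge c i
  fin_cases b <;> fin_cases b' <;> first | exact Conn.refl _ _ | exact h | exact h.symm

theorem Conn.map {c : U → Fin 2 → V} {c' : W → Fin 2 → V'} (f : V → V')
    (he : ∀ i, Conn c' (f (c i 0)) (f (c i 1))) {u v : V} (h : Conn c u v) :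
    Conn c' (f u) (f v) := by
  induction h with
  | rel x y h => obtain ⟨i, rfl, rfl⟩ := h; exact he i
  | refl x => exact Conn.refl _ _
  | symm x y _ ih => exact ih.symm
  | trans x y z _ _ ih1 ih2 => exact ih1.trans ih2

theorem Conn.mono {c : U → Fin 2 → V} {c' : W → Fin 2 → V}
    (he : ∀ i, Conn c' (c i 0) (c i 1)) {u v : V} (h : Conn c u v) : Conn c' u v :=
  Conn.map id he h

/-- Connectivity after the insertion of one edge `e₀e₁`. -/
theorem Conn.add_edge {c : U → Fin 2 → V} {c' : W → Fin 2 → V} {e₀ e₁ : V}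
    (he : ∀ j, Conn c' (c j 0) (c j 1) ∨ (c j 0 = e₀ ∧ c j 1 = e₁)) {u v : V}
    (h : Conn c u v) :
    Conn c' u v ∨ (Conn c' u e₀ ∧ Conn c' e₁ v) ∨ (Conn c' u e₁ ∧ Conn c' e₀ v) := by
  induction h with
  | rel x y h =>
    obtain ⟨i, rfl, rfl⟩ := h
    rcases he i with h | ⟨h0, h1⟩
    · exact Or.inl h
    · rw [h0, h1]; exact Or.inr (Or.inl ⟨Conn.refl _ _, Conn.refl _ _⟩)
  | refl x => exact Or.inl (Conn.refl _ _)
  | symm x y _ ih =>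
    rcases ih with h | ⟨h, h'⟩ | ⟨h, h'⟩
    · exact Or.inl h.symm
    · exact Or.inr (Or.inr ⟨h'.symm, h.symm⟩)
    · exact Or.inr (Or.inl ⟨h'.symm, h.symm⟩)
  | trans x y z _ _ ih1 ih2 =>
    rcases ih1 with h | ⟨h, h'⟩ | ⟨h, h'⟩ <;> rcases ih2 with k | ⟨k, kk⟩ | ⟨k, kk⟩
    · exact Or.inl (h.trans k)
    · exact Or.inr (Or.inl ⟨h.trans k, kk⟩)
    · exact Or.inr (Or.inr ⟨h.trans k, kk⟩)
    · exact Or.inr (Or.inl ⟨h, h'.trans k⟩)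
    · exact Or.inr (Or.inl ⟨h, kk⟩)
    · exact Or.inl (h.trans kk)
    · exact Or.inr (Or.inr ⟨h, h'.trans k⟩)
    · exact Or.inl (h.trans kk)
    · exact Or.inr (Or.inr ⟨h, kk⟩)

/-- The edge family with the edge `i` deleted. -/
def del (c : U → Fin 2 → V) (i : U) : {j // j ≠ i} → Fin 2 → V := fun j => c j.1

theorem Conn.of_del {c : U → Fin 2 → V} {i : U} {u v : V} (h : Conn (del c i) u v) :
    Conn c u v := Conn.mono (fun j => Conn.edge c j.1) h

theorem Conn.del_split {c : U → Fin 2 → V} (i : U) {u v : V} (h : Conn c u v) :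
    Conn (del c i) u v ∨ (Conn (del c i) u (c i 0) ∧ Conn (del c i) (c i 1) v) ∨
      (Conn (del c i) u (c i 1) ∧ Conn (del c i) (c i 0) v) := by
  refine Conn.add_edge (fun j => ?_) h
  by_cases hj : j = i
  · subst hj; exact Or.inr ⟨rfl, rfl⟩
  · exact Or.inl (Conn.edge (del c i) ⟨j, hj⟩)

theorem Conn.exists_edge {c : U → Fin 2 → V} {u v : V} (h : Conn c u v) (huv : u ≠ v) :
    ∃ i b, c i b = u := by
  by_contra hne
  push Not at hne
  have key : ∀ {a b : V}, Conn c a b → (a = u ↔ b = u) := by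
    intro a b hab
    induction hab with
    | rel x y h =>
      obtain ⟨i, rfl, rfl⟩ := h
      simp [hne i 0, hne i 1]
    | refl x => exact Iff.rfl
    | symm x y _ ih => exact ih.symm
    | trans x y z _ _ ih1 ih2 => exact ih1.trans ih2
  exact huv ((key h).1 rfl).symm

/-- A walk from `u` to `v ≠ u` can be taken to leave `u` through an edge that it never uses
again. -/
theorem Conn.head [Finite U] {c : U → Fin 2 → V} {u v : V} (h : Conn c u v) (huv : u ≠ v) :
    ∃ i b, c i b = u ∧ Conn (del c i) (c i (1 - b)) v := by
  have main : ∀ n : ℕ, ∀ (U : Type) [Finite U] (c : U → Fin 2 → V), Nat.card U = n →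
      Conn c u v → ∃ i b, c i b = u ∧ Conn (del c i) (c i (1 - b)) v := by
    intro n
    induction n with
    | zero =>
      intro U _ c hU h
      obtain ⟨i, b, -⟩ := h.exists_edge huv
      have := Finite.card_pos_iff.2 ⟨i⟩
      omega
    | succ n ih =>
      intro U _ c hU h
      obtain ⟨i, b, hi⟩ := h.exists_edge huv
      have hrec : Conn (del c i) u v → ∃ i b, c i b = u ∧ Conn (del c i) (c i (1 - b)) v := by
        intro h'
        have hcard : Nat.card {j // j ≠ i} = n := by
          classical
          have := Fintype.ofFinite U
          rw [Nat.card_eq_fintype_card] at hU ⊢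
          simp [Fintype.card_subtype_compl, hU]
        obtain ⟨j, b', hj, hc⟩ := ih _ (del c i) hcard h'
        refine ⟨j.1, b', hj, Conn.mono (fun k => ?_) hc⟩
        exact Conn.edge (del c j.1) ⟨k.1.1, fun hk => k.2 (Subtype.ext hk)⟩
      by_cases hb : b = 0
      · subst hb
        rcases h.del_split i with h' | ⟨h1, h2⟩ | ⟨h1, h2⟩
        · exact hrec h'
        · exact ⟨i, 0, hi, h2⟩
        · rw [hi] at h2; exact hrec h2
      · obtain rfl : b = 1 := by omega
        rcases h.del_split i with h' | ⟨h1, h2⟩ | ⟨h1, h2⟩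
        · exact hrec h'
        · rw [hi] at h2; exact hrec h2
        · exact ⟨i, 1, hi, h2⟩
  exact main _ U c rfl h

/-- No edge closes a cycle. -/
def Acyc (c : U → Fin 2 → V) : Prop := ∀ i, ¬ Conn (del c i) (c i 0) (c i 1)

theorem Acyc.del {c : U → Fin 2 → V} (h : Acyc c) (i : U) : Acyc (del c i) := by
  intro j hj
  refine h j.1 (Conn.mono (fun k => ?_) hj)
  exact Conn.edge (EC3.del c j.1) ⟨k.1.1, fun hk => k.2 (Subtype.ext hk)⟩

theorem Acyc.comp {c : U → Fin 2 → V} (h : Acyc c) (f : W → U) (hf : Function.Injective f) :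
    Acyc (fun w => c (f w)) := by
  intro j hj
  refine h (f j) (Conn.mono (fun k => ?_) hj)
  exact Conn.edge (EC3.del c (f j)) ⟨f k.1, fun hk => k.2 (hf hk)⟩

theorem Acyc.ne {c : U → Fin 2 → V} (h : Acyc c) (i : U) : c i 0 ≠ c i 1 := by
  intro he
  apply h i
  rw [he]; exact Conn.refl _ _

/-- An acyclic system of xor constraints is satisfiable. -/
theorem Acyc.colorable [Finite U] {c : U → Fin 2 → V} (h : Acyc c) :
    ∃ σ : V → Bool, ∀ i, σ (c i 0) ≠ σ (c i 1) := by
  classical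
  have main : ∀ n : ℕ, ∀ (U : Type) [Finite U] (c : U → Fin 2 → V), Nat.card U = n →
      Acyc c → ∃ σ : V → Bool, ∀ i, σ (c i 0) ≠ σ (c i 1) := by
    intro n
    induction n with
    | zero =>
      intro U _ c hU _
      refine ⟨fun _ => true, fun i => ?_⟩
      have := Finite.card_pos_iff.2 ⟨i⟩
      omega
    | succ n ih =>
      intro U _ c hU h
      have hne : Nonempty U := Finite.card_pos_iff.1 (by omega)
      obtain ⟨i⟩ := hne
      have hcard : Nat.card {j // j ≠ i} = n := by
        have := Fintype.ofFinite U
        rw [Nat.card_eq_fintype_card] at hU ⊢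
        simp [Fintype.card_subtype_compl, hU]
      obtain ⟨σ, hσ⟩ := ih _ (EC3.del c i) hcard (h.del i)
      -- flip the component of one endpoint if the two endpoints got the same colour
      by_cases hc : σ (c i 0) = σ (c i 1)
      · refine ⟨fun v => if Conn (EC3.del c i) (c i 0) v then !σ v else σ v, fun j => ?_⟩
        by_cases hj : j = i
        · subst hj
          simp [Conn.refl, h j, hc]
        · have e := Conn.edge (EC3.del c i) ⟨j, hj⟩
          have hs := hσ ⟨j, hj⟩
          simp only [EC3.del] at e hs
          by_cases h0 : Conn (EC3.del c i) (c i 0) (c j 0)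
          · have h1 := h0.trans e
            simp only [h0, h1, if_true]
            simpa using hs
          · have h1 : ¬ Conn (EC3.del c i) (c i 0) (c j 1) := fun h1 => h0 (h1.trans e.symm)
            simp only [h0, h1, if_false]
            exact hs
      · refine ⟨σ, fun j => ?_⟩
        by_cases hj : j = i
        · subst hj; exact hc
        · exact hσ ⟨j, hj⟩
  exact main _ U c rfl h

end Conn

/-! ### Counting -/

/-- The probability of the event `P` under the uniform law on the finite type `Ω`. -/
noncomputable def pr {Ω : Type} (P : Ω → Prop) : ℝ := (Nat.card {ω // P ω} : ℝ) / Nat.card Ω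

theorem pr_nonneg {Ω : Type} (P : Ω → Prop) : 0 ≤ pr P := by unfold pr; positivity

theorem pr_le_one {Ω : Type} [Finite Ω] (P : Ω → Prop) : pr P ≤ 1 := by
  unfold pr
  apply div_le_one_of_le₀ _ (by positivity)
  exact_mod_cast Finite.card_subtype_le P

theorem card_mono {Ω : Type} [Finite Ω] {P Q : Ω → Prop} (h : ∀ ω, P ω → Q ω) :
    Nat.card {ω // P ω} ≤ Nat.card {ω // Q ω} :=
  Nat.card_le_card_of_injective (fun ω : {ω // P ω} => (⟨ω.1, h _ ω.2⟩ : {ω // Q ω}))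
    (fun a b hab => Subtype.ext (by simpa using hab))

theorem pr_mono {Ω : Type} [Finite Ω] {P Q : Ω → Prop} (h : ∀ ω, P ω → Q ω) :
    pr P ≤ pr Q := by
  unfold pr
  have := card_mono h
  gcongr

theorem card_or_le {Ω : Type} [Finite Ω] (P Q : Ω → Prop) :
    Nat.card {ω // P ω ∨ Q ω} ≤ Nat.card {ω // P ω} + Nat.card {ω // Q ω} := by
  classical
  have := Fintype.ofFinite Ω
  simp only [Nat.card_eq_fintype_card]
  exact Fintype.card_subtype_or P Q

theorem pr_or_le {Ω : Type} [Finite Ω] (P Q : Ω → Prop) :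
    pr (fun ω => P ω ∨ Q ω) ≤ pr P + pr Q := by
  unfold pr
  rw [← add_div]
  have := card_or_le P Q
  gcongr
  exact_mod_cast this

/-- If every point of `P` is the image of some point of `P' j` under `F j`, then `P` has at most
`∑ j, |P' j|` points. -/
theorem card_le_sum_of_cover {Ω J : Type} [Fintype J] {Ω' : J → Type} [∀ j, Finite (Ω' j)]
    (P : Ω → Prop) (P' : ∀ j, Ω' j → Prop) (F : ∀ j, Ω' j → Ω)
    (h : ∀ ω, P ω → ∃ j η, F j η = ω ∧ P' j η) :
    Nat.card {ω // P ω} ≤ ∑ j, Nat.card {η // P' j η} := by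
  rw [← Nat.card_sigma]
  choose j η hF hP' using h
  refine Nat.card_le_card_of_injective
    (fun ω : {ω // P ω} => (⟨j ω.1 ω.2, η ω.1 ω.2, hP' _ _⟩ : Σ j, {η // P' j η})) ?_
  intro a b hab
  have := congrArg (fun s : Σ j, {η // P' j η} => F s.1 s.2.1) hab
  simp only [hF] at this
  exact Subtype.ext this

theorem pr_exists_le {Ω J : Type} [Finite Ω] [Fintype J] (P : J → Ω → Prop) :
    pr (fun ω => ∃ j, P j ω) ≤ ∑ j, pr (P j) := by
  unfold pr
  rw [← Finset.sum_div]
  have := card_le_sum_of_cover (Ω' := fun _ : J => Ω) (fun ω => ∃ j, P j ω) P (fun _ ω => ω)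
    (fun ω ⟨j, hj⟩ => ⟨j, ω, rfl, hj⟩)
  gcongr
  exact_mod_cast this

/-! ### Residual formulas -/

/-- A residual formula on the variables `V`: three-clauses indexed by `I`, xor-clauses indexed
by `U`, and touched slots indexed by `T`. Every slot holds a variable. -/
abbrev Cfg (I U T V : Type) := (I → Fin 3 → V) × (U → Fin 2 → V) × (T → V)

section Cfg
variable {I U T V : Type}

/-- Exactly one of three truth values holds. -/
def One3 (u : Fin 3 → Bool) : Prop := ∃! p, u p = true

/-- Some assignment satisfies all three-clauses (exactly one true variable) and all xors, and the
values it induces on the touched slots form a member of `A`. -/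
def Sat (A : Set (T → Bool)) (f : Cfg I U T V) : Prop :=
  ∃ σ : V → Bool, (∀ i, One3 (fun p => σ (f.1 i p))) ∧
    (∀ j, σ (f.2.1 j 0) ≠ σ (f.2.1 j 1)) ∧ (fun t => σ (f.2.2 t)) ∈ A

/-- Non-degenerate three-clauses and acyclic xors. -/
def NA (f : Cfg I U T V) : Prop := (∀ i, Function.Injective (f.1 i)) ∧ Acyc f.2.1

/-- The touched slots lie in pairwise distinct components of the xor graph. -/
def TD (f : Cfg I U T V) : Prop :=
  ∀ t t', t ≠ t' → ¬ Conn f.2.1 (f.2.2 t) (f.2.2 t')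

theorem Sat.mono {A B : Set (T → Bool)} (h : A ⊆ B) {f : Cfg I U T V} (hf : Sat A f) :
    Sat B f := by
  obtain ⟨σ, h1, h2, h3⟩ := hf
  exact ⟨σ, h1, h2, h h3⟩

theorem card_cfg [Finite I] [Finite U] [Finite T] :
    Nat.card (Cfg I U T V) =
      Nat.card V ^ (3 * Nat.card I + 2 * Nat.card U + Nat.card T) := by
  have := Fintype.ofFinite I
  have := Fintype.ofFinite U
  have := Fintype.ofFinite T
  simp only [Cfg, Nat.card_prod, Nat.card_fun, Nat.card_eq_fintype_card, Fintype.card_fin]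
  rw [← pow_mul, ← pow_mul, ← pow_add, ← pow_add, add_assoc]

/-- The three truth values of a clause in which the slot `p` is singled out. -/
theorem one3_insertNth (p : Fin 3) (b : Bool) (w : Fin 2 → Bool) :
    One3 (p.insertNth (α := fun _ => Bool) b w) ↔ One3 ![b, w 0, w 1] := by
  have hw : w = ![w 0, w 1] := by ext i; fin_cases i <;> rfl
  rw [hw]
  generalize w 0 = x
  generalize w 1 = y
  simp only [One3, ExistsUnique, Matrix.cons_val_zero, Matrix.cons_val_one]
  revert p b x y
  decide

end Cfg

/-! ### Revealing the variable of a touched slot -/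

section Reveal
variable {I U T V : Type}

/-- The touched slots after the slot `s` has been revealed: the other slots, the partner slot of
each xor that was hit, and the two remaining slots of each three-clause that was hit. -/
abbrev TNext (s : T) (J₃ : I → Option (Fin 3)) (J₂ : U → Option (Fin 2)) : Type :=
  {t // t ≠ s} ⊕ ({j // J₂ j ≠ none} ⊕ ({i // J₃ i ≠ none} × Fin 2))

/-- The residual formulas left when the slot `s` is revealed to hold `x`, where `J₃` and `J₂`
record which clauses contain `x`, and in which position. -/
abbrev CfgNext (s : T) (x : V) (J₃ : I → Option (Fin 3)) (J₂ : U → Option (Fin 2)) : Type :=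
  Cfg {i // J₃ i = none} {j // J₂ j = none} (TNext s J₃ J₂) {v // v ≠ x}

open Classical in
/-- Reassembly of the formula from what is left after a reveal. -/
noncomputable def asm (s : T) (x : V) (J₃ : I → Option (Fin 3)) (J₂ : U → Option (Fin 2))
    (g : CfgNext s x J₃ J₂) : Cfg I U T V :=
  (fun i => if h : J₃ i = none then fun p => (g.1 ⟨i, h⟩ p).1
      else ((J₃ i).get (Option.isSome_iff_ne_none.2 h)).insertNth (α := fun _ => V) x
        (fun b => (g.2.2 (.inr (.inr (⟨i, h⟩, b)))).1),
   fun j => if h : J₂ j = none then fun p => (g.2.1 ⟨j, h⟩ p).1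
      else fun b => if b = (J₂ j).get (Option.isSome_iff_ne_none.2 h) then x
        else (g.2.2 (.inr (.inl ⟨j, h⟩))).1,
   fun t => if h : t = s then x else (g.2.2 (.inl ⟨t, h⟩)).1)

/-- The admissible values of the touched slots after the slot `s` has been revealed. -/
def ANext (A : Set (T → Bool)) (s : T) (J₃ : I → Option (Fin 3)) (J₂ : U → Option (Fin 2)) :
    Set (TNext s J₃ J₂ → Bool) :=
  {a' | ∃ a ∈ A, (∀ t, a' (.inl t) = a t.1) ∧ (∀ j, a' (.inr (.inl j)) = !a s) ∧
    ∀ i, One3 ![a s, a' (.inr (.inr (i, 0))), a' (.inr (.inr (i, 1)))]}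

theorem sat_asm {A : Set (T → Bool)} {s : T} {x : V} {J₃ : I → Option (Fin 3)}
    {J₂ : U → Option (Fin 2)} {g : CfgNext s x J₃ J₂} (h : Sat (ANext A s J₃ J₂) g) :
    Sat A (asm s x J₃ J₂ g) := by
  classical
  obtain ⟨σ, h1, h2, a, haA, ha1, ha2, ha3⟩ := h
  set τ : V → Bool := fun v => if h : v = x then a s else σ ⟨v, h⟩ with hτ
  have hx : τ x = a s := by simp [hτ]
  have hv : ∀ v : {v // v ≠ x}, τ v.1 = σ v := by
    intro v; simp [hτ, v.2]
  refine ⟨τ, fun i => ?_, fun j => ?_, ?_⟩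
  · by_cases h : J₃ i = none
    · simpa [asm, h, hv] using h1 ⟨i, h⟩
    · simp only [asm, h, dite_false]
      have := ha3 ⟨i, h⟩
      rw [← one3_insertNth ((J₃ i).get (Option.isSome_iff_ne_none.2 h)) (a s)
        (fun b => σ (g.2.2 (.inr (.inr (⟨i, h⟩, b)))))] at this
      convert this using 1
      ext p
      refine Fin.succAboveCases ((J₃ i).get (Option.isSome_iff_ne_none.2 h)) ?_ (fun b => ?_) p
      · simp [hx]
      · simp [hv]
  · by_cases h : J₂ j = none
    · simpa [asm, h, hv] using h2 ⟨j, h⟩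
    · simp only [asm, h, dite_false]
      have := ha2 ⟨j, h⟩
      generalize (J₂ j).get (Option.isSome_iff_ne_none.2 h) = b
      fin_cases b <;> simp [hx, hv, this]
  · convert haA using 1
    ext t
    by_cases h : t = s
    · simp [asm, h, hx]
    · simp [asm, h, hv, ← ha1 ⟨t, h⟩]

/-- Every formula is reassembled from what is left after the reveal of `s`. Here `NA` and `TD`
exclude that a clause is hit twice or that a second touched slot holds the same variable. -/
theorem exists_asm {s : T} {f : Cfg I U T V} (hna : NA f) (htd : TD f) :
    ∃ (J₃ : I → Option (Fin 3)) (J₂ : U → Option (Fin 2)) (g : CfgNext s (f.2.2 s) J₃ J₂),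
      asm s (f.2.2 s) J₃ J₂ g = f := by
  classical
  set x := f.2.2 s with hx
  have key3 : ∀ i, ∃ o : Option (Fin 3), (o = none → ∀ p, f.1 i p ≠ x) ∧
      (∀ p, o = some p → f.1 i p = x) := by
    intro i
    by_cases h : ∃ p, f.1 i p = x
    · obtain ⟨p, hp⟩ := h
      exact ⟨some p, by simp, by rintro q ⟨⟩; exact hp⟩
    · push Not at h
      exact ⟨none, fun _ => h, by simp⟩
  have key2 : ∀ i, ∃ o : Option (Fin 2), (o = none → ∀ p, f.2.1 i p ≠ x) ∧
      (∀ p, o = some p → f.2.1 i p = x) := by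
    intro i
    by_cases h : ∃ p, f.2.1 i p = x
    · obtain ⟨p, hp⟩ := h
      exact ⟨some p, by simp, by rintro q ⟨⟩; exact hp⟩
    · push Not at h
      exact ⟨none, fun _ => h, by simp⟩
  choose J₃ hJ₃ hJ₃' using key3
  choose J₂ hJ₂ hJ₂' using key2
  have g3 : ∀ i (h : J₃ i ≠ none),
      f.1 i ((J₃ i).get (Option.isSome_iff_ne_none.2 h)) = x :=
    fun i h => hJ₃' i _ (Option.some_get _).symm
  have g2 : ∀ i (h : J₂ i ≠ none),
      f.2.1 i ((J₂ i).get (Option.isSome_iff_ne_none.2 h)) = x :=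
    fun i h => hJ₂' i _ (Option.some_get _).symm
  refine ⟨J₃, J₂, ⟨fun i p => ⟨f.1 i.1 p, hJ₃ _ i.2 p⟩, fun j p => ⟨f.2.1 j.1 p, hJ₂ _ j.2 p⟩,
    fun t => match t with
      | .inl t => ⟨f.2.2 t.1, fun h => htd _ _ t.2 (by rw [h]; exact Conn.refl _ _)⟩
      | .inr (.inl j) =>
        ⟨f.2.1 j.1 (1 - (J₂ j.1).get (Option.isSome_iff_ne_none.2 j.2)), fun h => ?_⟩
      | .inr (.inr (i, b)) =>
        ⟨f.1 i.1 (((J₃ i.1).get (Option.isSome_iff_ne_none.2 i.2)).succAbove b), fun h => ?_⟩⟩, ?_⟩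
  · have h1 := g2 j.1 j.2
    have h2 := hna.2.ne j.1
    revert h h1
    generalize (J₂ j.1).get (Option.isSome_iff_ne_none.2 j.2) = b
    intro h h1
    fin_cases b
    · exact h2 (h1.trans h.symm)
    · exact h2 (h.trans h1.symm)
  · have h1 := g3 i.1 i.2
    have := hna.1 i.1 (h.trans h1.symm)
    exact Fin.succAbove_ne _ _ this
  · refine Prod.ext (funext fun i => ?_) (Prod.ext (funext fun j => ?_) (funext fun t => ?_))
    · by_cases h : J₃ i = none
      · simp [asm, h]
      · simp only [asm, h, dite_false]
        refine Fin.insertNth_eq_iff.2 ⟨(g3 i h).symm, ?_⟩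
        rfl
    · by_cases h : J₂ j = none
      · simp [asm, h]
      · simp only [asm, h, dite_false]
        have := g2 j h
        revert this
        generalize (J₂ j).get (Option.isSome_iff_ne_none.2 h) = b
        intro this
        funext b'
        split_ifs with hb
        · rw [hb]; exact this.symm
        · have hbb : 1 - b = b' := by clear * - hb; revert b b'; decide
          rw [← hbb]
    · by_cases h : t = s
      · subst h; simp [asm, hx]
      · simp [asm, h]

theorem Acyc.eq_of_conn {c : U → Fin 2 → V} (h : Acyc c) {i : U} {b b' : Fin 2}
    (hc : Conn (EC3.del c i) (c i b) (c i b')) : b = b' := by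
  fin_cases b <;> fin_cases b'
  · rfl
  · exact absurd hc (h i)
  · exact absurd hc.symm (h i)
  · rfl

section
variable {s : T} {x : V} {J₃ : I → Option (Fin 3)} {J₂ : U → Option (Fin 2)}
  (g : CfgNext s x J₃ J₂)

theorem asm_three (i : {i // J₃ i = none}) (p : Fin 3) :
    (asm s x J₃ J₂ g).1 i.1 p = (g.1 i p).1 := by
  simp [asm, i.2]

theorem asm_xor (j : {j // J₂ j = none}) (p : Fin 2) :
    (asm s x J₃ J₂ g).2.1 j.1 p = (g.2.1 j p).1 := by
  simp [asm, j.2]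

theorem asm_hit (j : {j // J₂ j ≠ none}) : ∃ b, (asm s x J₃ J₂ g).2.1 j.1 b = x ∧
    (asm s x J₃ J₂ g).2.1 j.1 (1 - b) = (g.2.2 (.inr (.inl j))).1 := by
  refine ⟨(J₂ j.1).get (Option.isSome_iff_ne_none.2 j.2), ?_, ?_⟩
  · simp [asm, j.2]
  · have : ∀ b : Fin 2, 1 - b ≠ b := by decide
    simp [asm, j.2, this]

theorem asm_touch (t : {t // t ≠ s}) :
    (asm s x J₃ J₂ g).2.2 t.1 = (g.2.2 (.inl t)).1 := by
  simp [asm, t.2]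

theorem asm_self : (asm s x J₃ J₂ g).2.2 s = x := by simp [asm]

theorem na_of_asm (h : NA (asm s x J₃ J₂ g)) : NA g := by
  refine ⟨fun i p q hpq => h.1 i.1 ?_, fun j hj => ?_⟩
  · rw [asm_three, asm_three, hpq]
  · refine h.2 j.1 ?_
    rw [asm_xor, asm_xor]
    refine Conn.map Subtype.val (fun k => ?_) hj
    simp only [del]
    rw [← asm_xor, ← asm_xor]
    exact Conn.edge (del (asm s x J₃ J₂ g).2.1 j.1) ⟨k.1.1, fun h => k.2 (Subtype.ext h)⟩

theorem conn_of_asm {u v : {v // v ≠ x}} (h : Conn g.2.1 u v) :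
    Conn (asm s x J₃ J₂ g).2.1 u.1 v.1 := by
  refine Conn.map Subtype.val (fun k => ?_) h
  rw [← asm_xor, ← asm_xor]
  exact Conn.edge _ _

theorem conn_del_of_asm (j : {j // J₂ j ≠ none}) {u v : {v // v ≠ x}} (h : Conn g.2.1 u v) :
    Conn (del (asm s x J₃ J₂ g).2.1 j.1) u.1 v.1 := by
  refine Conn.map Subtype.val (fun k => ?_) h
  rw [← asm_xor, ← asm_xor]
  exact Conn.edge (del (asm s x J₃ J₂ g).2.1 j.1) ⟨k.1, fun h => j.2 (h ▸ k.2)⟩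

/-- A new connection between two touched slots always involves a slot of a three-clause that was
hit. -/
theorem td_of_asm (hna : NA (asm s x J₃ J₂ g)) (htd : TD (asm s x J₃ J₂ g)) :
    TD g ∨ ∃ (y : {i // J₃ i ≠ none} × Fin 2) (t : TNext s J₃ J₂), t ≠ .inr (.inr y) ∧
      Conn g.2.1 (g.2.2 (.inr (.inr y))) (g.2.2 t) := by
  by_cases H : ∃ (y : {i // J₃ i ≠ none} × Fin 2) (t : TNext s J₃ J₂), t ≠ .inr (.inr y) ∧
      Conn g.2.1 (g.2.2 (.inr (.inr y))) (g.2.2 t)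
  · exact Or.inr H
  left
  push Not at H
  have hw : ∀ j, Conn (asm s x J₃ J₂ g).2.1 (g.2.2 (.inr (.inl j))).1
      ((asm s x J₃ J₂ g).2.2 s) := by
    intro j
    obtain ⟨b, h1, h2⟩ := asm_hit g j
    have e := Conn.edge' (asm s x J₃ J₂ g).2.1 j.1 (1 - b) b
    rw [h1, h2] at e
    rw [asm_self]; exact e
  intro t t' htt hc
  rcases t with t | j | y
  · rcases t' with t' | j' | y'
    · refine htd t.1 t'.1 (fun h => htt (by rw [Subtype.ext h])) ?_
      rw [asm_touch, asm_touch]; exact conn_of_asm g hc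
    · refine htd t.1 s t.2 ?_
      rw [asm_touch]; exact (conn_of_asm g hc).trans (hw j')
    · exact H y' _ htt hc.symm
  · rcases t' with t' | j' | y'
    · refine htd t'.1 s t'.2 ?_
      rw [asm_touch]; exact (conn_of_asm g hc).symm.trans (hw j)
    · obtain ⟨b, h1, h2⟩ := asm_hit g j
      obtain ⟨b', h1', h2'⟩ := asm_hit g j'
      have hjj : j' ≠ j := fun h => htt (by rw [h])
      have e := Conn.edge' (del (asm s x J₃ J₂ g).2.1 j.1)
        ⟨j'.1, fun h => hjj (Subtype.ext h)⟩ (1 - b') b'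
      simp only [del] at e
      have e' := (conn_del_of_asm g j hc)
      rw [← h2, ← h2'] at e'
      have e'' := e'.trans e
      rw [h1'] at e''
      have e3 : Conn (del (asm s x J₃ J₂ g).2.1 j.1) ((asm s x J₃ J₂ g).2.1 j.1 (1 - b))
          ((asm s x J₃ J₂ g).2.1 j.1 b) := by rw [h1]; exact e''
      have hb := hna.2.eq_of_conn e3
      clear * - hb
      revert b; decide
    · exact H y' _ htt hc.symm
  · exact H y _ (fun h => htt h.symm) hc

end
end Reveal

/-! ### The distribution after a reveal -/

section RevealProb
variable {I U T V : Type}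

/-- The weight of the event that a three-clause contains the revealed variable in the given
position (or not at all), in a population of `N` variables. -/
noncomputable def rho3 (N : ℕ) : Option (Fin 3) → ℝ
  | none => ((N - 1 : ℕ) : ℝ) ^ 3 / (N : ℝ) ^ 3
  | some _ => ((N - 1 : ℕ) : ℝ) ^ 2 / (N : ℝ) ^ 3

/-- The analogue of `rho3` for xor-clauses. -/
noncomputable def rho2 (N : ℕ) : Option (Fin 2) → ℝ
  | none => ((N - 1 : ℕ) : ℝ) ^ 2 / (N : ℝ) ^ 2
  | some _ => ((N - 1 : ℕ) : ℝ) / (N : ℝ) ^ 2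

theorem rho3_nonneg (N : ℕ) (o : Option (Fin 3)) : 0 ≤ rho3 N o := by
  cases o <;> simp only [rho3] <;> positivity

theorem rho2_nonneg (N : ℕ) (o : Option (Fin 2)) : 0 ≤ rho2 N o := by
  cases o <;> simp only [rho2] <;> positivity

/-- The number of clauses hit. -/
noncomputable def hits {K : Type} {k : ℕ} (J : K → Option (Fin k)) : ℕ :=
  Nat.card {i // J i ≠ none}

/-- The average over the pattern of hit clauses of a quantity that depends only on the number of
three-clauses and of xor-clauses hit. -/
noncomputable def Ex (N m3 m2 : ℕ) (E : ℕ → ℕ → ℝ) : ℝ :=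
  ∑ J₃ : Fin m3 → Option (Fin 3), ∑ J₂ : Fin m2 → Option (Fin 2),
    (∏ i, rho3 N (J₃ i)) * (∏ j, rho2 N (J₂ j)) * E (hits J₃) (hits J₂)

theorem prod_rho3 [Fintype I] (N : ℕ) (J : I → Option (Fin 3)) :
    ∏ i, rho3 N (J i) = ((N - 1 : ℕ) : ℝ) ^ (3 * Nat.card {i // J i = none} + 2 * hits J) /
      (N : ℝ) ^ (3 * Nat.card I) := by
  classical
  have h : ∀ i, rho3 N (J i) =
      (if J i = none then ((N - 1 : ℕ) : ℝ) ^ 3 else ((N - 1 : ℕ) : ℝ) ^ 2) / (N : ℝ) ^ 3 := by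
    intro i
    cases J i <;> simp [rho3]
  simp only [h, Finset.prod_div_distrib, Finset.prod_const, Finset.prod_ite, hits,
    Nat.card_eq_fintype_card, Fintype.card_subtype, Finset.card_univ]
  rw [← pow_mul, ← pow_mul, ← pow_mul, ← pow_add]

theorem prod_rho2 [Fintype I] (N : ℕ) (J : I → Option (Fin 2)) :
    ∏ i, rho2 N (J i) = ((N - 1 : ℕ) : ℝ) ^ (2 * Nat.card {i // J i = none} + hits J) /
      (N : ℝ) ^ (2 * Nat.card I) := by
  classical
  have h : ∀ i, rho2 N (J i) =
      (if J i = none then ((N - 1 : ℕ) : ℝ) ^ 2 else ((N - 1 : ℕ) : ℝ)) / (N : ℝ) ^ 2 := by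
    intro i
    cases J i <;> simp [rho2]
  simp only [h, Finset.prod_div_distrib, Finset.prod_const, Finset.prod_ite, hits,
    Nat.card_eq_fintype_card, Fintype.card_subtype, Finset.card_univ]
  rw [← pow_mul, ← pow_mul, ← pow_add]

theorem card_tnext [Finite I] [Finite U] [Finite T] (s : T) (J₃ : I → Option (Fin 3))
    (J₂ : U → Option (Fin 2)) :
    Nat.card (TNext s J₃ J₂) = (Nat.card T - 1) + (hits J₂ + 2 * hits J₃) := by
  classical
  have := Fintype.ofFinite T
  have hT : Nat.card {t // t ≠ s} = Nat.card T - 1 := by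
    simp [Nat.card_eq_fintype_card, Fintype.card_subtype_compl]
  rw [Nat.card_sum, Nat.card_sum, Nat.card_prod, hT, hits, hits]
  simp [mul_comm]

theorem card_ne [Finite V] (x : V) : Nat.card {v // v ≠ x} = Nat.card V - 1 := by
  classical
  have := Fintype.ofFinite V
  simp [Nat.card_eq_fintype_card, Fintype.card_subtype_compl]

theorem hits_comp {I' : Type} {k : ℕ} (e : I' ≃ I) (J : I → Option (Fin k)) :
    hits (fun i => J (e i)) = hits J :=
  Nat.card_congr (e.subtypeEquiv fun _ => Iff.rfl)

theorem ex_eq [Fintype I] [Fintype U] [DecidableEq I] [DecidableEq U] (N : ℕ) (E : ℕ → ℕ → ℝ) :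
    ∑ J₃ : I → Option (Fin 3), ∑ J₂ : U → Option (Fin 2),
      (∏ i, rho3 N (J₃ i)) * (∏ j, rho2 N (J₂ j)) * E (hits J₃) (hits J₂) =
    Ex N (Nat.card I) (Nat.card U) E := by
  unfold Ex
  have e₃ : I ≃ Fin (Nat.card I) := Finite.equivFin I
  have e₂ : U ≃ Fin (Nat.card U) := Finite.equivFin U
  refine Fintype.sum_equiv (Equiv.arrowCongr e₃ (Equiv.refl _)) _ _ fun J₃ => ?_
  refine Fintype.sum_equiv (Equiv.arrowCongr e₂ (Equiv.refl _)) _ _ fun J₂ => ?_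
  have h1 : hits (Equiv.arrowCongr e₃ (Equiv.refl _) J₃) = hits J₃ := hits_comp e₃.symm J₃
  have h2 : hits (Equiv.arrowCongr e₂ (Equiv.refl _) J₂) = hits J₂ := hits_comp e₂.symm J₂
  rw [h1, h2]
  congr 2
  · exact Fintype.prod_equiv e₃ _ _ fun i => by simp
  · exact Fintype.prod_equiv e₂ _ _ fun i => by simp

/-- The bad event after a reveal: a slot of a three-clause that was hit is connected with another
touched slot. -/
def Bad {s : T} {x : V} {J₃ : I → Option (Fin 3)} {J₂ : U → Option (Fin 2)}
    (g : CfgNext s x J₃ J₂) : Prop :=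
  ∃ (y : {i // J₃ i ≠ none} × Fin 2) (t : TNext s J₃ J₂), t ≠ .inr (.inr y) ∧
      Conn g.2.1 (g.2.2 (.inr (.inr y))) (g.2.2 t)

theorem card_none_add_hits [Finite I] {k : ℕ} (J : I → Option (Fin k)) :
    Nat.card {i // J i = none} + hits J = Nat.card I := by
  classical
  have := Fintype.ofFinite I
  simp only [hits, Nat.card_eq_fintype_card]
  rw [Fintype.card_subtype_compl]
  have := Fintype.card_subtype_le (fun i => J i = none)
  omega

/-- The failure probability is at most the average, over the pattern of hit clauses, of the
failure probabilities after the reveal. -/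
theorem reveal [Finite I] [Finite U] [Finite T] [Finite V] (A : Set (T → Bool)) (s : T)
    (hN : 1 ≤ Nat.card V) (E : ℕ → ℕ → ℝ) (hE : ∀ a b, 0 ≤ E a b)
    (h : ∀ (x : V) (J₃ : I → Option (Fin 3)) (J₂ : U → Option (Fin 2)),
      pr (fun g : CfgNext s x J₃ J₂ => ¬ Sat (ANext A s J₃ J₂) g ∧ NA g ∧ (TD g ∨ Bad g)) ≤
        E (hits J₃) (hits J₂)) :
    pr (fun f : Cfg I U T V => ¬ Sat A f ∧ NA f ∧ TD f) ≤
      Ex (Nat.card V) (Nat.card I) (Nat.card U) E := by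
  classical
  have := Fintype.ofFinite I
  have := Fintype.ofFinite U
  have := Fintype.ofFinite T
  have := Fintype.ofFinite V
  set N := Nat.card V with hNdef
  have hcov := card_le_sum_of_cover
    (J := V × (I → Option (Fin 3)) × (U → Option (Fin 2)))
    (Ω' := fun j => CfgNext s j.1 j.2.1 j.2.2)
    (fun f : Cfg I U T V => ¬ Sat A f ∧ NA f ∧ TD f)
    (fun j g => ¬ Sat (ANext A s j.2.1 j.2.2) g ∧ NA g ∧ (TD g ∨ Bad g))
    (fun j g => asm s j.1 j.2.1 j.2.2 g)
    (by
      rintro f ⟨h1, h2, h3⟩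
      obtain ⟨J₃, J₂, g, hg⟩ := exists_asm (s := s) h2 h3
      refine ⟨(f.2.2 s, J₃, J₂), g, hg, fun hs => h1 (hg ▸ sat_asm hs), ?_, ?_⟩
      · rw [← hg] at h2; exact na_of_asm g h2
      · rw [← hg] at h2 h3; exact td_of_asm g h2 h3)
  have hterm : ∀ (x : V) (J₃ : I → Option (Fin 3)) (J₂ : U → Option (Fin 2)),
      (Nat.card {g : CfgNext s x J₃ J₂ //
        ¬ Sat (ANext A s J₃ J₂) g ∧ NA g ∧ (TD g ∨ Bad g)} : ℝ) / Nat.card (Cfg I U T V) ≤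
      1 / N * ((∏ i, rho3 N (J₃ i)) * (∏ j, rho2 N (J₂ j)) * E (hits J₃) (hits J₂)) := by
    intro x J₃ J₂
    have hTpos : 1 ≤ Nat.card T := Finite.card_pos_iff.2 ⟨s⟩
    have hc : (Nat.card (CfgNext s x J₃ J₂) : ℝ) / Nat.card (Cfg I U T V) ≤
        1 / N * ((∏ i, rho3 N (J₃ i)) * (∏ j, rho2 N (J₂ j))) := by
      rw [card_cfg, card_cfg, card_ne, card_tnext, prod_rho3, prod_rho2, ← hNdef]
      push_cast
      have hNR : (1 : ℝ) ≤ N := by exact_mod_cast hN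
      have hle : ((N - 1 : ℕ) : ℝ) ≤ N := by exact_mod_cast Nat.sub_le _ _
      rw [div_mul_div_comm, div_mul_div_comm, one_mul, ← pow_add, ← pow_add, ← pow_succ',
        div_le_div_iff₀ (by positivity) (by positivity)]
      generalize Nat.card {i // J₃ i = none} = a
      generalize Nat.card {i // J₂ i = none} = b
      generalize hits J₃ = c
      generalize hits J₂ = d
      obtain ⟨τ, hτ⟩ : ∃ τ, Nat.card T = τ + 1 := ⟨_, (Nat.succ_pred_eq_of_pos hTpos).symm⟩
      rw [hτ, show 3 * a + 2 * b + (τ + 1 - 1 + (d + 2 * c)) = (3 * a + 2 * c + (2 * b + d)) + τ by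
        omega, pow_add, mul_assoc]
      gcongr
      rw [show 3 * Nat.card I + 2 * Nat.card U + (τ + 1) = τ + (3 * Nat.card I + 2 * Nat.card U + 1)
        by omega, pow_add _ τ]
      gcongr
    have hp := h x J₃ J₂
    unfold pr at hp
    rcases Nat.eq_zero_or_pos (Nat.card (CfgNext s x J₃ J₂)) with h0 | h0
    · have hz : Nat.card {g : CfgNext s x J₃ J₂ //
        ¬ Sat (ANext A s J₃ J₂) g ∧ NA g ∧ (TD g ∨ Bad g)} = 0 :=
        Nat.le_zero.1 (h0 ▸ Finite.card_subtype_le _)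
      rw [hz]
      have := Finset.prod_nonneg (s := Finset.univ) fun i _ => rho3_nonneg N (J₃ i)
      have := Finset.prod_nonneg (s := Finset.univ) fun i _ => rho2_nonneg N (J₂ i)
      have := hE (hits J₃) (hits J₂)
      simp only [Nat.cast_zero, zero_div]
      positivity
    · have h0' : (0 : ℝ) < Nat.card (CfgNext s x J₃ J₂) := by exact_mod_cast h0
      rw [div_le_iff₀ h0'] at hp
      calc _ ≤ (E (hits J₃) (hits J₂) * Nat.card (CfgNext s x J₃ J₂)) /
            Nat.card (Cfg I U T V) := by gcongr
        _ = (Nat.card (CfgNext s x J₃ J₂) / Nat.card (Cfg I U T V)) * E (hits J₃) (hits J₂) := by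
          ring
        _ ≤ _ := by
          rw [← mul_assoc]
          exact mul_le_mul_of_nonneg_right hc (hE _ _)
  have hsum : pr (fun f : Cfg I U T V => ¬ Sat A f ∧ NA f ∧ TD f) ≤
      ∑ j : V × (I → Option (Fin 3)) × (U → Option (Fin 2)),
      1 / N * ((∏ i, rho3 N (j.2.1 i)) * (∏ i, rho2 N (j.2.2 i)) *
        E (hits j.2.1) (hits j.2.2)) := by
    unfold pr
    calc _ ≤ ((∑ j : V × (I → Option (Fin 3)) × (U → Option (Fin 2)),
          Nat.card {g : CfgNext s j.1 j.2.1 j.2.2 //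
            ¬ Sat (ANext A s j.2.1 j.2.2) g ∧ NA g ∧ (TD g ∨ Bad g)} : ℕ) : ℝ) /
            Nat.card (Cfg I U T V) := by gcongr
      _ ≤ _ := by
        push_cast
        rw [Finset.sum_div]
        exact Finset.sum_le_sum fun j _ => hterm j.1 j.2.1 j.2.2
  refine hsum.trans (le_of_eq ?_)
  rw [Fintype.sum_prod_type]
  simp only [Finset.sum_const, Finset.card_univ, ← Nat.card_eq_fintype_card, ← hNdef, nsmul_eq_mul]
  rw [← Finset.mul_sum, ← mul_assoc, mul_one_div_cancel (by positivity), one_mul,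
    Fintype.sum_prod_type, ex_eq]

end RevealProb

/-! ### Two touched slots in one component -/

section Walk
variable {I U T V : Type}

theorem pr_le_of_cover {Ω Ω' : Type} [Finite Ω'] {P : Ω → Prop} {P' : Ω' → Prop} (F : Ω' → Ω)
    (h : ∀ ω, P ω → ∃ η, F η = ω ∧ P' η) (N : ℕ) (hN : 1 ≤ N)
    (hc : Nat.card Ω = N * Nat.card Ω') : pr P ≤ 1 / N * pr P' := by
  have := card_le_sum_of_cover (J := Unit) (Ω' := fun _ => Ω') P (fun _ => P') (fun _ => F)
    (fun ω hω => ⟨(), h ω hω⟩)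
  simp only [Finset.univ_unique, Finset.sum_const, Finset.card_singleton, one_smul] at this
  unfold pr
  rw [hc, div_mul_div_comm, one_mul]
  push_cast
  gcongr

/-- Two touched slots that hold the same variable are merged into one. -/
theorem merge_le [Finite I] [Finite U] [Finite T] [Finite V] (hN : 1 ≤ Nat.card V)
    (A : Set (T → Bool)) (h t : T) (hht : h ≠ t) :
    pr (fun f : Cfg I U T V => (¬ Sat A f ∧ NA f) ∧ f.2.2 h = f.2.2 t) ≤
      1 / (Nat.card V : ℝ) * pr (fun f : Cfg I U {t // t ≠ h} V =>
        ¬ Sat {a' | ∃ a ∈ A, (∀ u : {t // t ≠ h}, a' u = a u.1) ∧ (a h ^^ a t) = false} f ∧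
          NA f) := by
  classical
  refine pr_le_of_cover
    (fun g => (g.1, g.2.1, fun u => if e : u = h then g.2.2 ⟨t, hht.symm⟩ else g.2.2 ⟨u, e⟩))
    ?_ _ hN ?_
  · rintro f ⟨⟨h1, h2⟩, h3⟩
    refine ⟨(f.1, f.2.1, fun u => f.2.2 u.1), ?_, ?_, h2⟩
    · refine Prod.ext rfl (Prod.ext rfl (funext fun u => ?_))
      by_cases e : u = h
      · subst e; simp [h3]
      · simp [e]
    · rintro ⟨σ, s1, s2, a, haA, ha1, ha2⟩
      refine h1 ⟨σ, s1, s2, ?_⟩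
      convert haA using 1
      ext u
      by_cases e : u = h
      · subst e
        have := ha1 ⟨t, hht.symm⟩
        simp only at this
        rw [h3, this]
        revert ha2
        cases a u <;> cases a t <;> simp
      · exact ha1 ⟨u, e⟩
  · have : 1 ≤ Nat.card T := Finite.card_pos_iff.2 ⟨h⟩
    rw [card_cfg, card_cfg, card_ne, ← pow_succ']
    congr 1
    omega

/-- If an xor contains the variable of the touched slot `h`, the xor is replaced by a new touched
slot whose value is opposite to that of `h`. -/
theorem edge_le [Finite I] [Finite U] [Finite T] [Finite V] (hN : 1 ≤ Nat.card V)
    (A : Set (T → Bool)) (h t : T) (i : U) (b : Fin 2) :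
    pr (fun f : Cfg I U T V => (¬ Sat A f ∧ NA f) ∧ f.2.1 i b = f.2.2 h ∧
        Conn (del f.2.1 i) (f.2.1 i (1 - b)) (f.2.2 t)) ≤
      1 / (Nat.card V : ℝ) * pr (fun f : Cfg I {j // j ≠ i} (Option T) V =>
        ¬ Sat {a' | (fun u => a' (some u)) ∈ A ∧ a' none = !a' (some h)} f ∧
          NA f ∧ Conn f.2.1 (f.2.2 none) (f.2.2 (some t))) := by
  classical
  refine pr_le_of_cover
    (fun g => (g.1, fun j => if e : j = i then
        (fun b' => if b' = b then g.2.2 (some h) else g.2.2 none) else g.2.1 ⟨j, e⟩,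
        fun u => g.2.2 (some u)))
    ?_ _ hN ?_
  · rintro f ⟨⟨h1, h2⟩, h3, h4⟩
    refine ⟨(f.1, del f.2.1 i, fun u => Option.elim u (f.2.1 i (1 - b)) f.2.2), ?_, ?_,
      ⟨h2.1, h2.2.del i⟩, h4⟩
    · refine Prod.ext rfl (Prod.ext (funext fun j => ?_) rfl)
      by_cases e : j = i
      · subst e
        funext b'
        by_cases hb : b' = b
        · subst hb; simp [h3]
        · have hbb : 1 - b = b' := by clear * - hb; revert b b'; decide
          simp [hb, hbb]
      · simp [e, del]
    · rintro ⟨σ, s1, s2, haA, ha1⟩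
      refine h1 ⟨σ, s1, fun j => ?_, haA⟩
      by_cases e : j = i
      · subst e
        simp only [Option.elim] at ha1
        rw [← h3] at ha1
        clear * - ha1
        fin_cases b
        · intro hh
          simp only [Fin.zero_eta, sub_zero] at ha1
          rw [hh] at ha1
          simp at ha1
        · intro hh
          simp only [Fin.mk_one, sub_self] at ha1
          rw [hh] at ha1
          simp at ha1
      · exact s2 ⟨j, e⟩
  · have : 1 ≤ Nat.card U := Finite.card_pos_iff.2 ⟨i⟩
    rw [card_cfg, card_cfg, card_ne, ← pow_succ', Finite.card_option]
    congr 1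
    omega

/-- The event that two touched slots `h`, `t` are connected costs a factor `O(1/N)`, in addition
to the probability bound `A0 + B0 * y ^ τ` that is available for the residual formulas obtained
by identifying `h` and `t` along a path. -/
theorem walk [Finite I] [Finite V] (hN : 1 ≤ Nat.card V) (ne : Prop) (A0 B0 y : ℝ)
    (hA0 : 0 ≤ A0) (hB0 : 0 ≤ B0) (hy : 1 ≤ y) (hy' : y ≤ 1.2) (m D : ℕ)
    (hm : 2 * (m : ℝ) ≤ 0.6 * Nat.card V)
    (HH : ∀ (U T : Type) [Finite U] [Finite T] [Nonempty T] (A : Set (T → Bool)),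
      (ne → A.Nonempty) → Nat.card U ≤ m → 2 * Nat.card U + Nat.card T ≤ D →
      pr (fun f : Cfg I U T V => ¬ Sat A f ∧ NA f) ≤ A0 + B0 * y ^ Nat.card T)
    (k : ℕ) : ∀ (U T : Type) [Finite U] [Finite T] (A : Set (T → Bool)) (h t : T), h ≠ t →
      (ne → ∀ π, ∃ a ∈ A, (a h ^^ a t) = π) → Nat.card U = k → k ≤ m →
      2 * k + Nat.card T ≤ D →
      pr (fun f : Cfg I U T V => ¬ Sat A f ∧ NA f ∧ Conn f.2.1 (f.2.2 h) (f.2.2 t)) ≤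
        4 / Nat.card V * (A0 + B0 * y ^ Nat.card T) := by
  induction k with
  | zero =>
    intro U T _ _ A h t hht hA hU hkm hD
    have hN' : (1 : ℝ) ≤ Nat.card V := by exact_mod_cast hN
    have : Nonempty {t // t ≠ h} := ⟨⟨t, hht.symm⟩⟩
    have hT : Nat.card {t // t ≠ h} ≤ Nat.card T := by rw [card_ne]; omega
    have h1 := HH U {t // t ≠ h}
      {a' | ∃ a ∈ A, (∀ u : {t // t ≠ h}, a' u = a u.1) ∧ (a h ^^ a t) = false}
      (fun hne => by
        obtain ⟨a, ha, ha'⟩ := hA hne false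
        exact ⟨fun u => a u.1, a, ha, fun _ => rfl, ha'⟩) (by omega) (by omega)
    have h2 := merge_le (I := I) (U := U) hN A h t hht
    have h3 : pr (fun f : Cfg I U T V => ¬ Sat A f ∧ NA f ∧ Conn f.2.1 (f.2.2 h) (f.2.2 t)) ≤
        pr (fun f : Cfg I U T V => (¬ Sat A f ∧ NA f) ∧ f.2.2 h = f.2.2 t) := by
      refine pr_mono fun f hf => ⟨⟨hf.1, hf.2.1⟩, ?_⟩
      by_contra hne
      obtain ⟨i, -, -⟩ := hf.2.2.exists_edge hne
      have := Finite.card_pos_iff.2 ⟨i⟩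
      omega
    have h4 : B0 * y ^ Nat.card {t // t ≠ h} ≤ B0 * y ^ Nat.card T := by gcongr
    calc _ ≤ 1 / (Nat.card V : ℝ) * (A0 + B0 * y ^ Nat.card T) := by
          refine h3.trans (h2.trans ?_)
          gcongr
          linarith
      _ ≤ _ := by gcongr; norm_num
  | succ k ih =>
    intro U T _ _ A h t hht hA hU hkm hD
    have := Fintype.ofFinite U
    have hN' : (1 : ℝ) ≤ Nat.card V := by exact_mod_cast hN
    have : Nonempty {t // t ≠ h} := ⟨⟨t, hht.symm⟩⟩
    have hT : Nat.card {t // t ≠ h} ≤ Nat.card T := by rw [card_ne]; omega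
    have h1 := HH U {t // t ≠ h}
      {a' | ∃ a ∈ A, (∀ u : {t // t ≠ h}, a' u = a u.1) ∧ (a h ^^ a t) = false}
      (fun hne => by
        obtain ⟨a, ha, ha'⟩ := hA hne false
        exact ⟨fun u => a u.1, a, ha, fun _ => rfl, ha'⟩) (by omega) (by omega)
    have h2 := merge_le (I := I) (U := U) hN A h t hht
    have h4 : B0 * y ^ Nat.card {t // t ≠ h} ≤ B0 * y ^ Nat.card T := by gcongr
    have h5 : ∀ ib : U × Fin 2, pr (fun f : Cfg I U T V => (¬ Sat A f ∧ NA f) ∧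
        f.2.1 ib.1 ib.2 = f.2.2 h ∧ Conn (del f.2.1 ib.1) (f.2.1 ib.1 (1 - ib.2)) (f.2.2 t)) ≤
        1 / (Nat.card V : ℝ) * (4 / Nat.card V * (A0 + B0 * y ^ (Nat.card T + 1))) := by
      rintro ⟨i, b⟩
      refine (edge_le hN A h t i b).trans ?_
      have := ih {j // j ≠ i} (Option T)
        {a' | (fun u => a' (some u)) ∈ A ∧ a' none = !a' (some h)} none (some t) (by simp)
        (fun hne π => by
          obtain ⟨a, ha, ha'⟩ := hA hne (!π)
          refine ⟨fun u => Option.elim u (!a h) a, ⟨ha, rfl⟩, ?_⟩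
          simp only [Option.elim]
          revert ha'
          cases a h <;> cases a t <;> cases π <;> simp)
        (by rw [card_ne]; omega) (by omega) (by rw [Finite.card_option]; omega)
      rw [Finite.card_option] at this
      gcongr
    have h6 : pr (fun f : Cfg I U T V => ¬ Sat A f ∧ NA f ∧ Conn f.2.1 (f.2.2 h) (f.2.2 t)) ≤
        pr (fun f : Cfg I U T V => (¬ Sat A f ∧ NA f) ∧ f.2.2 h = f.2.2 t) +
        ∑ ib : U × Fin 2, pr (fun f : Cfg I U T V => (¬ Sat A f ∧ NA f) ∧
        f.2.1 ib.1 ib.2 = f.2.2 h ∧ Conn (del f.2.1 ib.1) (f.2.1 ib.1 (1 - ib.2)) (f.2.2 t)) := by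
      refine le_trans ?_ (add_le_add_right (pr_exists_le _) _)
      refine le_trans (pr_mono fun f hf => ?_) (pr_or_le _ _)
      by_cases hne : f.2.2 h = f.2.2 t
      · exact Or.inl ⟨⟨hf.1, hf.2.1⟩, hne⟩
      · obtain ⟨i, b, h7, h8⟩ := hf.2.2.head hne
        exact Or.inr ⟨(i, b), ⟨hf.1, hf.2.1⟩, h7, h8⟩
    refine h6.trans ?_
    have h7 := Finset.sum_le_sum fun ib (_ : ib ∈ Finset.univ) => h5 ib
    rw [Finset.sum_const, Finset.card_univ, Fintype.card_prod, Fintype.card_fin,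
      ← Nat.card_eq_fintype_card, hU, nsmul_eq_mul] at h7
    set N : ℝ := (Nat.card V : ℝ) with hNd
    set Y := B0 * y ^ Nat.card T with hY
    have hYn : 0 ≤ Y := by positivity
    have h8 : B0 * y ^ (Nat.card T + 1) ≤ 1.2 * Y := by
      rw [pow_succ, ← mul_assoc, ← hY]; nlinarith
    have hkm' : ((k + 1 : ℕ) : ℝ) ≤ m := by exact_mod_cast hkm
    have h9 : (((k + 1) * 2 : ℕ) : ℝ) ≤ 0.6 * N := by push_cast at hkm' ⊢; linarith
    have h10 : (((k + 1) * 2 : ℕ) : ℝ) * (1 / N * (4 / N * (A0 + B0 * y ^ (Nat.card T + 1)))) ≤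
        0.6 * N * (1 / N * (4 / N * (A0 + 1.2 * Y))) := by gcongr
    have h11 : 0.6 * N * (1 / N * (4 / N * (A0 + 1.2 * Y))) = 1 / N * (2.4 * A0 + 2.88 * Y) := by
      field_simp; ring
    have h12 : 1 / N * (A0 + B0 * y ^ Nat.card {t // t ≠ h}) ≤ 1 / N * (A0 + Y) := by gcongr
    calc _ ≤ 1 / N * (A0 + Y) + 1 / N * (2.4 * A0 + 2.88 * Y) := by
          refine add_le_add ((h2.trans ?_).trans h12) (h7.trans (h10.trans h11.le))
          gcongr
      _ = 1 / N * (3.4 * A0 + 3.88 * Y) := by ring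
      _ ≤ 1 / N * (4 * (A0 + Y)) := by gcongr; linarith
      _ = _ := by ring

/-- The probability that two given touched slots are connected. -/
theorem conn_le [Finite I] [Finite U] [Finite T] [Finite V] (hN : 1 ≤ Nat.card V)
    (hm : 2 * (Nat.card U : ℝ) ≤ 0.6 * Nat.card V) (h t : T) (hht : h ≠ t) :
    pr (fun f : Cfg I U T V => NA f ∧ Conn f.2.1 (f.2.2 h) (f.2.2 t)) ≤ 4 / Nat.card V := by
  have := walk (I := I) hN False 1 0 1 zero_le_one le_rfl le_rfl (by norm_num) (Nat.card U)
    (2 * Nat.card U + Nat.card T) hm (fun U T _ _ _ A _ _ _ => by simpa using pr_le_one _)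
    (Nat.card U) U T ∅ h t hht (fun h => h.elim) rfl le_rfl le_rfl
  simp only [zero_mul, add_zero, mul_one] at this
  refine le_trans (pr_mono fun f hf => ⟨?_, hf⟩) this
  rintro ⟨σ, -, -, h⟩
  exact h

end Walk

/-! ### Planned values of the touched slots -/

/-- The plan for the touched slots: a fixed point `t` of the involution `mate` is an active slot,
which is to receive the value `val t`; the other slots come in dormant pairs `t, mate t`, whose
two values must differ. -/
structure Shape (T : Type) where
  mate : T → T
  val : T → Bool
  inv : ∀ t, mate (mate t) = t

namespace Shape
variable {I U T V : Type}

/-- The value vectors that follow the plan. -/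
def main (S : Shape T) : Set (T → Bool) :=
  {a | ∀ t, (S.mate t = t → a t = S.val t) ∧ (S.mate t ≠ t → a (S.mate t) = !a t)}

/-- The number of active slots planned to be true. -/
noncomputable def q1 (S : Shape T) : ℕ := Nat.card {t // S.mate t = t ∧ S.val t = true}
/-- The number of active slots planned to be false. -/
noncomputable def q0 (S : Shape T) : ℕ := Nat.card {t // S.mate t = t ∧ S.val t = false}
/-- The number of dormant slots. -/
noncomputable def dm (S : Shape T) : ℕ := Nat.card {t // S.mate t ≠ t}

theorem card_eq [Finite T] (S : Shape T) : Nat.card T = S.q1 + S.q0 + S.dm := by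
  classical
  have := Fintype.ofFinite T
  simp only [q1, q0, dm, Nat.card_eq_fintype_card, Fintype.card_subtype]
  rw [← Finset.card_union_of_disjoint, ← Finset.card_union_of_disjoint, ← Finset.card_univ]
  · congr 1
    ext t
    by_cases h : S.mate t = t <;> cases h' : S.val t <;> simp [h, h']
  · rw [Finset.disjoint_left]
    intro t
    by_cases h : S.mate t = t <;> simp [h]
  · rw [Finset.disjoint_left]
    intro t
    by_cases h : S.mate t = t <;> cases h' : S.val t <;> simp [h, h']

theorem mate_ne (S : Shape T) {s : T} (hs : S.mate s = s) {t : T} (ht : t ≠ s) :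
    S.mate t ≠ s := fun h => ht (by rw [← S.inv t, h, hs])

/-- The plan after the active slot `s` has been revealed: the partners of a hit xor get the
opposite value; the two other slots of a hit three-clause are to be false if `s` is true, and
form a dormant pair if `s` is false. -/
def next (S : Shape T) (s : T) (hs : S.mate s = s) (J₃ : I → Option (Fin 3))
    (J₂ : U → Option (Fin 2)) : Shape (TNext s J₃ J₂) where
  mate
    | .inl t => .inl ⟨S.mate t.1, S.mate_ne hs t.2⟩
    | .inr (.inl j) => .inr (.inl j)
    | .inr (.inr (i, b)) => .inr (.inr (i, if S.val s = true then b else 1 - b))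
  val
    | .inl t => S.val t.1
    | .inr (.inl _) => !S.val s
    | .inr (.inr _) => false
  inv
    | .inl t => by simp [S.inv]
    | .inr (.inl j) => rfl
    | .inr (.inr (i, b)) => by
      cases S.val s <;> simp

theorem main_next (S : Shape T) (s : T) (hs : S.mate s = s) (J₃ : I → Option (Fin 3))
    (J₂ : U → Option (Fin 2)) {A : Set (T → Bool)} (hA : S.main ⊆ A) :
    (S.next s hs J₃ J₂).main ⊆ ANext A s J₃ J₂ := by
  classical
  intro a' ha'
  set a : T → Bool := fun t => if h : t = s then S.val s else a' (.inl ⟨t, h⟩) with ha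
  have has : a s = S.val s := by simp [ha]
  have hat : ∀ t (h : t ≠ s), a t = a' (.inl ⟨t, h⟩) := fun t h => by simp [ha, h]
  refine ⟨a, hA fun t => ?_, fun t => (hat _ t.2).symm, fun j => ?_, fun i => ?_⟩
  · by_cases h : t = s
    · subst h; simp [hs, has]
    · have := ha' (.inl ⟨t, h⟩)
      rw [hat t h, hat _ (S.mate_ne hs h)]
      simpa [next] using this
  · have := (ha' (.inr (.inl j))).1 rfl
    rw [this, has]; rfl
  · have h0 := ha' (.inr (.inr (i, 0)))
    have h1 := ha' (.inr (.inr (i, 1)))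
    simp only [next] at h0 h1
    rw [has]
    have key : ∀ x y : Bool, One3 ![true, x, y] ↔ (x = false ∧ y = false) := by
      simp only [One3, ExistsUnique]; decide
    have key' : ∀ x y : Bool, One3 ![false, x, y] ↔ y = !x := by
      simp only [One3, ExistsUnique]; decide
    cases hv : S.val s
    · rw [key']
      simp only [hv] at h0
      simpa using h0.2 (by simp)
    · rw [key]
      simp only [hv] at h0 h1
      exact ⟨h0.1 (by simp), h1.1 (by simp)⟩

theorem card_sum_sub {X Y : Type} [Finite X] [Finite Y] (p : X ⊕ Y → Prop) :
    Nat.card {t // p t} = Nat.card {x // p (.inl x)} + Nat.card {y // p (.inr y)} := by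
  rw [Nat.card_congr Equiv.subtypeSum, Nat.card_sum]

theorem card_sub_true {X : Type} {p : X → Prop} (h : ∀ x, p x) :
    Nat.card {x // p x} = Nat.card X := Nat.card_congr (Equiv.subtypeUnivEquiv h)

theorem card_sub_false {X : Type} {p : X → Prop} (h : ∀ x, ¬ p x) :
    Nat.card {x // p x} = 0 := by
  have : IsEmpty {x // p x} := ⟨fun x => h x.1 x.2⟩
  exact Nat.card_of_isEmpty

theorem card_sub_ne {s : T} {p : T → Prop} [Finite T] (h : p s) :
    Nat.card {t : {t // t ≠ s} // p t.1} + 1 = Nat.card {t // p t} := by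
  classical
  have := Fintype.ofFinite T
  have e : Nat.card {t : {t // t ≠ s} // p t.1} = Nat.card {t : {t // p t} // t ≠ ⟨s, h⟩} := by
    refine Nat.card_congr ⟨fun t => ⟨⟨t.1.1, t.2⟩, fun e => t.1.2 (congrArg Subtype.val e)⟩,
      fun t => ⟨⟨t.1.1, fun e => t.2 (Subtype.ext e)⟩, t.1.2⟩, fun _ => rfl, fun _ => rfl⟩
  rw [e, card_ne]
  have : 1 ≤ Nat.card {t // p t} := Finite.card_pos_iff.2 ⟨⟨s, h⟩⟩
  omega

theorem card_sub_ne' {s : T} {p : T → Prop} (h : ¬ p s) :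
    Nat.card {t : {t // t ≠ s} // p t.1} = Nat.card {t // p t} :=
  Nat.card_congr ⟨fun t => ⟨t.1.1, t.2⟩, fun t => ⟨⟨t.1, fun e => h (e ▸ t.2)⟩, t.2⟩,
    fun _ => rfl, fun _ => rfl⟩

variable [Finite I] [Finite U] [Finite T]

theorem next_counts_true (S : Shape T) (s : T) (hs : S.mate s = s) (hv : S.val s = true)
    (J₃ : I → Option (Fin 3)) (J₂ : U → Option (Fin 2)) :
    (S.next s hs J₃ J₂).q1 + 1 = S.q1 ∧
    (S.next s hs J₃ J₂).q0 = S.q0 + hits J₂ + 2 * hits J₃ ∧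
    (S.next s hs J₃ J₂).dm = S.dm := by
  refine ⟨?_, ?_, ?_⟩
  · rw [q1, q1, card_sum_sub, card_sum_sub, ← card_sub_ne (s := s) ⟨hs, hv⟩]
    rw [card_sub_false (X := {j // J₂ j ≠ none}), card_sub_false (X := {i // J₃ i ≠ none} × Fin 2)]
    · simp [next, Subtype.ext_iff]
    · simp [next]
    · simp [next, hv]
  · rw [q0, q0, card_sum_sub, card_sum_sub, ← card_sub_ne' (s := s) (by simp [hv])]
    rw [card_sub_true (X := {j // J₂ j ≠ none}), card_sub_true (X := {i // J₃ i ≠ none} × Fin 2)]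
    · simp [next, hits, Subtype.ext_iff]; ring
    · simp [next, hv]
    · simp [next, hv]
  · rw [dm, dm, card_sum_sub, card_sum_sub, ← card_sub_ne' (s := s) (by simp [hs])]
    rw [card_sub_false (X := {j // J₂ j ≠ none}), card_sub_false (X := {i // J₃ i ≠ none} × Fin 2)]
    · simp [next, Subtype.ext_iff]
    · simp [next, hv]
    · simp [next]

theorem next_counts_false (S : Shape T) (s : T) (hs : S.mate s = s) (hv : S.val s = false)
    (J₃ : I → Option (Fin 3)) (J₂ : U → Option (Fin 2)) :
    (S.next s hs J₃ J₂).q1 = S.q1 + hits J₂ ∧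
    (S.next s hs J₃ J₂).q0 + 1 = S.q0 ∧
    (S.next s hs J₃ J₂).dm = S.dm + 2 * hits J₃ := by
  refine ⟨?_, ?_, ?_⟩
  · rw [q1, q1, card_sum_sub, card_sum_sub, ← card_sub_ne' (s := s) (by simp [hv])]
    rw [card_sub_true (X := {j // J₂ j ≠ none}), card_sub_false (X := {i // J₃ i ≠ none} × Fin 2)]
    · simp [next, hits, Subtype.ext_iff]
    · simp [next]
    · simp [next, hv]
  · rw [q0, q0, card_sum_sub, card_sum_sub, ← card_sub_ne (s := s) ⟨hs, hv⟩]
    rw [card_sub_false (X := {j // J₂ j ≠ none}), card_sub_false (X := {i // J₃ i ≠ none} × Fin 2)]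
    · simp [next, Subtype.ext_iff]
    · simp [next, hv]
    · simp [next, hv]
  · rw [dm, dm, card_sum_sub, card_sum_sub, ← card_sub_ne' (s := s) (by simp [hs])]
    rw [card_sub_false (X := {j // J₂ j ≠ none}), card_sub_true (X := {i // J₃ i ≠ none} × Fin 2)]
    · simp [next, hits, Subtype.ext_iff]; ring
    · simp [next, hv]
    · simp [next]

end Shape

/-! ### Flexibility -/

section Flex
variable {I U T V : Type}

/-- Every single touched slot may take both values. -/
def Flex (A : Set (T → Bool)) : Prop := ∀ t b, ∃ a ∈ A, a t = b

theorem one3_true (x y : Bool) : One3 ![true, x, y] ↔ (x = false ∧ y = false) := by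
  revert x y; simp only [One3, ExistsUnique]; decide
theorem one3_false (x y : Bool) : One3 ![false, x, y] ↔ y = !x := by
  revert x y; simp only [One3, ExistsUnique]; decide

/-- An extension to the next touched slots of a value vector `a`: in every hit three-clause whose
slot `s` is false, the bit `c i` chooses which of the other two slots is true. -/
def ext (a : T → Bool) (s : T) (J₃ : I → Option (Fin 3)) (J₂ : U → Option (Fin 2))
    (c : {i // J₃ i ≠ none} → Bool) : TNext s J₃ J₂ → Bool
  | .inl t => a t.1
  | .inr (.inl _) => !a s
  | .inr (.inr (i, k)) => if a s = true then false else if k = 0 then c i else !c i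

theorem ext_mem {A : Set (T → Bool)} {a : T → Bool} (ha : a ∈ A) (s : T)
    (J₃ : I → Option (Fin 3)) (J₂ : U → Option (Fin 2)) (c : {i // J₃ i ≠ none} → Bool) :
    ext a s J₃ J₂ c ∈ ANext A s J₃ J₂ := by
  refine ⟨a, ha, fun _ => rfl, fun _ => rfl, fun i => ?_⟩
  simp only [ext]
  cases a s
  · rw [one3_false]; simp
  · rw [one3_true]; simp

theorem Flex.next {A : Set (T → Bool)} (h : Flex A) (s : T) (J₃ : I → Option (Fin 3))
    (J₂ : U → Option (Fin 2)) : Flex (ANext A s J₃ J₂) := by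
  intro t b
  rcases t with t | j | ⟨i, k⟩
  · obtain ⟨a, ha, hb⟩ := h t.1 b
    exact ⟨_, ext_mem ha s J₃ J₂ fun _ => true, hb⟩
  · obtain ⟨a, ha, hb⟩ := h s (!b)
    exact ⟨_, ext_mem ha s J₃ J₂ fun _ => true, by simp [ext, hb]⟩
  · obtain ⟨a, ha, hb⟩ := h s false
    by_cases hk : k = 0
    · exact ⟨_, ext_mem ha s J₃ J₂ fun _ => b, by simp [ext, hb, hk]⟩
    · exact ⟨_, ext_mem ha s J₃ J₂ fun _ => !b, by simp [ext, hb, hk]⟩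

theorem Flex.pair {A : Set (T → Bool)} (h : Flex A) (s : T) (J₃ : I → Option (Fin 3))
    (J₂ : U → Option (Fin 2)) (y : {i // J₃ i ≠ none} × Fin 2) (t : TNext s J₃ J₂)
    (hty : t ≠ .inr (.inr y)) (π : Bool) :
    ∃ a ∈ ANext A s J₃ J₂, (a (.inr (.inr y)) ^^ a t) = π := by
  classical
  obtain ⟨i, k⟩ := y
  obtain ⟨a, ha, hb⟩ := h s false
  have hfin : ∀ k : Fin 2, k = 0 ∨ k = 1 := by decide
  rcases t with t | j | ⟨i', k'⟩
  · rcases hfin k with rfl | rfl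
    · exact ⟨_, ext_mem ha s J₃ J₂ fun _ => π ^^ a t, by simp [ext, hb]⟩
    · exact ⟨_, ext_mem ha s J₃ J₂ fun _ => !(π ^^ a t), by simp [ext, hb]⟩
  · rcases hfin k with rfl | rfl
    · exact ⟨_, ext_mem ha s J₃ J₂ fun _ => !π, by simp [ext, hb]⟩
    · exact ⟨_, ext_mem ha s J₃ J₂ fun _ => π, by simp [ext, hb]⟩
  · by_cases hi : i' = i
    · subst hi
      have hk : k' ≠ k := fun e => hty (by rw [e])
      cases π
      · obtain ⟨a, ha, hb⟩ := h s true
        exact ⟨_, ext_mem ha s J₃ J₂ fun _ => true, by simp [ext, hb]⟩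
      · refine ⟨_, ext_mem ha s J₃ J₂ fun _ => true, ?_⟩
        rcases hfin k with rfl | rfl <;> rcases hfin k' with rfl | rfl <;> simp_all [ext]
    · rcases hfin k with rfl | rfl <;> rcases hfin k' with rfl | rfl
      · exact ⟨_, ext_mem ha s J₃ J₂ fun l => if l = i then !π else true, by simp [ext, hb, hi]⟩
      · exact ⟨_, ext_mem ha s J₃ J₂ fun l => if l = i then π else true, by simp [ext, hb, hi]⟩
      · exact ⟨_, ext_mem ha s J₃ J₂ fun l => if l = i then π else true, by simp [ext, hb, hi]⟩
      · exact ⟨_, ext_mem ha s J₃ J₂ fun l => if l = i then !π else true, by simp [ext, hb, hi]⟩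

/-- A union bound over the pairs of slots that can witness the bad event. -/
theorem bad_le [Finite I] [Finite U] [Finite T] [Finite V] {s : T} {x : V}
    {J₃ : I → Option (Fin 3)} {J₂ : U → Option (Fin 2)} (A' : Set (TNext s J₃ J₂ → Bool))
    (β : ℝ) (hβ : 0 ≤ β)
    (h : ∀ y t, t ≠ .inr (.inr y) → pr (fun g : CfgNext s x J₃ J₂ => ¬ Sat A' g ∧ NA g ∧
      Conn g.2.1 (g.2.2 (.inr (.inr y))) (g.2.2 t)) ≤ β) :
    pr (fun g : CfgNext s x J₃ J₂ => ¬ Sat A' g ∧ NA g ∧ (TD g ∨ Bad g)) ≤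
      pr (fun g : CfgNext s x J₃ J₂ => ¬ Sat A' g ∧ NA g ∧ TD g) +
      2 * hits J₃ * ((Nat.card T - 1 + (hits J₂ + 2 * hits J₃) : ℕ) : ℝ) * β := by
  classical
  have := Fintype.ofFinite ({i // J₃ i ≠ none})
  have := Fintype.ofFinite (TNext s J₃ J₂)
  refine le_trans (pr_mono fun g hg => ?_ : _ ≤ pr (fun g : CfgNext s x J₃ J₂ =>
    (¬ Sat A' g ∧ NA g ∧ TD g) ∨ ∃ yt : ({i // J₃ i ≠ none} × Fin 2) × TNext s J₃ J₂,
      yt.2 ≠ .inr (.inr yt.1) ∧ ¬ Sat A' g ∧ NA g ∧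
      Conn g.2.1 (g.2.2 (.inr (.inr yt.1))) (g.2.2 yt.2))) ?_
  · rcases hg with ⟨h1, h2, h3 | ⟨y, t, h3, h4⟩⟩
    · exact Or.inl ⟨h1, h2, h3⟩
    · exact Or.inr ⟨(y, t), h3, h1, h2, h4⟩
  refine (pr_or_le _ _).trans ?_
  gcongr
  refine (pr_exists_le _).trans ?_
  calc _ ≤ ∑ _yt : ({i // J₃ i ≠ none} × Fin 2) × TNext s J₃ J₂, β := by
        refine Finset.sum_le_sum fun yt _ => ?_
        by_cases e : yt.2 = .inr (.inr yt.1)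
        · have : pr (fun g : CfgNext s x J₃ J₂ => yt.2 ≠ .inr (.inr yt.1) ∧ ¬ Sat A' g ∧ NA g ∧
              Conn g.2.1 (g.2.2 (.inr (.inr yt.1))) (g.2.2 yt.2)) = 0 := by
            unfold pr
            rw [Shape.card_sub_false (fun g hg => hg.1 e)]; simp
          rw [this]; exact hβ
        · exact (pr_mono fun g hg => hg.2).trans (h yt.1 yt.2 e)
    _ = _ := by
      rw [Finset.sum_const, Finset.card_univ, ← Nat.card_eq_fintype_card, Nat.card_prod,
        card_tnext, Nat.card_prod, nsmul_eq_mul]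
      simp only [hits, Nat.card_eq_fintype_card, Fintype.card_fin]
      push_cast
      ring

end Flex

/-! ### The induction over the number of variables -/

/-- Bound for formulas in which no slot is touched. -/
def C0 (W0 : ℕ → ℕ → ℕ → ℝ) (N : ℕ) : Prop :=
  ∀ (I U T V : Type) [Finite I] [Finite U] [IsEmpty T] [Finite V] (A : Set (T → Bool)),
    A.Nonempty → Nat.card V = N →
    pr (fun f : Cfg I U T V => ¬ Sat A f ∧ NA f ∧ TD f) ≤ W0 N (Nat.card I) (Nat.card U)

/-- Bound for formulas with a plan for the touched slots, some of which are active. -/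
def C1q (W1 : ℕ → ℕ → ℕ → ℕ → ℕ → ℕ → ℝ) (N : ℕ) : Prop :=
  ∀ (I U T V : Type) [Finite I] [Finite U] [Finite T] [Finite V] (S : Shape T)
    (A : Set (T → Bool)), S.main ⊆ A → Nat.card V = N → (∃ t, S.mate t = t) →
    pr (fun f : Cfg I U T V => ¬ Sat A f ∧ NA f ∧ TD f) ≤
      W1 N (Nat.card I) (Nat.card U) S.q1 S.q0 S.dm

/-- As `C1q`, but there may be no active slot. -/
def C1 (W1 : ℕ → ℕ → ℕ → ℕ → ℕ → ℕ → ℝ) (N : ℕ) : Prop :=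
  ∀ (I U T V : Type) [Finite I] [Finite U] [Finite T] [Finite V] (S : Shape T)
    (A : Set (T → Bool)), S.main ⊆ A → Nat.card V = N →
    pr (fun f : Cfg I U T V => ¬ Sat A f ∧ NA f ∧ TD f) ≤
      W1 N (Nat.card I) (Nat.card U) S.q1 S.q0 S.dm

/-- As `C1q`, for flexible sets of admissible values. -/
def C2q (W2 : ℕ → ℕ → ℕ → ℕ → ℕ → ℕ → ℝ) (N : ℕ) : Prop :=
  ∀ (I U T V : Type) [Finite I] [Finite U] [Finite T] [Finite V] (S : Shape T)
    (A : Set (T → Bool)), S.main ⊆ A → Flex A → Nat.card V = N → (∃ t, S.mate t = t) →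
    pr (fun f : Cfg I U T V => ¬ Sat A f ∧ NA f ∧ TD f) ≤
      W2 N (Nat.card I) (Nat.card U) S.q1 S.q0 S.dm

/-- As `C1`, for flexible sets of admissible values. -/
def C2 (W2 : ℕ → ℕ → ℕ → ℕ → ℕ → ℕ → ℝ) (N : ℕ) : Prop :=
  ∀ (I U T V : Type) [Finite I] [Finite U] [Finite T] [Finite V] (S : Shape T)
    (A : Set (T → Bool)), S.main ⊆ A → Flex A → Nat.card V = N →
    pr (fun f : Cfg I U T V => ¬ Sat A f ∧ NA f ∧ TD f) ≤
      W2 N (Nat.card I) (Nat.card U) S.q1 S.q0 S.dm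

/-- The functions `W0`, `W1`, `W2`, `Wa` (`Wa` is the version of `W2` for states with an active
slot) dominate their own averages under one step of the exploration, wherever they are less than
one. The arguments are the number of variables, of three-clauses, of xors, of active slots planned
true, of active slots planned false, and of dormant slots. -/
structure Super (W0 : ℕ → ℕ → ℕ → ℝ) (W1 W2 Wa : ℕ → ℕ → ℕ → ℕ → ℕ → ℕ → ℝ)
    (R : ℕ → ℕ → ℕ → ℕ → ℝ) : Prop where
  nn0 : ∀ N m3 m2 : ℕ, 0 ≤ W0 N m3 m2
  nn1 : ∀ N m3 m2 q1 q0 k : ℕ, 0 ≤ W1 N m3 m2 q1 q0 k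
  nn2 : ∀ N m3 m2 q1 q0 k : ℕ, 0 ≤ W2 N m3 m2 q1 q0 k
  nna : ∀ N m3 m2 q1 q0 k : ℕ, 0 ≤ Wa N m3 m2 q1 q0 k
  nnR : ∀ N m3 m2 τ : ℕ, 0 ≤ R N m3 m2 τ
  le_a : ∀ N m3 m2 q1 q0 k : ℕ, Wa N m3 m2 q1 q0 k ≤ W2 N m3 m2 q1 q0 k
  hR : ∀ N m3 m2 τ : ℕ, 1 ≤ N → 2 * (m2 : ℝ) ≤ 0.6 * N → ∃ A0 B0 y : ℝ, 0 ≤ A0 ∧ 0 ≤ B0 ∧ 1 ≤ y ∧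
    y ≤ 1.2 ∧ (∀ m2' q1 q0 : ℕ, m2' ≤ m2 → 1 ≤ q1 + q0 → 2 * m2' + (q1 + q0) ≤ 2 * m2 + τ →
      W1 N m3 m2' q1 q0 0 + ((q1 + q0 : ℕ) : ℝ) ^ 2 * (4 / N) ≤ A0 + B0 * y ^ (q1 + q0)) ∧
    4 / N * (A0 + B0 * y ^ τ) ≤ R N m3 m2 τ
  tube : ∀ N m3 m2 q1 q0 k : ℕ, 1 ≤ q1 + q0 →
    W1 N m3 m2 q1 q0 k < 1 ∨ Wa N m3 m2 q1 q0 k < 1 →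
    2 ≤ N ∧ 2 * (m2 : ℝ) ≤ 0.6 * ((N - 1 : ℕ) : ℝ)
  step1t : ∀ N m3 m2 q1 q0 k : ℕ, W1 N m3 m2 (q1 + 1) q0 k < 1 →
    Ex N m3 m2 (fun j3 j2 => W1 (N - 1) (m3 - j3) (m2 - j2) q1 (q0 + j2 + 2 * j3) k +
      2 * j3 * ((q1 + q0 + k + (j2 + 2 * j3) : ℕ) : ℝ) * (4 / ((N - 1 : ℕ) : ℝ))) ≤
    W1 N m3 m2 (q1 + 1) q0 k
  step1f : ∀ N m3 m2 q1 q0 k : ℕ, W1 N m3 m2 q1 (q0 + 1) k < 1 →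
    Ex N m3 m2 (fun j3 j2 => W1 (N - 1) (m3 - j3) (m2 - j2) (q1 + j2) q0 (k + 2 * j3) +
      2 * j3 * ((q1 + q0 + k + (j2 + 2 * j3) : ℕ) : ℝ) * (4 / ((N - 1 : ℕ) : ℝ))) ≤
    W1 N m3 m2 q1 (q0 + 1) k
  step2t : ∀ N m3 m2 q1 q0 k : ℕ, Wa N m3 m2 (q1 + 1) q0 k < 1 →
    Ex N m3 m2 (fun j3 j2 => W2 (N - 1) (m3 - j3) (m2 - j2) q1 (q0 + j2 + 2 * j3) k +
      2 * j3 * ((q1 + q0 + k + (j2 + 2 * j3) : ℕ) : ℝ) *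
        R (N - 1) (m3 - j3) (m2 - j2) (q1 + q0 + k + (j2 + 2 * j3))) ≤
    Wa N m3 m2 (q1 + 1) q0 k
  step2f : ∀ N m3 m2 q1 q0 k : ℕ, Wa N m3 m2 q1 (q0 + 1) k < 1 →
    Ex N m3 m2 (fun j3 j2 => W2 (N - 1) (m3 - j3) (m2 - j2) (q1 + j2) q0 (k + 2 * j3) +
      2 * j3 * ((q1 + q0 + k + (j2 + 2 * j3) : ℕ) : ℝ) *
        R (N - 1) (m3 - j3) (m2 - j2) (q1 + q0 + k + (j2 + 2 * j3))) ≤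
    Wa N m3 m2 q1 (q0 + 1) k
  dec : ∀ N m3 m2 : ℕ, W0 N m3 m2 < 1 → m3 = 0 ∨
    (1 ≤ m2 ∧ Wa N m3 (m2 - 1) 1 1 0 ≤ W0 N m3 m2) ∨
    (1 ≤ m3 ∧ 1 ≤ N ∧ 2 * (m2 : ℝ) ≤ 0.6 * N ∧
      Wa N (m3 - 1) m2 1 2 0 + 9 * R N (m3 - 1) m2 3 ≤ W0 N m3 m2)
  end1 : ∀ N m3 m2 : ℕ, W0 N m3 m2 ≤ W1 N m3 m2 0 0 0
  end2 : ∀ N m3 m2 : ℕ, W0 N m3 m2 ≤ W2 N m3 m2 0 0 0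
  wake1 : ∀ N m3 m2 k : ℕ, W1 N m3 (m2 + 1) 0 0 k ≤ W1 N m3 m2 0 0 (k + 2)
  wake2 : ∀ N m3 m2 k : ℕ, W2 N m3 (m2 + 1) 0 0 k ≤ W2 N m3 m2 0 0 (k + 2)

/-! ### Bounds for one reveal -/

section Level
variable {W0 : ℕ → ℕ → ℕ → ℝ} {W1 W2 Wa : ℕ → ℕ → ℕ → ℕ → ℕ → ℕ → ℝ}
  {R : ℕ → ℕ → ℕ → ℕ → ℝ}

/-- Without any assumption on the touched slots, all of them are made active with the values of
some admissible vector; the failure of `TD` costs `O(τ² / N)`. -/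
theorem hbound {N : ℕ} (h1 : C1q W1 N) (I U T V : Type) [Finite I] [Finite U] [Finite T]
    [Finite V] [Nonempty T] (A : Set (T → Bool)) (hA : A.Nonempty) (hV : Nat.card V = N)
    (hN : 1 ≤ N) (hm : 2 * (Nat.card U : ℝ) ≤ 0.6 * N) :
    ∃ q1 q0, q1 + q0 = Nat.card T ∧ pr (fun f : Cfg I U T V => ¬ Sat A f ∧ NA f) ≤
      W1 N (Nat.card I) (Nat.card U) q1 q0 0 + ((q1 + q0 : ℕ) : ℝ) ^ 2 * (4 / N) := by
  classical
  have := Fintype.ofFinite T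
  obtain ⟨a, ha⟩ := hA
  let S : Shape T := ⟨id, a, fun _ => rfl⟩
  have hS : S.main ⊆ A := by
    intro b hb
    have : b = a := funext fun t => (hb t).1 rfl
    rwa [this]
  have hdm : S.dm = 0 := Shape.card_sub_false fun t => by simp [S]
  have hcard := S.card_eq
  rw [hdm, add_zero] at hcard
  refine ⟨S.q1, S.q0, hcard.symm, ?_⟩
  have hmain := h1 I U T V S A hS hV ⟨Classical.arbitrary T, rfl⟩
  rw [hdm] at hmain
  have hsplit : pr (fun f : Cfg I U T V => ¬ Sat A f ∧ NA f) ≤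
      pr (fun f : Cfg I U T V => (¬ Sat A f ∧ NA f ∧ TD f) ∨
        ∃ p : T × T, p.1 ≠ p.2 ∧ NA f ∧ Conn f.2.1 (f.2.2 p.1) (f.2.2 p.2)) := by
    refine pr_mono fun f hf => ?_
    by_cases htd : TD f
    · exact Or.inl ⟨hf.1, hf.2, htd⟩
    · simp only [TD] at htd
      push Not at htd
      obtain ⟨t, t', h, h'⟩ := htd
      exact Or.inr ⟨(t, t'), h, hf.2, h'⟩
  refine hsplit.trans ((pr_or_le _ _).trans (add_le_add hmain ((pr_exists_le _).trans ?_)))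
  calc _ ≤ ∑ _p : T × T, (4 / N : ℝ) := by
        refine Finset.sum_le_sum fun p _ => ?_
        by_cases e : p.1 = p.2
        · have : pr (fun f : Cfg I U T V => p.1 ≠ p.2 ∧ NA f ∧
              Conn f.2.1 (f.2.2 p.1) (f.2.2 p.2)) = 0 := by
            unfold pr
            rw [Shape.card_sub_false (fun g hg => hg.1 e)]; simp
          rw [this]; positivity
        · refine (pr_mono fun g hg => hg.2).trans ?_
          rw [← hV]
          exact conn_le (by omega) (by rw [hV]; exact hm) _ _ e
    _ = _ := by
      rw [Finset.sum_const, Finset.card_univ, Fintype.card_prod, nsmul_eq_mul, ← hcard,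
        Nat.card_eq_fintype_card]
      push_cast; ring

/-- A collision of two slots whose values may be both equal and different leaves admissible values
over, so that a second attempt is possible. -/
theorem Super.pair_le (hS : Super W0 W1 W2 Wa R) {N : ℕ} (h1 : C1q W1 N) (I U T V : Type)
    [Finite I] [Finite U] [Finite T] [Finite V] (A : Set (T → Bool)) (h t : T) (hht : h ≠ t)
    (hA : ∀ π, ∃ a ∈ A, (a h ^^ a t) = π) (hV : Nat.card V = N)
    (hN : 1 ≤ N) (hm : 2 * (Nat.card U : ℝ) ≤ 0.6 * N) :
    pr (fun f : Cfg I U T V => ¬ Sat A f ∧ NA f ∧ Conn f.2.1 (f.2.2 h) (f.2.2 t)) ≤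
      R N (Nat.card I) (Nat.card U) (Nat.card T) := by
  obtain ⟨A0, B0, y, hA0, hB0, hy, hy', hW, hR⟩ :=
    hS.hR N (Nat.card I) (Nat.card U) (Nat.card T) hN hm
  refine le_trans ?_ hR
  rw [← hV]
  refine walk (by omega) True A0 B0 y hA0 hB0 hy hy' (Nat.card U)
    (2 * Nat.card U + Nat.card T) (by rw [hV]; exact hm) ?_ (Nat.card U) U T A h t hht
    (fun _ => hA) rfl le_rfl le_rfl
  intro U' T' _ _ _ A' hA' hU' hD'
  have hU'' : (Nat.card U' : ℝ) ≤ Nat.card U := by exact_mod_cast hU'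
  obtain ⟨q1, q0, hq, hp⟩ := hbound h1 I U' T' V A' (hA' trivial) hV hN (by linarith)
  have hT' : 1 ≤ Nat.card T' := Finite.card_pos
  refine hp.trans ?_
  rw [← hq]
  exact hW _ _ _ hU' (by omega) (by omega)

/-- One reveal, for an arbitrary bound `W` for the residual formulas and `β` for the bad event. -/
theorem reveal_core {I U T V : Type} [Finite I] [Finite U] [Finite T] [Finite V] (S : Shape T)
    (A : Set (T → Bool)) (s : T) (hs : S.mate s = s) {N : ℕ} (hV : Nat.card V = N) (hN : 1 ≤ N)
    (W : ℕ → ℕ → ℕ → ℕ → ℕ → ℕ → ℝ) (Wt : ℝ) (β : ℕ → ℕ → ℝ)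
    (nnW : ∀ N m3 m2 q1 q0 k : ℕ, 0 ≤ W N m3 m2 q1 q0 k) (nnβ : ∀ a b, 0 ≤ β a b)
    (hnext : ∀ (x : V) (J₃ : I → Option (Fin 3)) (J₂ : U → Option (Fin 2)),
      pr (fun g : CfgNext s x J₃ J₂ => ¬ Sat (ANext A s J₃ J₂) g ∧ NA g ∧ TD g) ≤
        W (N - 1) (Nat.card {i // J₃ i = none}) (Nat.card {j // J₂ j = none})
          (S.next s hs J₃ J₂).q1 (S.next s hs J₃ J₂).q0 (S.next s hs J₃ J₂).dm)
    (hpair : ∀ (x : V) (J₃ : I → Option (Fin 3)) (J₂ : U → Option (Fin 2)) (y) (t),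
      t ≠ .inr (.inr y) → pr (fun g : CfgNext s x J₃ J₂ => ¬ Sat (ANext A s J₃ J₂) g ∧ NA g ∧
      Conn g.2.1 (g.2.2 (.inr (.inr y))) (g.2.2 t)) ≤ β (hits J₃) (hits J₂))
    (stept : ∀ q1, S.q1 = q1 + 1 → Ex N (Nat.card I) (Nat.card U) (fun j3 j2 =>
      W (N - 1) (Nat.card I - j3) (Nat.card U - j2) q1 (S.q0 + j2 + 2 * j3) S.dm +
      2 * j3 * ((q1 + S.q0 + S.dm + (j2 + 2 * j3) : ℕ) : ℝ) * β j3 j2) ≤ Wt)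
    (stepf : ∀ q0, S.q0 = q0 + 1 → Ex N (Nat.card I) (Nat.card U) (fun j3 j2 =>
      W (N - 1) (Nat.card I - j3) (Nat.card U - j2) (S.q1 + j2) q0 (S.dm + 2 * j3) +
      2 * j3 * ((S.q1 + q0 + S.dm + (j2 + 2 * j3) : ℕ) : ℝ) * β j3 j2) ≤ Wt) :
    pr (fun f : Cfg I U T V => ¬ Sat A f ∧ NA f ∧ TD f) ≤ Wt := by
  have hcard := S.card_eq
  have hbad : ∀ (x : V) (J₃ : I → Option (Fin 3)) (J₂ : U → Option (Fin 2)),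
      pr (fun g : CfgNext s x J₃ J₂ => ¬ Sat (ANext A s J₃ J₂) g ∧ NA g ∧ (TD g ∨ Bad g)) ≤
      W (N - 1) (Nat.card I - hits J₃) (Nat.card U - hits J₂) (S.next s hs J₃ J₂).q1
        (S.next s hs J₃ J₂).q0 (S.next s hs J₃ J₂).dm +
      2 * hits J₃ * ((Nat.card T - 1 + (hits J₂ + 2 * hits J₃) : ℕ) : ℝ) *
        β (hits J₃) (hits J₂) := by
    intro x J₃ J₂
    refine (bad_le (ANext A s J₃ J₂) _ (nnβ _ _) (hpair x J₃ J₂)).trans ?_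
    gcongr
    have := hnext x J₃ J₂
    rw [show Nat.card {i // J₃ i = none} = Nat.card I - hits J₃ by
      have := card_none_add_hits J₃; omega,
      show Nat.card {i // J₂ i = none} = Nat.card U - hits J₂ by
      have := card_none_add_hits J₂; omega] at this
    exact this
  cases hv : S.val s
  · have hn := S.next_counts_false s hs hv (I := I) (U := U)
    obtain ⟨q0, hq0⟩ : ∃ q0, S.q0 = q0 + 1 := ⟨_, (hn (fun _ => none) (fun _ => none)).2.1.symm⟩
    refine le_trans ?_ (stepf q0 hq0)
    rw [← hV]
    refine reveal A s (by omega) _ (fun a b => ?_) (fun x J₃ J₂ => ?_)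
    · have := nnW (Nat.card V - 1) (Nat.card I - a) (Nat.card U - b)
        (S.q1 + b) q0 (S.dm + 2 * a)
      have := nnβ a b
      positivity
    · obtain ⟨e1, e2, e3⟩ := hn J₃ J₂
      have := hbad x J₃ J₂
      rw [e1, e3, show (S.next s hs J₃ J₂).q0 = q0 by omega,
        show Nat.card T - 1 = S.q1 + q0 + S.dm by omega, ← hV] at this
      exact this
  · have hn := S.next_counts_true s hs hv (I := I) (U := U)
    obtain ⟨q1, hq1⟩ : ∃ q1, S.q1 = q1 + 1 := ⟨_, (hn (fun _ => none) (fun _ => none)).1.symm⟩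
    refine le_trans ?_ (stept q1 hq1)
    rw [← hV]
    refine reveal A s (by omega) _ (fun a b => ?_) (fun x J₃ J₂ => ?_)
    · have := nnW (Nat.card V - 1) (Nat.card I - a) (Nat.card U - b)
        q1 (S.q0 + b + 2 * a) S.dm
      have := nnβ a b
      positivity
    · obtain ⟨e1, e2, e3⟩ := hn J₃ J₂
      have := hbad x J₃ J₂
      rw [e2, e3, show (S.next s hs J₃ J₂).q1 = q1 by omega,
        show Nat.card T - 1 = q1 + S.q0 + S.dm by omega, ← hV] at this
      exact this

theorem Shape.one_le_q {T : Type} [Finite T] (S : Shape T) {s : T} (hs : S.mate s = s) :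
    1 ≤ S.q1 + S.q0 := by
  cases hv : S.val s
  · have : 1 ≤ S.q0 := by
      have : Nonempty {t // S.mate t = t ∧ S.val t = false} := ⟨⟨s, hs, hv⟩⟩
      exact Finite.card_pos
    omega
  · have : 1 ≤ S.q1 := by
      have : Nonempty {t // S.mate t = t ∧ S.val t = true} := ⟨⟨s, hs, hv⟩⟩
      exact Finite.card_pos
    omega

theorem Super.c1q (hS : Super W0 W1 W2 Wa R) (N : ℕ) (h : 1 ≤ N → C1 W1 (N - 1)) :
    C1q W1 N := by
  intro I U T V _ _ _ _ S A hA hV ⟨s, hs⟩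
  by_cases hlt : W1 N (Nat.card I) (Nat.card U) S.q1 S.q0 S.dm < 1
  swap
  · exact (pr_le_one _).trans (not_lt.1 hlt)
  obtain ⟨hN2, hm⟩ := hS.tube _ _ _ _ _ _ (S.one_le_q hs) (Or.inl hlt)
  have h := h (by omega)
  have hVx : ∀ x : V, Nat.card {v // v ≠ x} = N - 1 := fun x => by rw [card_ne, hV]
  refine reveal_core S A s hs hV (by omega) W1 _ (fun _ _ => 4 / ((N - 1 : ℕ) : ℝ)) hS.nn1
    (fun _ _ => by positivity) ?_ ?_ ?_ ?_
  · intro x J₃ J₂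
    exact h {i // J₃ i = none} {j // J₂ j = none} (TNext s J₃ J₂) {v // v ≠ x}
      (S.next s hs J₃ J₂) _ (S.main_next s hs J₃ J₂ hA) (hVx x)
  · intro x J₃ J₂ y t hyt
    refine (pr_mono fun g hg => hg.2).trans ?_
    rw [← hVx x]
    refine conn_le (by rw [hVx]; omega) ?_ _ _ hyt.symm
    rw [hVx]
    refine le_trans ?_ hm
    have : Nat.card {j // J₂ j = none} ≤ Nat.card U := Finite.card_subtype_le _
    have : (Nat.card {j // J₂ j = none} : ℝ) ≤ Nat.card U := by exact_mod_cast this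
    linarith
  · intro q1 hq
    rw [hq] at hlt ⊢
    exact hS.step1t _ _ _ _ _ _ hlt
  · intro q0 hq
    rw [hq] at hlt ⊢
    exact hS.step1f _ _ _ _ _ _ hlt

theorem Super.c2q (hS : Super W0 W1 W2 Wa R) (N : ℕ) (h : 1 ≤ N → C2 W2 (N - 1))
    (h' : 1 ≤ N → C1q W1 (N - 1)) : C2q Wa N := by
  intro I U T V _ _ _ _ S A hA hF hV ⟨s, hs⟩
  by_cases hlt : Wa N (Nat.card I) (Nat.card U) S.q1 S.q0 S.dm < 1
  swap
  · exact (pr_le_one _).trans (not_lt.1 hlt)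
  obtain ⟨hN2, hm⟩ := hS.tube _ _ _ _ _ _ (S.one_le_q hs) (Or.inr hlt)
  have h := h (by omega)
  have h' := h' (by omega)
  have hcard := S.card_eq
  have hq := S.one_le_q hs
  have hVx : ∀ x : V, Nat.card {v // v ≠ x} = N - 1 := fun x => by rw [card_ne, hV]
  refine reveal_core S A s hs hV (by omega) W2 _ (fun j3 j2 => R (N - 1) (Nat.card I - j3)
    (Nat.card U - j2) (Nat.card T - 1 + (j2 + 2 * j3))) hS.nn2 (fun _ _ => hS.nnR _ _ _ _)
    ?_ ?_ ?_ ?_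
  · intro x J₃ J₂
    exact h {i // J₃ i = none} {j // J₂ j = none} (TNext s J₃ J₂) {v // v ≠ x}
      (S.next s hs J₃ J₂) _ (S.main_next s hs J₃ J₂ hA) (hF.next s J₃ J₂) (hVx x)
  · intro x J₃ J₂ y t hyt
    have := hS.pair_le h' {i // J₃ i = none} {j // J₂ j = none} (TNext s J₃ J₂) {v // v ≠ x}
      (ANext A s J₃ J₂) (.inr (.inr y)) t hyt.symm (fun π => hF.pair s J₃ J₂ y t hyt π) (hVx x)
      (by omega) (by
        refine le_trans ?_ hm
        have : Nat.card {j // J₂ j = none} ≤ Nat.card U := Finite.card_subtype_le _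
        have : (Nat.card {j // J₂ j = none} : ℝ) ≤ Nat.card U := by exact_mod_cast this
        linarith)
    rw [card_tnext, show Nat.card {i // J₃ i = none} = Nat.card I - hits J₃ by
      have := card_none_add_hits J₃; omega,
      show Nat.card {i // J₂ i = none} = Nat.card U - hits J₂ by
      have := card_none_add_hits J₂; omega] at this
    exact this
  · intro q1 hq
    rw [show Nat.card T - 1 = q1 + S.q0 + S.dm by omega]
    rw [hq] at hlt ⊢
    exact hS.step2t _ _ _ _ _ _ hlt
  · intro q0 hq
    rw [show Nat.card T - 1 = S.q1 + q0 + S.dm by omega]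
    rw [hq] at hlt ⊢
    exact hS.step2f _ _ _ _ _ _ hlt

end Level

/-! ### Opening clauses and waking dormant pairs -/

section Level
variable {W0 : ℕ → ℕ → ℕ → ℝ} {W1 W2 Wa : ℕ → ℕ → ℕ → ℕ → ℕ → ℕ → ℝ} {R : ℕ → ℕ → ℕ → ℕ → ℝ}

/-- A dormant pair of slots is turned into a xor. -/
theorem wake_le {I U T V : Type} [Finite I] [Finite U] [Finite T] [Finite V]
    (A : Set (T → Bool)) (t s : T) (hts : t ≠ s) :
    pr (fun f : Cfg I U T V => ¬ Sat A f ∧ NA f ∧ TD f) ≤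
      pr (fun f : Cfg I (Option U) {u // u ≠ t ∧ u ≠ s} V =>
        ¬ Sat {a' | ∀ a : T → Bool, (∀ u : {u // u ≠ t ∧ u ≠ s}, a u.1 = a' u) →
          a s = !a t → a ∈ A} f ∧ NA f ∧ TD f) := by
  classical
  have hcard : Nat.card T = Nat.card {u // u ≠ t ∧ u ≠ s} + 2 := by
    have := Fintype.ofFinite T
    rw [Nat.card_eq_fintype_card, Nat.card_eq_fintype_card, Fintype.card_subtype]
    have h1 : (Finset.univ.filter fun u => u ≠ t ∧ u ≠ s) = (Finset.univ.erase t).erase s := by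
      ext u; simp [and_comm]
    rw [h1, Finset.card_erase_of_mem (by simp [hts.symm]), Finset.card_erase_of_mem (by simp),
      Finset.card_univ]
    have : 1 < Fintype.card T := Fintype.one_lt_card_iff.2 ⟨t, s, hts⟩
    omega
  have key := pr_le_of_cover (P := fun f : Cfg I U T V => ¬ Sat A f ∧ NA f ∧ TD f)
    (P' := fun f : Cfg I (Option U) {u // u ≠ t ∧ u ≠ s} V =>
        ¬ Sat {a' | ∀ a : T → Bool, (∀ u : {u // u ≠ t ∧ u ≠ s}, a u.1 = a' u) →
          a s = !a t → a ∈ A} f ∧ NA f ∧ TD f)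
    (fun g => (g.1, fun j => g.2.1 (some j), fun u => if e : u = t then g.2.1 none 0 else
      if e' : u = s then g.2.1 none 1 else g.2.2 ⟨u, e, e'⟩)) ?_ 1 le_rfl ?_
  · simpa using key
  · rintro f ⟨h1, h2, h3⟩
    let c' : Option U → Fin 2 → V := fun o => o.elim ![f.2.2 t, f.2.2 s] f.2.1
    have hc' : ∀ {u v}, Conn c' u v → Conn f.2.1 u v ∨ (Conn f.2.1 u (f.2.2 t) ∧
        Conn f.2.1 (f.2.2 s) v) ∨ (Conn f.2.1 u (f.2.2 s) ∧ Conn f.2.1 (f.2.2 t) v) := by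
      intro u v h
      refine Conn.add_edge (fun j => ?_) h
      cases j with
      | none => exact Or.inr ⟨rfl, rfl⟩
      | some j => exact Or.inl (Conn.edge f.2.1 j)
    refine ⟨(f.1, c', fun u => f.2.2 u.1), ?_, ?_, ⟨h2.1, ?_⟩, ?_⟩
    · refine Prod.ext rfl (Prod.ext rfl (funext fun u => ?_))
      by_cases e : u = t
      · subst e; simp [c']
      · by_cases e' : u = s
        · subst e'; simp [c', e]
        · simp [e, e']
    · rintro ⟨σ, s1, s2, s3⟩
      refine h1 ⟨σ, s1, fun j => s2 (some j), s3 _ (fun u => rfl) ?_⟩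
      have : σ (f.2.2 t) ≠ σ (f.2.2 s) := s2 none
      revert this
      cases σ (f.2.2 t) <;> cases σ (f.2.2 s) <;> simp
    · intro o
      cases o with
      | none =>
        intro h
        refine h3 t s hts (Conn.mono (fun j => ?_) h)
        obtain ⟨j, hj⟩ := j
        cases j with
        | none => exact absurd rfl hj
        | some j => exact Conn.edge f.2.1 j
      | some i =>
        intro h
        have := Conn.add_edge (c' := del f.2.1 i) (e₀ := f.2.2 t) (e₁ := f.2.2 s) (fun j => ?_) h
        · rcases this with h | ⟨h, h'⟩ | ⟨h, h'⟩
          · exact h2.2 i h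
          · exact h3 t s hts ((h.of_del.symm.trans (Conn.edge f.2.1 i)).trans h'.of_del.symm)
          · exact h3 t s hts ((h'.of_del.trans (Conn.edge f.2.1 i).symm).trans h.of_del)
        · obtain ⟨j, hj⟩ := j
          cases j with
          | none => exact Or.inr ⟨rfl, rfl⟩
          | some j => exact Or.inl (Conn.edge (del f.2.1 i) ⟨j, fun e => hj (by rw [e])⟩)
    · intro u u' huu h
      have hne : u.1 ≠ u'.1 := fun e => huu (Subtype.ext e)
      rcases hc' h with h | ⟨h, _⟩ | ⟨h, _⟩
      · exact h3 _ _ hne h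
      · exact h3 _ _ u.2.1 h
      · exact h3 _ _ u.2.2 h
  · rw [card_cfg, card_cfg, one_mul, hcard]
    congr 1
    rw [Finite.card_option]
    ring

theorem wake_all {W : ℕ → ℕ → ℕ → ℕ → ℕ → ℕ → ℝ} {N : ℕ} (h0 : C0 W0 N)
    (hend : ∀ N m3 m2 : ℕ, W0 N m3 m2 ≤ W N m3 m2 0 0 0)
    (hwake : ∀ N m3 m2 k : ℕ, W N m3 (m2 + 1) 0 0 k ≤ W N m3 m2 0 0 (k + 2)) (n : ℕ) :
    ∀ (I U T V : Type) [Finite I] [Finite U] [Finite T] [Finite V] (S : Shape T)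
    (A : Set (T → Bool)), S.main ⊆ A → Nat.card V = N → (∀ t, S.mate t ≠ t) → Nat.card T = n →
    pr (fun f : Cfg I U T V => ¬ Sat A f ∧ NA f ∧ TD f) ≤
      W N (Nat.card I) (Nat.card U) 0 0 n := by
  classical
  induction n using Nat.strong_induction_on with
  | _ n ih =>
  intro I U T V _ _ _ _ S A hA hV hS hn
  rcases isEmpty_or_nonempty T with hT | ⟨⟨t⟩⟩
  · have : n = 0 := by rw [← hn]; simp
    subst this
    exact (h0 I U T V A ⟨fun t => hT.elim t, hA fun t => hT.elim t⟩ hV).trans (hend _ _ _)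
  · have hts := (hS t).symm
    have hcard : Nat.card {u // u ≠ t ∧ u ≠ S.mate t} + 2 = n := by
      have := Fintype.ofFinite T
      rw [← hn, Nat.card_eq_fintype_card, Nat.card_eq_fintype_card, Fintype.card_subtype]
      have h1 : (Finset.univ.filter fun u => u ≠ t ∧ u ≠ S.mate t) =
          (Finset.univ.erase t).erase (S.mate t) := by
        ext u; simp [and_comm]
      rw [h1, Finset.card_erase_of_mem (by simp [hts.symm]), Finset.card_erase_of_mem (by simp),
        Finset.card_univ]
      have : 1 < Fintype.card T := Fintype.one_lt_card_iff.2 ⟨t, _, hts⟩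
      omega
    refine (wake_le A t (S.mate t) hts).trans ?_
    let S' : Shape {u // u ≠ t ∧ u ≠ S.mate t} :=
      ⟨fun u => ⟨S.mate u.1, fun e => u.2.2 ((S.inv u.1).symm.trans (congrArg S.mate e)),
        fun e => u.2.1 ((S.inv u.1).symm.trans ((congrArg S.mate e).trans (S.inv t)))⟩, fun _ => true,
        fun u => Subtype.ext (S.inv u.1)⟩
    have := ih (n - 2) (by omega) I (Option U) {u // u ≠ t ∧ u ≠ S.mate t} V S'
      {a' | ∀ a : T → Bool, (∀ u : {u // u ≠ t ∧ u ≠ S.mate t}, a u.1 = a' u) →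
          a (S.mate t) = !a t → a ∈ A} ?_ hV (fun u e => hS u.1 (congrArg Subtype.val e))
      (by omega)
    · refine this.trans ?_
      rw [Finite.card_option]
      have h := hwake N (Nat.card I) (Nat.card U) (n - 2)
      have e : n - 2 + 2 = n := by omega
      rwa [e] at h
    · intro a' ha' a haa hat
      refine hA fun u => ⟨fun e => absurd e (hS u), fun _ => ?_⟩
      by_cases e : u = t
      · rw [e, hat]
      by_cases e' : u = S.mate t
      · rw [e', S.inv, hat]; simp
      have h1 := (ha' ⟨u, e, e'⟩).2 (fun e => hS u (congrArg Subtype.val e))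
      rw [← haa, ← haa] at h1
      exact h1

theorem Shape.q_eq_zero {T : Type} (S : Shape T) (h : ∀ t, S.mate t ≠ t) :
    S.q1 = 0 ∧ S.q0 = 0 :=
  ⟨Shape.card_sub_false fun t ht => h t ht.1, Shape.card_sub_false fun t ht => h t ht.1⟩

/-- The exploration starts from the two slots of a xor. -/
theorem start2_le {I U T V : Type} [Finite I] [Finite U] [IsEmpty T] [Finite V]
    (A : Set (T → Bool)) (hA : A.Nonempty) (i : U) :
    pr (fun f : Cfg I U T V => ¬ Sat A f ∧ NA f ∧ TD f) ≤
      pr (fun f : Cfg I {j // j ≠ i} (Fin 2) V =>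
        ¬ Sat {a | a 0 ≠ a 1} f ∧ NA f ∧ TD f) := by
  classical
  have key := pr_le_of_cover (P := fun f : Cfg I U T V => ¬ Sat A f ∧ NA f ∧ TD f)
    (P' := fun f : Cfg I {j // j ≠ i} (Fin 2) V =>
        ¬ Sat {a | a 0 ≠ a 1} f ∧ NA f ∧ TD f)
    (fun g => (g.1, fun j => if e : j = i then g.2.2 else g.2.1 ⟨j, e⟩, fun t => isEmptyElim t))
    ?_ 1 le_rfl ?_
  · simpa using key
  · rintro f ⟨h1, h2, h3⟩
    refine ⟨(f.1, del f.2.1 i, f.2.1 i), ?_, ?_, ⟨h2.1, h2.2.del i⟩, ?_⟩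
    · refine Prod.ext rfl (Prod.ext (funext fun j => ?_) (funext fun t => isEmptyElim t))
      by_cases e : j = i
      · subst e; simp
      · simp [e, del]
    · rintro ⟨σ, s1, s2, s3⟩
      refine h1 ⟨σ, s1, fun j => ?_, ?_⟩
      · by_cases e : j = i
        · subst e; exact s3
        · exact s2 ⟨j, e⟩
      · obtain ⟨a, ha⟩ := hA
        convert ha
    · intro t t' htt h
      have hfin : ∀ k : Fin 2, k = 0 ∨ k = 1 := by decide
      have := h2.2 i
      rcases hfin t with rfl | rfl <;> rcases hfin t' with rfl | rfl
      · exact htt rfl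
      · exact this h
      · exact this h.symm
      · exact htt rfl
  · rw [card_cfg, card_cfg, one_mul, card_ne]
    have : 1 ≤ Nat.card U := by
      have : Nonempty U := ⟨i⟩
      exact Finite.card_pos
    congr 1
    simp
    omega

/-- The exploration starts from the three slots of a three-clause. -/
theorem start3_le {I U T V : Type} [Finite I] [Finite U] [IsEmpty T] [Finite V]
    (A : Set (T → Bool)) (hA : A.Nonempty) (i : I) :
    pr (fun f : Cfg I U T V => ¬ Sat A f ∧ NA f ∧ TD f) ≤
      pr (fun f : Cfg {j // j ≠ i} U (Fin 3) V => ¬ Sat {a | One3 a} f ∧ NA f) := by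
  classical
  have key := pr_le_of_cover (P := fun f : Cfg I U T V => ¬ Sat A f ∧ NA f ∧ TD f)
    (P' := fun f : Cfg {j // j ≠ i} U (Fin 3) V => ¬ Sat {a | One3 a} f ∧ NA f)
    (fun g => (fun j => if e : j = i then g.2.2 else g.1 ⟨j, e⟩, g.2.1, fun t => isEmptyElim t))
    ?_ 1 le_rfl ?_
  · simpa using key
  · rintro f ⟨h1, h2, h3⟩
    refine ⟨(fun j => f.1 j.1, f.2.1, f.1 i), ?_, ?_, ⟨fun j => h2.1 j.1, h2.2⟩⟩
    · refine Prod.ext (funext fun j => ?_) (Prod.ext rfl (funext fun t => isEmptyElim t))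
      by_cases e : j = i
      · subst e; simp
      · simp [e]
    · rintro ⟨σ, s1, s2, s3⟩
      refine h1 ⟨σ, fun j => ?_, s2, ?_⟩
      · by_cases e : j = i
        · subst e; exact s3
        · exact s1 ⟨j, e⟩
      · obtain ⟨a, ha⟩ := hA
        convert ha
  · rw [card_cfg, card_cfg, one_mul, card_ne]
    have : 1 ≤ Nat.card I := by
      have : Nonempty I := ⟨i⟩
      exact Finite.card_pos
    congr 1
    simp
    omega

theorem one3_pair : ∀ t t' : Fin 3, t ≠ t' → ∀ π : Bool,
    ∃ a ∈ {a : Fin 3 → Bool | One3 a}, (a t ^^ a t') = π := by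
  simp only [One3, ExistsUnique, Set.mem_ofPred_eq]; decide

theorem Super.c0 (hS : Super W0 W1 W2 Wa R) {N : ℕ} (h2 : C2q Wa N) (h1 : C1q W1 N) :
    C0 W0 N := by
  classical
  intro I U T V _ _ _ _ A hA hV
  by_cases hlt : W0 N (Nat.card I) (Nat.card U) < 1
  swap
  · exact (pr_le_one _).trans (not_lt.1 hlt)
  rcases hS.dec _ _ _ hlt with h | ⟨hm, h⟩ | ⟨hm, hN, hm2, h⟩
  · have hI : IsEmpty I := by
      rcases Nat.card_eq_zero.1 h with h | h
      · exact h
      · exact absurd ‹Finite I› (not_finite_iff_infinite.2 h)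
    have : pr (fun f : Cfg I U T V => ¬ Sat A f ∧ NA f ∧ TD f) = 0 := by
      unfold pr
      rw [Shape.card_sub_false]
      · simp
      · rintro f ⟨h1, h2, -⟩
        obtain ⟨σ, hσ⟩ := h2.2.colorable
        refine h1 ⟨σ, fun i => isEmptyElim i, hσ, ?_⟩
        obtain ⟨a, ha⟩ := hA
        convert ha
    rw [this]; exact hS.nn0 _ _ _
  · have : Nonempty U := (Nat.card_pos_iff.1 hm).1
    obtain ⟨i⟩ := this
    refine (start2_le A hA i).trans (le_trans ?_ h)
    let S : Shape (Fin 2) := ⟨id, ![true, false], fun _ => rfl⟩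
    have := h2 I {j // j ≠ i} (Fin 2) V S {a | a 0 ≠ a 1} ?_ ?_ hV ⟨0, rfl⟩
    · rw [card_ne] at this
      have e1 : S.q1 = 1 := by
        simp only [Shape.q1, S, Nat.card_eq_fintype_card]; decide
      have e0 : S.q0 = 1 := by
        simp only [Shape.q0, S, Nat.card_eq_fintype_card]; decide
      have ek : S.dm = 0 := Shape.card_sub_false fun t ht => ht rfl
      rwa [e1, e0, ek] at this
    · intro a ha
      have h0 := (ha 0).1 rfl
      have h1 := (ha 1).1 rfl
      simp only [Set.mem_ofPred_eq, h0, h1]; simp [S]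
    · simp only [Flex, Set.mem_ofPred_eq]; decide
  · have : Nonempty I := (Nat.card_pos_iff.1 hm).1
    obtain ⟨i⟩ := this
    refine (start3_le A hA i).trans (le_trans ?_ h)
    refine le_trans (pr_mono fun g hg => ?_ :
      _ ≤ pr (fun g : Cfg {j // j ≠ i} U (Fin 3) V => (¬ Sat {a | One3 a} g ∧ NA g ∧ TD g) ∨
        ∃ yt : Fin 3 × Fin 3, yt.1 ≠ yt.2 ∧ ¬ Sat {a | One3 a} g ∧ NA g ∧
          Conn g.2.1 (g.2.2 yt.1) (g.2.2 yt.2))) ?_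
    · by_cases htd : TD g
      · exact Or.inl ⟨hg.1, hg.2, htd⟩
      · unfold TD at htd
        push Not at htd
        obtain ⟨t, t', h, h'⟩ := htd
        exact Or.inr ⟨(t, t'), h, hg.1, hg.2, h'⟩
    refine (pr_or_le _ _).trans (add_le_add ?_ ?_)
    · let S : Shape (Fin 3) := ⟨id, ![true, false, false], fun _ => rfl⟩
      have := h2 {j // j ≠ i} U (Fin 3) V S {a | One3 a} ?_ ?_ hV ⟨0, rfl⟩
      · rw [card_ne] at this
        have e1 : S.q1 = 1 := by
          simp only [Shape.q1, S, Nat.card_eq_fintype_card]; decide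
        have e0 : S.q0 = 2 := by
          simp only [Shape.q0, S, Nat.card_eq_fintype_card]; decide
        have ek : S.dm = 0 := Shape.card_sub_false fun t ht => ht rfl
        rwa [e1, e0, ek] at this
      · intro a ha
        have : a = ![true, false, false] := funext fun t => (ha t).1 rfl
        rw [Set.mem_ofPred_eq, this, one3_true]; simp
      · simp only [Flex, One3, ExistsUnique, Set.mem_ofPred_eq]; decide
    · refine (pr_exists_le _).trans ?_
      calc _ ≤ ∑ _yt : Fin 3 × Fin 3, R N (Nat.card I - 1) (Nat.card U) 3 := by
            refine Finset.sum_le_sum fun yt _ => ?_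
            by_cases e : yt.1 = yt.2
            · have : pr (fun g : Cfg {j // j ≠ i} U (Fin 3) V => yt.1 ≠ yt.2 ∧
                  ¬ Sat {a | One3 a} g ∧ NA g ∧ Conn g.2.1 (g.2.2 yt.1) (g.2.2 yt.2)) = 0 := by
                unfold pr
                rw [Shape.card_sub_false (fun g hg => hg.1 e)]; simp
              rw [this]; exact hS.nnR _ _ _ _
            · refine (pr_mono fun g hg => hg.2).trans ?_
              have := hS.pair_le h1 {j // j ≠ i} U (Fin 3) V {a | One3 a} yt.1 yt.2 e
                (one3_pair _ _ e) hV hN hm2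
              rw [card_ne] at this
              simpa using this
        _ = _ := by simp

theorem Super.fin1 (hS : Super W0 W1 W2 Wa R) {N : ℕ} (h0 : C0 W0 N) (h1 : C1q W1 N) :
    C1 W1 N := by
  intro I U T V _ _ _ _ S A hA hV
  by_cases h : ∃ t, S.mate t = t
  · exact h1 I U T V S A hA hV h
  · push Not at h
    obtain ⟨e1, e0⟩ := S.q_eq_zero h
    rw [e1, e0]
    exact wake_all h0 hS.end1 hS.wake1 _ I U T V S A hA hV h (by rw [S.card_eq, e1, e0]; simp)

theorem Super.fin2 (hS : Super W0 W1 W2 Wa R) {N : ℕ} (h0 : C0 W0 N) (h2 : C2q Wa N) :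
    C2 W2 N := by
  intro I U T V _ _ _ _ S A hA hF hV
  by_cases h : ∃ t, S.mate t = t
  · exact (h2 I U T V S A hA hF hV h).trans (hS.le_a _ _ _ _ _ _)
  · push Not at h
    obtain ⟨e1, e0⟩ := S.q_eq_zero h
    rw [e1, e0]
    exact wake_all h0 hS.end2 hS.wake2 _ I U T V S A hA hV h (by rw [S.card_eq, e1, e0]; simp)

/-- The induction over the number of variables: the bounding functions bound the failure
probabilities. -/
theorem Super.level (hS : Super W0 W1 W2 Wa R) (N : ℕ) :
    C0 W0 N ∧ C1 W1 N ∧ C2 W2 N ∧ C1q W1 N := by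
  induction N with
  | zero =>
    have h1 := hS.c1q 0 (fun h => absurd h (by omega))
    have h2 := hS.c2q 0 (fun h => absurd h (by omega)) (fun h => absurd h (by omega))
    have h0 := hS.c0 h2 h1
    exact ⟨h0, hS.fin1 h0 h1, hS.fin2 h0 h2, h1⟩
  | succ N ih =>
    have h1 := hS.c1q (N + 1) (fun _ => ih.2.1)
    have h2 := hS.c2q (N + 1) (fun _ => ih.2.2.1) (fun _ => ih.2.2.2)
    have h0 := hS.c0 h2 h1
    exact ⟨h0, hS.fin1 h0 h1, hS.fin2 h0 h2, h1⟩

end Level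

/-! ### Averages over one step -/

theorem hits_le {m k : ℕ} (J : Fin m → Option (Fin k)) : hits J ≤ m := by
  unfold hits
  refine (Finite.card_subtype_le _).trans ?_
  simp

theorem Ex_mono {N m3 m2 : ℕ} {E E' : ℕ → ℕ → ℝ}
    (h : ∀ j3 j2, j3 ≤ m3 → j2 ≤ m2 → E j3 j2 ≤ E' j3 j2) : Ex N m3 m2 E ≤ Ex N m3 m2 E' := by
  unfold Ex
  refine Finset.sum_le_sum fun J₃ _ => Finset.sum_le_sum fun J₂ _ => ?_
  refine mul_le_mul_of_nonneg_left (h _ _ (hits_le _) (hits_le _)) (mul_nonneg ?_ ?_)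
  · exact Finset.prod_nonneg fun i _ => rho3_nonneg _ _
  · exact Finset.prod_nonneg fun i _ => rho2_nonneg _ _

theorem Ex_add (N m3 m2 : ℕ) (E E' : ℕ → ℕ → ℝ) :
    Ex N m3 m2 (fun a b => E a b + E' a b) = Ex N m3 m2 E + Ex N m3 m2 E' := by
  unfold Ex
  simp only [mul_add, Finset.sum_add_distrib]

theorem Ex_mul (N m3 m2 : ℕ) (c : ℝ) (E : ℕ → ℕ → ℝ) :
    Ex N m3 m2 (fun a b => c * E a b) = c * Ex N m3 m2 E := by
  unfold Ex
  simp only [Finset.mul_sum]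
  refine Finset.sum_congr rfl fun J₃ _ => Finset.sum_congr rfl fun J₂ _ => ?_
  ring

theorem pow_hits {m k : ℕ} (z : ℝ) (J : Fin m → Option (Fin k)) :
    z ^ hits J = ∏ i, (if J i = none then 1 else z) := by
  classical
  rw [Finset.prod_ite]
  simp [hits, Nat.card_eq_fintype_card, Fintype.card_subtype]

theorem Ex_pow (N m3 m2 : ℕ) (z3 z2 : ℝ) :
    Ex N m3 m2 (fun a b => z3 ^ a * z2 ^ b) =
      (((N - 1 : ℕ) : ℝ) ^ 3 / (N : ℝ) ^ 3 + 3 * (((N - 1 : ℕ) : ℝ) ^ 2 / (N : ℝ) ^ 3 * z3)) ^ m3 *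
      (((N - 1 : ℕ) : ℝ) ^ 2 / (N : ℝ) ^ 2 + 2 * (((N - 1 : ℕ) : ℝ) / (N : ℝ) ^ 2 * z2)) ^ m2 := by
  classical
  have e3 : (((N - 1 : ℕ) : ℝ) ^ 3 / (N : ℝ) ^ 3 + 3 * (((N - 1 : ℕ) : ℝ) ^ 2 / (N : ℝ) ^ 3 * z3)) =
      ∑ o : Option (Fin 3), rho3 N o * (if o = none then 1 else z3) := by
    simp [Fintype.sum_option, rho3]
  have e2 : (((N - 1 : ℕ) : ℝ) ^ 2 / (N : ℝ) ^ 2 + 2 * (((N - 1 : ℕ) : ℝ) / (N : ℝ) ^ 2 * z2)) =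
      ∑ o : Option (Fin 2), rho2 N o * (if o = none then 1 else z2) := by
    simp [Fintype.sum_option, rho2]
  have p3 : ∀ (m : ℕ) (x : ℝ), x ^ m = ∏ _i : Fin m, x := by intro m x; simp
  rw [p3 m3, p3 m2, e3, e2, Finset.prod_univ_sum, Finset.prod_univ_sum, Finset.sum_mul_sum]
  unfold Ex
  simp only [Fintype.piFinset_univ, pow_hits, Finset.prod_mul_distrib]
  refine Finset.sum_congr rfl fun J₃ _ => Finset.sum_congr rfl fun J₂ _ => ?_
  ring

/-- One-step exponential moments; the numbers of hits are nearly Poisson, with means `3 m3 / N` and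
`2 m2 / N`. -/
theorem Ex_exp_le {N m3 m2 : ℕ} (hN : 1 ≤ N) {u3 u2 : ℝ} (h3 : |u3| ≤ 1) (h2 : |u2| ≤ 1) :
    Ex N m3 m2 (fun a b => Real.exp (u3 * a + u2 * b)) ≤
      Real.exp (3 * m3 / N * (u3 + u3 ^ 2) + 2 * m2 / N * (u2 + u2 ^ 2) +
        (3 * m3 + 2 * m2) / (N : ℝ) ^ 2) := by
  have e : (fun a b : ℕ => Real.exp (u3 * a + u2 * b)) =
      fun a b => Real.exp u3 ^ a * Real.exp u2 ^ b := by
    funext a b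
    rw [Real.exp_add, ← Real.exp_nat_mul, ← Real.exp_nat_mul, mul_comm u3, mul_comm u2]
  have hN' : (0 : ℝ) < N := by exact_mod_cast hN
  have hN1 : ((N - 1 : ℕ) : ℝ) = N - 1 := by push_cast [hN]; ring
  obtain ⟨p, hp⟩ : ∃ p : ℝ, p = 1 / (N : ℝ) := ⟨_, rfl⟩
  have hp0 : 0 < p := by rw [hp]; positivity
  have hp1 : p ≤ 1 := by
    rw [hp, div_le_one hN']; exact_mod_cast hN
  have exb : ∀ u : ℝ, |u| ≤ 1 → Real.exp u ≤ 1 + u + u ^ 2 := by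
    intro u hu
    have := Real.abs_exp_sub_one_sub_id_le hu
    linarith [(abs_le.1 this).2]
  rw [e, Ex_pow, hN1]
  have f3 : ((N : ℝ) - 1) ^ 3 / (N : ℝ) ^ 3 + 3 * (((N : ℝ) - 1) ^ 2 / (N : ℝ) ^ 3 * Real.exp u3) =
      (1 - p) ^ 3 + 3 * p * (1 - p) ^ 2 * Real.exp u3 := by
    rw [hp]; field_simp
  have f2 : ((N : ℝ) - 1) ^ 2 / (N : ℝ) ^ 2 + 2 * (((N : ℝ) - 1) / (N : ℝ) ^ 2 * Real.exp u2) =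
      (1 - p) ^ 2 + 2 * p * (1 - p) * Real.exp u2 := by
    rw [hp]; field_simp
  rw [f3, f2]
  have g3 : (1 - p) ^ 3 + 3 * p * (1 - p) ^ 2 * Real.exp u3 ≤
      Real.exp (3 * p * (u3 + u3 ^ 2) + 3 * p ^ 2) := by
    have h1 : 3 * p * (1 - p) ^ 2 * Real.exp u3 ≤ 3 * p * 1 * (1 + u3 + u3 ^ 2) := by
      have := exb u3 h3
      have : (1 - p) ^ 2 ≤ 1 := by nlinarith
      gcongr
    have h2 : (1 - p) ^ 3 ≤ 1 - 3 * p + 3 * p ^ 2 := by nlinarith [pow_pos hp0 3]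
    refine le_trans ?_ (Real.add_one_le_exp _)
    linarith
  have g2 : (1 - p) ^ 2 + 2 * p * (1 - p) * Real.exp u2 ≤
      Real.exp (2 * p * (u2 + u2 ^ 2) + 2 * p ^ 2) := by
    have h1 : 2 * p * (1 - p) * Real.exp u2 ≤ 2 * p * 1 * (1 + u2 + u2 ^ 2) := by
      have := exb u2 h2
      have : (1 - p) ≤ 1 := by linarith
      gcongr
    refine le_trans ?_ (Real.add_one_le_exp _)
    nlinarith
  have n3 : 0 ≤ (1 - p) ^ 3 + 3 * p * (1 - p) ^ 2 * Real.exp u3 := by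
    have : 0 ≤ 1 - p := by linarith
    positivity
  have n2 : 0 ≤ (1 - p) ^ 2 + 2 * p * (1 - p) * Real.exp u2 := by
    have : 0 ≤ 1 - p := by linarith
    positivity
  calc _ ≤ Real.exp (3 * p * (u3 + u3 ^ 2) + 3 * p ^ 2) ^ m3 *
        Real.exp (2 * p * (u2 + u2 ^ 2) + 2 * p ^ 2) ^ m2 := by gcongr
    _ = _ := by
      rw [← Real.exp_nat_mul, ← Real.exp_nat_mul, ← Real.exp_add, hp]
      congr 1
      field_simp
      ring

theorem Ex_const_le {N m3 m2 : ℕ} (hN : 1 ≤ N) {c : ℝ} (hc : 0 ≤ c) :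
    Ex N m3 m2 (fun _ _ => c) ≤ c := by
  have h := Ex_pow N m3 m2 1 1
  simp only [one_pow, mul_one] at h
  have h2 := Ex_mul N m3 m2 c (fun _ _ => 1)
  simp only [mul_one] at h2
  rw [h2, h]
  have hN' : (1 : ℝ) ≤ N := by exact_mod_cast hN
  have hN1 : ((N - 1 : ℕ) : ℝ) = N - 1 := by push_cast [hN]; ring
  have h0 : (0 : ℝ) ≤ N - 1 := by linarith
  rw [hN1]
  refine mul_le_of_le_one_right hc (mul_le_one₀ (pow_le_one₀ (by positivity) ?_) (by positivity)
    (pow_le_one₀ (by positivity) ?_))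
  · rw [mul_div_assoc', ← add_div, div_le_one (by positivity)]; nlinarith
  · rw [mul_div_assoc', ← add_div, div_le_one (by positivity)]; nlinarith

/-! ### Estimates for the fluid limit -/

/-- Fluid limit (with a safety margin) of the number of xor slots and touched slots per remaining
variable, when the fraction `x` of the variables remains. -/
noncomputable def Yf (x : ℝ) : ℝ :=
  Real.log x + 1.63806 * (1 - x ^ 2) + 0.00001 * (2 - x)

/-- The weight of a slot planned true, relative to a slot planned false. -/
noncomputable def bf (x : ℝ) : ℝ :=
  max 1 (Real.log x + 1.63806 + 1.63806 * x ^ 2 + 0.00022)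

theorem log_seven : Real.log 0.7 ≤ -0.3566 := by
  rw [Real.log_le_iff_le_exp (by norm_num), Real.exp_neg]
  have h := Real.exp_bound' (x := 0.3566) (by norm_num) (by norm_num) (n := 6) (by norm_num)
  have : Real.exp 0.3566 ≤ 1 / 0.7 := by
    refine h.trans ?_
    norm_num [Finset.sum_range_succ, Nat.factorial]
  rw [le_inv_comm₀ (by norm_num) (Real.exp_pos _)]
  simpa using this

theorem log_tangent {x : ℝ} (hx : 0 < x) : Real.log x ≤ -0.3566 + (x ^ 2 / 0.49 - 1) / 2 := by
  have h := Real.log_le_sub_one_of_pos (x := x ^ 2 / 0.49) (by positivity)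
  rw [Real.log_div (by positivity) (by norm_num), Real.log_pow,
    show (0.49 : ℝ) = 0.7 ^ 2 by norm_num, Real.log_pow] at h
  have := log_seven
  push_cast at h
  norm_num at h ⊢
  norm_num at this
  linarith

theorem Yf_nonneg {x : ℝ} (h1 : 0.24 ≤ x) (h2 : x ≤ 1) : 0.00001 ≤ Yf x := by
  have hl : (-1.54 : ℝ) ≤ Real.log 0.24 := by
    rw [Real.le_log_iff_exp_le (by norm_num), Real.exp_neg]
    have h := Real.quadratic_le_exp_of_nonneg (x := 0.77) (by norm_num)
    have h2 : Real.exp 1.54 = Real.exp 0.77 * Real.exp 0.77 := by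
      rw [← Real.exp_add]; norm_num
    rw [inv_le_comm₀ (Real.exp_pos _) (by norm_num), h2]
    have : (2 : ℝ) ≤ 1 + 0.77 + 0.77 ^ 2 / 2 := by norm_num
    nlinarith
  have hc := (strictConcaveOn_log_Ioi.concaveOn).2 (show (0.24 : ℝ) ∈ Set.Ioi 0 by norm_num)
    (show (1 : ℝ) ∈ Set.Ioi 0 by norm_num)
    (show 0 ≤ (1 - x) / 0.76 by apply div_nonneg <;> linarith)
    (show 0 ≤ (x - 0.24) / 0.76 by apply div_nonneg <;> linarith) (by ring)
  simp only [smul_eq_mul, Real.log_one, mul_zero, add_zero] at hc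
  have e : (1 - x) / 0.76 * 0.24 + (x - 0.24) / 0.76 * 1 = x := by ring
  rw [e] at hc
  have h3 : (1 - x) / 0.76 * (-1.54) ≤ (1 - x) / 0.76 * Real.log 0.24 :=
    mul_le_mul_of_nonneg_left hl (by apply div_nonneg <;> linarith)
  unfold Yf
  have h4 : (1 - x) * 1.24 ≤ 1 - x ^ 2 := by nlinarith
  have h5 : -2.027 * (1 - x) ≤ Real.log x := by
    refine le_trans ?_ (h3.trans hc)
    rw [div_mul_eq_mul_div, le_div_iff₀ (by norm_num)]
    nlinarith
  linarith

theorem Yf_le {x : ℝ} (h1 : 0.24 ≤ x) (h2 : x ≤ 1) : Yf x ≤ 0.58 := by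
  have h := log_tangent (x := x / 0.78) (by positivity)
  have hd : Real.log (x / 0.78) = Real.log x - Real.log 0.78 := by
    rw [Real.log_div (by linarith) (by norm_num)]
  have h78 : Real.log 0.78 ≤ 0.78 / 0.7 - 1 + Real.log 0.7 := by
    have := Real.log_le_sub_one_of_pos (x := (0.78 : ℝ) / 0.7) (by norm_num)
    rw [Real.log_div (by norm_num) (by norm_num)] at this
    linarith
  have := log_seven
  unfold Yf
  rw [hd] at h
  have hx2 : x ^ 2 ≤ 1 := by nlinarith
  norm_num [div_pow] at h h78 this ⊢
  linarith

/-- The two-type branching process of forced slots is subcritical. This is where the density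
`0.546` enters. -/
theorem key_ineq {x : ℝ} (h1 : 0.24 ≤ x) (h2 : x ≤ 1) : bf x * Yf x ≤ 0.9985 := by
  have hY := Yf_le h1 h2
  have hY0 := Yf_nonneg h1 h2
  unfold bf
  rcases le_total (Real.log x + 1.63806 + 1.63806 * x ^ 2 + 0.00022) 1 with h | h
  · rw [max_eq_left h]; linarith
  rw [max_eq_right h]
  have ht := log_tangent (x := x) (by linarith)
  obtain ⟨g, hg⟩ : ∃ g, g = Real.log x + 1.63818 := ⟨_, rfl⟩
  obtain ⟨w, hw⟩ : ∃ w, w = 1.63806 * x ^ 2 + 0.0001 := ⟨_, rfl⟩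
  have hYu : Yf x ≤ g - w := by unfold Yf; rw [hg, hw]; linarith
  have hA : Real.log x + 1.63806 + 1.63806 * x ^ 2 + 0.00022 = g + w := by rw [hg, hw]; ring
  rw [hA] at h ⊢
  have hx2 : x ^ 2 ≤ 1 := by nlinarith
  have hx0 : 0 ≤ x ^ 2 := by positivity
  have hg' : 1.27736 * g ≤ 0.9985 + 0.7957 * w := by
    rw [hg, hw]
    norm_num at ht ⊢
    linarith
  have hg0 : 0 ≤ g := by linarith
  have hw0 : 0 ≤ w := by rw [hw]; positivity
  have hsq : (1.27736 * g) ^ 2 ≤ (0.9985 + 0.7957 * w) ^ 2 := by gcongr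
  have hcs : (0.9985 + 0.7957 * w) ^ 2 ≤ 1.27736 ^ 2 * (0.9985 + w ^ 2) := by
    nlinarith [sq_nonneg (w - 0.7957)]
  have : g ^ 2 - w ^ 2 ≤ 0.9985 := by nlinarith
  calc (g + w) * Yf x ≤ (g + w) * (g - w) := by gcongr
    _ ≤ 0.9985 := by nlinarith

theorem Yf_transition {x : ℝ} (h1 : 0.24 ≤ x) (h2 : x ≤ 0.2401) :
    x * Yf x + 2 * (0.54602 * x ^ 3) ≤ 0.0445 ∧ 0.54602 * x ^ 3 ≤ 0.0076 := by
  have hl : Real.log x ≤ -1.4264 := by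
    have h := Real.log_le_log (by linarith) h2
    rw [show (0.2401 : ℝ) = 0.7 ^ 4 by norm_num, Real.log_pow] at h
    have := log_seven
    push_cast at h
    linarith
  have hx3 : x ^ 3 ≤ 0.2401 ^ 3 := by gcongr
  have hY : Yf x ≤ 0.1177 := by
    unfold Yf
    nlinarith
  have : x * Yf x ≤ 0.2401 * 0.1177 := by
    rcases le_total 0 (Yf x) with h | h
    · gcongr
    · nlinarith
  norm_num at hx3 this ⊢
  constructor <;> linarith

theorem bf_mono {x y : ℝ} (hx : 0 < x) (hxy : x ≤ y) : bf x ≤ bf y := by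
  unfold bf
  have := Real.log_le_log hx hxy
  gcongr

theorem one_le_bf (x : ℝ) : 1 ≤ bf x := le_max_left _ _

theorem bf_le {x : ℝ} (h0 : 0 < x) (h1 : x ≤ 1) : bf x ≤ 4 := by
  unfold bf
  have := Real.log_nonpos h0.le h1
  have : x ^ 2 ≤ 1 := by nlinarith
  refine max_le (by norm_num) ?_
  linarith

/-! ### The potential -/

/-- Exponential penalty for having more than `Yf` xor slots and touched slots per variable. -/
noncomputable def Pa (M N d : ℝ) : ℝ := Real.exp ((1 / 10 ^ 10) * (M / N * d - M * Yf (N / M)))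
/-- Exponential penalty for having too many three-clauses. -/
noncomputable def Pb (M N m3 : ℝ) : ℝ :=
  Real.exp ((1 / 10 ^ 10) * ((M / N) ^ 3 * m3 - 0.546 * M - 0.00001 * M * (2 - N / M)))
/-- Exponential penalty, used at the end of the exploration, for exhausting the variables before
the three-clauses. -/
noncomputable def Pc (M N m3 q : ℝ) : ℝ :=
  Real.exp ((1 / 10 ^ 10) * (1.7 * q + 5.3 * m3 + 0.18 * M - N))
open Classical in
/-- Penalty `1` for a bad start of the end phase. -/
noncomputable def Pd (M m3 e : ℝ) : ℝ :=
  if m3 ≤ 0.0076 * M ∧ e + 2 * m3 ≤ 0.0445 * M then 0 else 1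
open Classical in
/-- The potential of a state with `N` of `M` variables left. Here `d` is the number of xor slots
and touched slots, `e` the number of xor slots and dormant slots, `q` the number of active
slots. -/
noncomputable def PP (M N m3 d e q : ℝ) : ℝ :=
  if M < N then 1 else if 0.24 * M ≤ N then Pa M N d + Pb M N m3 else Pc M N m3 q + Pd M m3 e

theorem Pd_nonneg (M m3 e : ℝ) : 0 ≤ Pd M m3 e := by unfold Pd; split_ifs <;> norm_num

theorem PP_nonneg (M N m3 d e q : ℝ) : 0 ≤ PP M N m3 d e q := by
  unfold PP
  have := Pd_nonneg M m3 e
  split_ifs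
  · norm_num
  · unfold Pa Pb; positivity
  · unfold Pc; positivity

theorem Pd_mono {M m3 e e' : ℝ} (h : e ≤ e') : Pd M m3 e ≤ Pd M m3 e' := by
  unfold Pd
  split_ifs with h1 h2 h2
  · rfl
  · norm_num
  · exact absurd ⟨h2.1, by linarith [h2.2]⟩ h1
  · rfl

theorem PP_mono {M N m3 d d' e e' q q' : ℝ} (hM : 0 ≤ M) (hN : 0 ≤ N) (hd : d ≤ d') (he : e ≤ e')
    (hq : q ≤ q') : PP M N m3 d e q ≤ PP M N m3 d' e' q' := by
  unfold PP
  split_ifs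
  · rfl
  · unfold Pa; gcongr
  · have := Pd_mono (M := M) (m3 := m3) he
    unfold Pc; gcongr

theorem Pd_eq {M m3 e : ℝ} (h : Pd M m3 e < 1) : m3 ≤ 0.0076 * M ∧ e + 2 * m3 ≤ 0.0445 * M := by
  unfold Pd at h
  split_ifs at h with h1
  · exact h1
  · exact absurd h (lt_irrefl _)

theorem Pd_zero {M m3 e : ℝ} (h : m3 ≤ 0.0076 * M ∧ e + 2 * m3 ≤ 0.0445 * M) : Pd M m3 e = 0 := by
  unfold Pd; rw [if_pos h]

theorem exp_lt_one_arg {c : ℝ} (h : Real.exp ((1 / 10 ^ 10) * c) < 1) : c < 0 := by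
  rw [Real.exp_lt_one_iff] at h
  by_contra hc
  have : (0 : ℝ) ≤ (1 / 10 ^ 10) * c := mul_nonneg (by norm_num) (not_lt.1 hc)
  linarith

theorem phase1_bounds {M N m3 d : ℝ} (hM : 0 < M) (hN : 0.24 * M ≤ N)
    (h : Pa M N d + Pb M N m3 < 1) : d ≤ N * Yf (N / M) ∧ m3 ≤ 0.54602 * M * (N / M) ^ 3 := by
  have hN0 : 0 < N := by linarith
  have hx0 : 0 < N / M := by positivity
  have ha : Pa M N d < 1 := by have : 0 < Pb M N m3 := Real.exp_pos _; linarith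
  have hb : Pb M N m3 < 1 := by have : 0 < Pa M N d := Real.exp_pos _; linarith
  have ha := exp_lt_one_arg ha
  have hb := exp_lt_one_arg hb
  constructor
  · have : M / N * d < M / N * (N * Yf (N / M)) := by
      have e : M / N * (N * Yf (N / M)) = M * Yf (N / M) := by field_simp
      rw [e]; linarith
    exact (lt_of_mul_lt_mul_left this (by positivity)).le
  · have h1 : (M / N) ^ 3 * m3 ≤ 0.54602 * M := by
      have : 0 ≤ M * (N / M) := by positivity
      nlinarith
    have e : m3 = (N / M) ^ 3 * ((M / N) ^ 3 * m3) := by field_simp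
    rw [e]
    calc _ ≤ (N / M) ^ 3 * (0.54602 * M) := by gcongr
      _ = _ := by ring

theorem phase2_bounds {M N m3 e q : ℝ} (h : Pc M N m3 q + Pd M m3 e < 1) :
    1.7 * q + 5.3 * m3 + 0.18 * M < N ∧ m3 ≤ 0.0076 * M ∧ e + 2 * m3 ≤ 0.0445 * M := by
  have ha : Pc M N m3 q < 1 := by have := Pd_nonneg M m3 e; linarith
  have hb : Pd M m3 e < 1 := by have : 0 < Pc M N m3 q := Real.exp_pos _; linarith
  have ha := exp_lt_one_arg ha
  exact ⟨by linarith, Pd_eq hb⟩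

/-- States of potential less than one lie in the tube around the fluid limit. The last two bounds
say that the branching process of active slots, with weight `bf` for slots planned true, is
subcritical. -/
theorem PP_good {M N m3 m2 d e q : ℝ} (hM : 0 < M) (h3 : 0 ≤ m3) (h2 : 0 ≤ m2)
    (hq : 0 ≤ q) (hd : 2 * m2 ≤ d) (he : 2 * m2 ≤ e) (h : PP M N m3 d e q < 1) :
    0.18 * M ≤ N ∧ N ≤ M ∧ 2 * m2 / N ≤ 0.58 ∧ 3 * m3 / N ≤ 1.7 ∧
      bf (N / M) * (2 * m2 / N) ≤ 0.9985 ∧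
      2 * m2 / N + 2 * (3 * m3 / N) ≤ bf (N / M) - 0.0002 := by
  unfold PP at h
  split_ifs at h with h1 h4
  · exact absurd h (lt_irrefl _)
  · have hNM := not_lt.1 h1
    have hN0 : 0 < N := by linarith
    obtain ⟨hd', h3'⟩ := phase1_bounds hM h4 h
    obtain ⟨x, hx⟩ : ∃ x, x = N / M := ⟨_, rfl⟩
    rw [← hx] at hd' h3' ⊢
    have hx1 : 0.24 ≤ x := by rw [hx, le_div_iff₀ hM]; exact h4
    have hx2 : x ≤ 1 := by rw [hx, div_le_one hM]; exact hNM
    have c2 : 2 * m2 / N ≤ Yf x := by rw [div_le_iff₀ hN0]; linarith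
    have c3 : 3 * m3 / N ≤ 1.63806 * x ^ 2 := by
      rw [div_le_iff₀ hN0]
      have e : N = M * x := by rw [hx]; field_simp
      rw [e]
      nlinarith
    have hxx : x ^ 2 ≤ 1 := by nlinarith
    have hk := key_ineq hx1 hx2
    have hb := one_le_bf x
    refine ⟨by linarith, hNM, c2.trans (Yf_le hx1 hx2), by linarith, ?_, ?_⟩
    · refine le_trans ?_ hk
      gcongr
    · have : Real.log x + 1.63806 + 1.63806 * x ^ 2 + 0.00022 ≤ bf x := le_max_right _ _
      unfold Yf at c2
      linarith
  · obtain ⟨hN, hm, hr⟩ := phase2_bounds h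
    have hNM := not_lt.1 h1
    have hN0 : 0 < N := by linarith
    have c2 : 2 * m2 / N ≤ 0.2475 := by rw [div_le_iff₀ hN0]; linarith
    have c3 : 3 * m3 / N ≤ 0.13 := by rw [div_le_iff₀ hN0]; linarith
    have hb := one_le_bf (N / M)
    have hb' := bf_le (x := N / M) (by positivity) ((div_le_one hM).2 hNM)
    have : 0 ≤ 2 * m2 / N := by positivity
    refine ⟨by linarith, hNM, by linarith, by linarith, ?_, by linarith⟩
    nlinarith

/-! ### Drift of the weight of the touched slots -/

theorem drift_true {N m3 m2 : ℕ} {a b : ℝ} (hN : (10 ^ 20 : ℝ) ≤ N) (ha : (4 / 10 ^ 11) ≤ a) (ha' : a ≤ 0.00001)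
    (c2 : 2 * (m2 : ℝ) / N ≤ 0.58) (c3 : 3 * (m3 : ℝ) / N ≤ 1.7)
    (h : 2 * (m2 : ℝ) / N + 2 * (3 * m3 / N) ≤ b - 0.0002) :
    Ex N m3 m2 (fun j3 j2 => Real.exp (a * (j2 + 2 * j3))) ≤ Real.exp (a * (b - 0.0001)) := by
  have hN0 : (0 : ℝ) < N := by linarith
  have hN1 : 1 ≤ N := by exact_mod_cast (by linarith : (1 : ℝ) ≤ N)
  have e : (fun j3 j2 : ℕ => Real.exp (a * (j2 + 2 * j3))) =
      fun j3 j2 : ℕ => Real.exp ((2 * a) * j3 + a * j2) := by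
    funext j3 j2; congr 1; ring
  rw [e]
  refine (Ex_exp_le hN1 (by rw [abs_le]; constructor <;> linarith)
    (by rw [abs_le]; constructor <;> linarith)).trans (Real.exp_le_exp.2 ?_)
  have e2 : (3 * (m3 : ℝ) + 2 * m2) / (N : ℝ) ^ 2 = (3 * m3 / N + 2 * m2 / N) / N := by
    field_simp
  rw [e2]
  obtain ⟨x, hx⟩ : ∃ x, x = 3 * (m3 : ℝ) / N := ⟨_, rfl⟩
  obtain ⟨y, hy⟩ : ∃ y, y = 2 * (m2 : ℝ) / N := ⟨_, rfl⟩
  have hx0 : 0 ≤ x := by rw [hx]; positivity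
  have hy0 : 0 ≤ y := by rw [hy]; positivity
  rw [← hx] at c3 h ⊢
  rw [← hy] at c2 h ⊢
  have h1 : (x + y) / N ≤ (1 / 10 ^ 19) := by
    rw [div_le_iff₀ hN0]; linarith
  have h2 : a * (y + 2 * x) ≤ a * (b - 0.0002) := by gcongr
  have h3 : a * a * (4 * x + y) ≤ 0.00001 * a * 7.5 := by gcongr; linarith
  nlinarith

theorem drift_false {N m3 m2 : ℕ} {a b : ℝ} (hN : (10 ^ 20 : ℝ) ≤ N) (ha : (4 / 10 ^ 11) ≤ a) (ha' : a ≤ 0.00001)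
    (hb : 1 ≤ b) (hb' : b ≤ 4) (c2 : 2 * (m2 : ℝ) / N ≤ 0.58) (c3 : 3 * (m3 : ℝ) / N ≤ 1.7)
    (h : b * (2 * (m2 : ℝ) / N) ≤ 0.9985) :
    Ex N m3 m2 (fun j3 j2 => Real.exp (a * (b * j2 + 0.0001 * (2 * j3)))) ≤
      Real.exp (a * (1 - 0.0001)) := by
  have hN0 : (0 : ℝ) < N := by linarith
  have hN1 : 1 ≤ N := by exact_mod_cast (by linarith : (1 : ℝ) ≤ N)
  have e : (fun j3 j2 : ℕ => Real.exp (a * (b * j2 + 0.0001 * (2 * j3)))) =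
      fun j3 j2 : ℕ => Real.exp ((0.0002 * a) * j3 + (b * a) * j2) := by
    funext j3 j2; congr 1; ring
  rw [e]
  refine (Ex_exp_le hN1 (by rw [abs_le]; constructor <;> linarith)
    (by rw [abs_le]; constructor <;> nlinarith)).trans (Real.exp_le_exp.2 ?_)
  have e2 : (3 * (m3 : ℝ) + 2 * m2) / (N : ℝ) ^ 2 = (3 * m3 / N + 2 * m2 / N) / N := by
    field_simp
  rw [e2]
  obtain ⟨x, hx⟩ : ∃ x, x = 3 * (m3 : ℝ) / N := ⟨_, rfl⟩
  obtain ⟨y, hy⟩ : ∃ y, y = 2 * (m2 : ℝ) / N := ⟨_, rfl⟩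
  have hx0 : 0 ≤ x := by rw [hx]; positivity
  have hy0 : 0 ≤ y := by rw [hy]; positivity
  rw [← hx] at c3 ⊢
  rw [← hy] at c2 h ⊢
  have h1 : (x + y) / N ≤ (1 / 10 ^ 19) := by
    rw [div_le_iff₀ hN0]; linarith
  have h2 : a * (b * y) ≤ a * 0.9985 := by gcongr
  have h3 : a * a * (b * (b * y)) ≤ 0.00001 * a * (4 * 0.9985) := by gcongr
  have h4 : a * x ≤ a * 1.7 := by gcongr
  have h5 : a * a * x ≤ 0.00001 * a * 1.7 := by gcongr
  nlinarith

/-! ### Drift of the potential -/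

theorem Pa_step {M N d j : ℝ} (hM : 0 < M) (hN : 1 < N) :
    Pa M (N - 1) (d - 1 + j) ≤ Pa M N d * Real.exp ((1 / 10 ^ 10) * (M * d / (N * (N - 1)) -
      3.27612 * (N / M) + 1.63806 / M - 0.00001 + M / (N - 1) * j)) := by
  unfold Pa
  rw [← Real.exp_add]
  refine Real.exp_le_exp.2 ?_
  have hN1 : 0 < N - 1 := by linarith
  have hN0 : 0 < N := by linarith
  have hlog : Real.log (N / M) - Real.log ((N - 1) / M) ≤ 1 / (N - 1) := by
    rw [← Real.log_div (by positivity) (by positivity)]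
    have e : N / M / ((N - 1) / M) = 1 + 1 / (N - 1) := by field_simp; ring
    rw [e]
    have := Real.log_le_sub_one_of_pos (show 0 < 1 + 1 / (N - 1) by positivity)
    linarith
  have h1 : M * (Yf (N / M) - Yf ((N - 1) / M)) ≤
      M * (1 / (N - 1)) - 3.27612 * (N / M) + 1.63806 / M - 0.00001 := by
    have e : M * (Yf (N / M) - Yf ((N - 1) / M)) =
        M * (Real.log (N / M) - Real.log ((N - 1) / M)) - 3.27612 * (N / M) + 1.63806 / M
          - 0.00001 := by
      unfold Yf
      field_simp
      ring
    rw [e]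
    gcongr
  have e : M / (N - 1) * (d - 1 + j) = M / N * d - M * (1 / (N - 1)) +
      M * d / (N * (N - 1)) + M / (N - 1) * j := by
    field_simp
    ring
  rw [e]
  linarith

theorem Pb_step (M N m3 j : ℝ) (hM : 0 < M) : Pb M (N - 1) (m3 - j) = Pb M N m3 * Real.exp
    ((1 / 10 ^ 10) * ((M / (N - 1)) ^ 3 * (m3 - j) - (M / N) ^ 3 * m3 - 0.00001)) := by
  unfold Pb
  rw [← Real.exp_add]
  congr 1
  field_simp
  ring

/-- A bound for the exponent in `Ex_exp_le` when the intensities are bounded. -/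
theorem Ex_exp_le' {N m3 m2 : ℕ} (hN : (10 ^ 20 : ℝ) ≤ N) {u3 u2 : ℝ} (h3 : |u3| ≤ 1) (h2 : |u2| ≤ 1)
    (c2 : 2 * (m2 : ℝ) / N ≤ 0.58) (c3 : 3 * (m3 : ℝ) / N ≤ 1.7) :
    Ex N m3 m2 (fun a b => Real.exp (u3 * a + u2 * b)) ≤
      Real.exp (3 * m3 / N * (u3 + u3 ^ 2) + 2 * m2 / N * (u2 + u2 ^ 2) + (3 / 10 ^ 20)) := by
  have hN0 : (0 : ℝ) < N := by linarith
  have hN1 : 1 ≤ N := by exact_mod_cast (by linarith : (1 : ℝ) ≤ N)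
  refine (Ex_exp_le hN1 h3 h2).trans (Real.exp_le_exp.2 ?_)
  have e2 : (3 * (m3 : ℝ) + 2 * m2) / (N : ℝ) ^ 2 = (3 * m3 / N + 2 * m2 / N) / N := by
    field_simp
  rw [e2]
  have h1 : (3 * (m3 : ℝ) / N + 2 * m2 / N) / N ≤ (3 / 10 ^ 20) := by
    rw [div_le_iff₀ hN0]; linarith
  linarith

theorem Ex_exp_mul {N m3 m2 : ℕ} (a u3 u2 : ℝ) :
    Ex N m3 m2 (fun i j => Real.exp (a + (u3 * i + u2 * j))) =
      Real.exp a * Ex N m3 m2 (fun i j => Real.exp (u3 * i + u2 * j)) := by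
  rw [← Ex_mul]
  congr 1
  funext i j
  rw [Real.exp_add]

set_option maxHeartbeats 600000 in
/-- The part of the potential that controls the number of xor slots decreases in expectation. -/
theorem Pa_drift {M v τ : ℝ} {N m3 m2 : ℕ} (hM : 10 ^ 22 ≤ M) (hN : 0.24 * M ≤ N) (hNM : (N : ℝ) ≤ M)
    (hv : 0 ≤ v) (hv' : v ≤ 1 / 4) (hτ0 : 0 ≤ τ) (hτ : τ ≤ 0.00000001 * M)
    (c2 : 2 * (m2 : ℝ) / N ≤ 0.58) (h3 : (m3 : ℝ) ≤ 0.54602 * M * (N / M) ^ 3) :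
    Ex N m3 m2 (fun j3 j2 => Real.exp (v * (j3 + j2)) *
      Pa M (N - 1) (2 * m2 + τ - 1 + (2 * j3 - j2))) ≤
    Real.exp (10 * v - (2 / 10 ^ 17)) * Pa M N (2 * m2 + τ) := by
  have hM0 : 0 < M := by linarith
  have hN0 : (10 ^ 20 : ℝ) ≤ N := by linarith
  have hNp : (0 : ℝ) < N := by linarith
  have hN1 : (1 : ℝ) < N := by linarith
  have hN1' : (0 : ℝ) < N - 1 := by linarith
  obtain ⟨c, hc⟩ : ∃ c, c = M / ((N : ℝ) - 1) := ⟨_, rfl⟩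
  have hc0 : 0 < c := by rw [hc]; positivity
  have hc5 : c ≤ 5 := by rw [hc, div_le_iff₀ hN1']; linarith
  obtain ⟨x, hx⟩ : ∃ x, x = (N : ℝ) / M := ⟨_, rfl⟩
  have hx0 : 0 < x := by rw [hx]; positivity
  have hx1 : x ≤ 1 := by rw [hx, div_le_one hM0]; exact hNM
  have hNx : (N : ℝ) = M * x := by rw [hx]; field_simp
  have c3 : 3 * (m3 : ℝ) / N ≤ 1.63806 * x ^ 2 := by
    rw [div_le_iff₀ hNp, hNx]
    rw [← hx] at h3
    nlinarith
  have hxx : x ^ 2 ≤ 1 := by nlinarith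
  have c3' : 3 * (m3 : ℝ) / N ≤ 1.7 := by linarith
  -- `c` is nearly `1 / x`
  have hcx : c * x ≤ 1 + (1 / 10 ^ 15) := by
    have : c * x = N / (N - 1) := by rw [hc, hx]; field_simp
    rw [this, div_le_iff₀ hN1']; linarith
  obtain ⟨a, ha⟩ : ∃ a, a = (1 / 10 ^ 10) * (M * (2 * m2 + τ) / (N * ((N : ℝ) - 1)) -
      3.27612 * (N / M) + 1.63806 / M - 0.00001) := ⟨_, rfl⟩
  have hpt : ∀ j3 j2 : ℕ, j3 ≤ m3 → j2 ≤ m2 → Real.exp (v * (j3 + j2)) *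
      Pa M (N - 1) (2 * m2 + τ - 1 + (2 * j3 - j2)) ≤ Pa M N (2 * m2 + τ) *
        Real.exp (a + ((v + (2 / 10 ^ 10) * c) * j3 + (v - (1 / 10 ^ 10) * c) * j2)) := by
    intro j3 j2 _ _
    have := Pa_step (d := 2 * m2 + τ) (j := 2 * j3 - j2) hM0 hN1
    calc _ ≤ Real.exp (v * (j3 + j2)) * _ := mul_le_mul_of_nonneg_left this (Real.exp_pos _).le
      _ = _ := by
        rw [mul_left_comm, ← Real.exp_add]
        congr 2
        rw [ha, ← hc]; ring
  refine (Ex_mono hpt).trans ?_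
  rw [Ex_mul, Ex_exp_mul, mul_comm (Real.exp (10 * v - (2 / 10 ^ 17)))]
  refine mul_le_mul_of_nonneg_left ?_ (Real.exp_pos _).le
  refine (mul_le_mul_of_nonneg_left (Ex_exp_le' hN0 (by rw [abs_le]; constructor <;> linarith)
    (by rw [abs_le]; constructor <;> linarith) c2 c3') (Real.exp_pos _).le).trans ?_
  rw [← Real.exp_add]
  refine Real.exp_le_exp.2 ?_
  have hMi : 1.63806 / M ≤ (1 / 10 ^ 20) := by rw [div_le_iff₀ hM0]; linarith
  have e1 : M * (2 * m2 + τ) / (N * ((N : ℝ) - 1)) = c * (2 * m2 / N) + c * (τ / N) := by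
    rw [hc]; field_simp
  have e2 : c * (τ / N) ≤ 5 * 0.0000001 := by
    have : τ / N ≤ 0.0000001 := by rw [div_le_iff₀ hNp]; linarith
    have h0 : 0 ≤ τ / N := by positivity
    gcongr
  obtain ⟨y, hy⟩ : ∃ y, y = 2 * (m2 : ℝ) / N := ⟨_, rfl⟩
  obtain ⟨z, hz⟩ : ∃ z, z = 3 * (m3 : ℝ) / N := ⟨_, rfl⟩
  have hy0 : 0 ≤ y := by rw [hy]; positivity
  have hz0 : 0 ≤ z := by rw [hz]; positivity
  rw [e1, ← hx, ← hy] at ha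
  rw [← hy] at c2
  rw [← hz] at c3 c3'
  rw [← hy, ← hz]
  have hcz : c * z ≤ 1.63806 * x + (1 / 10 ^ 14) := by
    calc c * z ≤ c * (1.63806 * x ^ 2) := by gcongr
      _ = 1.63806 * x * (c * x) := by ring
      _ ≤ 1.63806 * x * (1 + (1 / 10 ^ 15)) := by gcongr
      _ ≤ _ := by nlinarith
  -- quadratic terms
  have q3 : z * (v + (2 / 10 ^ 10) * c) ^ 2 ≤ 1.7 * (0.26 * v + 0.00000001 * (1 / 10 ^ 10)) := by
    have : (v + (2 / 10 ^ 10) * c) ^ 2 ≤ 0.26 * v + 0.00000001 * (1 / 10 ^ 10) := by nlinarith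
    gcongr
  have q2 : y * (v - (1 / 10 ^ 10) * c) ^ 2 ≤ 0.58 * (0.26 * v + 0.00000001 * (1 / 10 ^ 10)) := by
    have : (v - (1 / 10 ^ 10) * c) ^ 2 ≤ 0.26 * v + 0.00000001 * (1 / 10 ^ 10) := by nlinarith
    gcongr
  have l3 : z * v ≤ 1.7 * v := by gcongr
  have l2 : y * v ≤ 0.58 * v := by gcongr
  rw [ha]
  linarith

/-- The part of the potential that controls the number of three-clauses decreases in
expectation. -/
theorem Pb_drift {M v : ℝ} {N m3 m2 : ℕ} (hM : 10 ^ 22 ≤ M) (hN : 0.24 * M ≤ N)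
    (hv : 0 ≤ v) (hv' : v ≤ 1 / 4)
    (c2 : 2 * (m2 : ℝ) / N ≤ 0.58) (c3 : 3 * (m3 : ℝ) / N ≤ 1.7) :
    Ex N m3 m2 (fun j3 j2 => Real.exp (v * (j3 + j2)) * Pb M (N - 1) (m3 - j3)) ≤
    Real.exp (10 * v - (2 / 10 ^ 17)) * Pb M N m3 := by
  have hM0 : 0 < M := by linarith
  have hN0 : (10 ^ 20 : ℝ) ≤ N := by linarith
  have hNp : (0 : ℝ) < N := by linarith
  have hN1 : (1 : ℝ) < N := by linarith
  have hN1' : (0 : ℝ) < N - 1 := by linarith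
  obtain ⟨c, hc⟩ : ∃ c, c = (M / ((N : ℝ) - 1)) ^ 3 := ⟨_, rfl⟩
  have hc0 : 0 < c := by rw [hc]; positivity
  have hc5 : c ≤ 80 := by
    have : M / ((N : ℝ) - 1) ≤ 4.3 := by rw [div_le_iff₀ hN1']; linarith
    rw [hc]
    calc _ ≤ (4.3 : ℝ) ^ 3 := by gcongr
      _ ≤ _ := by norm_num
  have hcm : c * (m3 * (1 - 3 / N)) ≤ (M / N) ^ 3 * m3 := by
    have h1 : (1 - 3 / (N : ℝ)) ≤ (((N : ℝ) - 1) / N) ^ 3 := by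
      have e : ((N : ℝ) - 1) / N = 1 - 1 / N := by field_simp
      rw [e]
      have hi : 0 ≤ 1 / (N : ℝ) := by positivity
      have hi' : 1 / (N : ℝ) ≤ 1 := by rw [div_le_one hNp]; linarith
      have e3 : 3 / (N : ℝ) = 3 * (1 / N) := by ring
      rw [e3]
      nlinarith [mul_nonneg hi hi, mul_nonneg (mul_nonneg hi hi) (sub_nonneg.2 hi')]
    calc _ ≤ c * (m3 * (((N : ℝ) - 1) / N) ^ 3) := by gcongr
      _ = _ := by rw [hc]; field_simp
  obtain ⟨a, ha⟩ : ∃ a, a = (1 / 10 ^ 10) * (c * m3 - (M / N) ^ 3 * m3 - 0.00001) := ⟨_, rfl⟩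
  have hpt : (fun j3 j2 : ℕ => Real.exp (v * (j3 + j2)) * Pb M (N - 1) (m3 - j3)) =
      fun j3 j2 : ℕ => Pb M N m3 * Real.exp (a + ((v - (1 / 10 ^ 10) * c) * j3 + v * j2)) := by
    funext j3 j2
    rw [Pb_step _ _ _ _ hM0, mul_left_comm, ← Real.exp_add]
    congr 2
    rw [ha, ← hc]; ring
  rw [hpt, Ex_mul, Ex_exp_mul, mul_comm (Real.exp (10 * v - (2 / 10 ^ 17)))]
  refine mul_le_mul_of_nonneg_left ?_ (Real.exp_pos _).le
  refine (mul_le_mul_of_nonneg_left (Ex_exp_le' hN0 (by rw [abs_le]; constructor <;> linarith)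
    (by rw [abs_le]; constructor <;> linarith) c2 c3) (Real.exp_pos _).le).trans ?_
  rw [← Real.exp_add]
  refine Real.exp_le_exp.2 ?_
  have e3 : c * (m3 * (1 - 3 / N)) = c * m3 - c * (3 * m3 / N) := by ring
  rw [e3] at hcm
  obtain ⟨y, hy⟩ : ∃ y, y = 2 * (m2 : ℝ) / N := ⟨_, rfl⟩
  obtain ⟨z, hz⟩ : ∃ z, z = 3 * (m3 : ℝ) / N := ⟨_, rfl⟩
  have hy0 : 0 ≤ y := by rw [hy]; positivity
  have hz0 : 0 ≤ z := by rw [hz]; positivity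
  rw [← hy] at c2
  rw [← hz] at c3 hcm
  rw [← hy, ← hz]
  have q3 : z * (v - (1 / 10 ^ 10) * c) ^ 2 ≤ 1.7 * (0.26 * v + 0.000001 * (1 / 10 ^ 10)) := by
    have : (v - (1 / 10 ^ 10) * c) ^ 2 ≤ 0.26 * v + 0.000001 * (1 / 10 ^ 10) := by nlinarith
    gcongr
  have q2 : y * v ^ 2 ≤ 0.58 * (0.26 * v) := by
    have : v ^ 2 ≤ 0.26 * v := by nlinarith
    gcongr
  have l3 : z * v ≤ 1.7 * v := by gcongr
  have l2 : y * v ≤ 0.58 * v := by gcongr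
  rw [ha]
  linarith

/-- The potential of the end phase decreases in expectation, up to a factor `exp (10 v)`. -/
theorem Pc_drift {v a : ℝ} {N m3 m2 : ℕ} (hN : (10 ^ 20 : ℝ) ≤ N)
    (hv : 0 ≤ v) (hv' : v ≤ 1 / 4) (s : ℝ) (hs : a + 1.7 * (2 * (m2 : ℝ) / N) ≤ s - 0.0000002)
    (c2 : 2 * (m2 : ℝ) / N ≤ 0.58) (c3 : 3 * (m3 : ℝ) / N ≤ 1.7) :
    Ex N m3 m2 (fun j3 j2 => Real.exp (v * (j3 + j2)) * Real.exp ((1 / 10 ^ 10) * (a + 1.7 * j2))) ≤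
    Real.exp (10 * v - (1 / 10 ^ 17) + (1 / 10 ^ 10) * s) := by
  have hpt : (fun j3 j2 : ℕ => Real.exp (v * (j3 + j2)) * Real.exp ((1 / 10 ^ 10) * (a + 1.7 * j2))) =
      fun j3 j2 : ℕ => Real.exp ((1 / 10 ^ 10) * a + (v * j3 + (v + (1.7 / 10 ^ 10)) * j2)) := by
    funext j3 j2
    rw [← Real.exp_add]
    congr 1
    ring
  rw [hpt, Ex_exp_mul]
  refine (mul_le_mul_of_nonneg_left (Ex_exp_le' hN (by rw [abs_le]; constructor <;> linarith)
    (by rw [abs_le]; constructor <;> linarith) c2 c3) (Real.exp_pos _).le).trans ?_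
  rw [← Real.exp_add]
  refine Real.exp_le_exp.2 ?_
  obtain ⟨y, hy⟩ : ∃ y, y = 2 * (m2 : ℝ) / N := ⟨_, rfl⟩
  obtain ⟨z, hz⟩ : ∃ z, z = 3 * (m3 : ℝ) / N := ⟨_, rfl⟩
  have hy0 : 0 ≤ y := by rw [hy]; positivity
  have hz0 : 0 ≤ z := by rw [hz]; positivity
  rw [← hy] at c2 hs
  rw [← hz] at c3
  rw [← hy, ← hz]
  have q3 : z * v ^ 2 ≤ 1.7 * (0.26 * v) := by
    have : v ^ 2 ≤ 0.26 * v := by nlinarith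
    gcongr
  have q2 : y * (v + (1.7 / 10 ^ 10)) ^ 2 ≤ 0.58 * (0.26 * v + (1 / 10 ^ 9) * (1 / 10 ^ 10)) := by
    have : (v + (1.7 / 10 ^ 10)) ^ 2 ≤ 0.26 * v + (1 / 10 ^ 9) * (1 / 10 ^ 10) := by nlinarith
    gcongr
  have l3 : z * v ≤ 1.7 * v := by gcongr
  have l2 : y * v ≤ 0.58 * v := by gcongr
  linarith

/-! ### One step of the potential -/

/-- The potential decreases in expectation, up to an error that is only needed when passing to the
end phase. The weight `exp (v * (j3 + j2))` and the surplus `Q - q` allow for terms that are not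
bounded in the numbers of hits and of touched slots. -/
theorem PP_step {M v τ e q Q : ℝ} {N m3 m2 : ℕ} (hM : 10 ^ 22 ≤ M) (hv : 0 ≤ v) (hv' : v ≤ 1 / 4)
    (hτ : τ ≤ 0.00000001 * M) (hq0 : 0 ≤ q) (hqQ : q ≤ Q) (hQ : Q ≤ τ) (he : e ≤ 2 * m2 + τ)
    (h2e : 2 * (m2 : ℝ) ≤ e) (h : PP M N m3 (2 * m2 + τ) e q < 1) :
    Ex N m3 m2 (fun j3 j2 => Real.exp (v * (j3 + j2)) * PP M (N - 1) (m3 - j3)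
      (2 * m2 + τ - 1 + (2 * j3 - j2)) (e + 2 * j3) (Q - 1 + j2 + 2 * j3)) ≤
    Real.exp (10 * v - (1 / 10 ^ 17)) * (Real.exp ((1.7 / 10 ^ 10) * (Q - q)) * PP M N m3 (2 * m2 + τ) e q +
      Real.exp (-(1 / 10 ^ 16) * M)) := by
  have hM0 : 0 < M := by linarith
  have hm3 : (0 : ℝ) ≤ m3 := Nat.cast_nonneg _
  have hm2 : (0 : ℝ) ≤ m2 := Nat.cast_nonneg _
  have hτ0 : 0 ≤ τ := by linarith
  obtain ⟨hN, hNM, c2, c3, -, -⟩ := PP_good hM0 hm3 hm2 hq0 (by linarith) h2e h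
  have hN20 : (10 ^ 20 : ℝ) ≤ N := by linarith
  have hNp : (0 : ℝ) < N := by linarith
  have hone : 1 ≤ Real.exp ((1.7 / 10 ^ 10) * (Q - q)) := by
    rw [Real.one_le_exp_iff]; nlinarith
  have hexp : Real.exp (10 * v - (2 / 10 ^ 17)) ≤ Real.exp (10 * v - (1 / 10 ^ 17)) :=
    Real.exp_le_exp.2 (by linarith)
  by_cases h4 : 0.24 * M ≤ (N : ℝ)
  · have hP : PP M N m3 (2 * m2 + τ) e q = Pa M N (2 * m2 + τ) + Pb M N m3 := by
      unfold PP; rw [if_neg (not_lt.2 hNM), if_pos h4]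
    rw [hP] at h ⊢
    obtain ⟨hd, h3⟩ := phase1_bounds hM0 h4 h
    by_cases h5 : 0.24 * M ≤ (N : ℝ) - 1
    · have e1 : (fun j3 j2 : ℕ => Real.exp (v * (j3 + j2)) * PP M (N - 1) (m3 - j3)
          (2 * m2 + τ - 1 + (2 * j3 - j2)) (e + 2 * j3) (Q - 1 + j2 + 2 * j3)) =
          fun j3 j2 : ℕ => Real.exp (v * (j3 + j2)) *
            Pa M (N - 1) (2 * m2 + τ - 1 + (2 * j3 - j2)) +
            Real.exp (v * (j3 + j2)) * Pb M (N - 1) (m3 - j3) := by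
        funext j3 j2
        unfold PP
        rw [if_neg (by linarith), if_pos h5, mul_add]
      rw [e1, Ex_add]
      have ha := Pa_drift (m3 := m3) hM h4 hNM hv hv' hτ0 hτ c2 h3
      have hb := Pb_drift hM h4 hv hv' c2 c3
      have hpos : 0 ≤ Pa M N (2 * m2 + τ) + Pb M N m3 := by unfold Pa Pb; positivity
      calc _ ≤ Real.exp (10 * v - (2 / 10 ^ 17)) * (Pa M N (2 * m2 + τ) + Pb M N m3) := by linarith
        _ ≤ Real.exp (10 * v - (1 / 10 ^ 17)) * (Real.exp ((1.7 / 10 ^ 10) * (Q - q)) *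
            (Pa M N (2 * m2 + τ) + Pb M N m3) + Real.exp (-(1 / 10 ^ 16) * M)) := by
          refine mul_le_mul hexp ?_ hpos (Real.exp_pos _).le
          have := Real.exp_pos (-(1 / 10 ^ 16) * M)
          have := mul_le_mul_of_nonneg_right hone hpos
          linarith
    · push Not at h5
      obtain ⟨x, hx⟩ : ∃ x, x = (N : ℝ) / M := ⟨_, rfl⟩
      have hx1 : 0.24 ≤ x := by rw [hx, le_div_iff₀ hM0]; exact h4
      have hx2 : x ≤ 0.2401 := by rw [hx, div_le_iff₀ hM0]; linarith
      have hNx : (N : ℝ) = M * x := by rw [hx]; field_simp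
      obtain ⟨t1, t2⟩ := Yf_transition hx1 hx2
      rw [← hx] at hd h3
      have hm3' : (m3 : ℝ) ≤ 0.0076 * M := by nlinarith
      have hd' : 2 * m2 + τ + 2 * m3 ≤ 0.0445 * M := by
        have : 2 * m2 + τ ≤ M * (x * Yf x) := by
          calc _ ≤ _ := hd
            _ = _ := by rw [hNx]; ring
        nlinarith
      have hpt : ∀ j3 j2 : ℕ, j3 ≤ m3 → j2 ≤ m2 → Real.exp (v * (j3 + j2)) * PP M (N - 1) (m3 - j3)
          (2 * m2 + τ - 1 + (2 * j3 - j2)) (e + 2 * j3) (Q - 1 + j2 + 2 * j3) ≤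
          Real.exp (v * (j3 + j2)) *
            Real.exp ((1 / 10 ^ 10) * ((1.7 * (Q - 1) + 5.3 * m3 + 0.18 * M - N + 1) + 1.7 * j2)) := by
        intro j3 j2 _ _
        have hj3 : (0 : ℝ) ≤ j3 := Nat.cast_nonneg _
        unfold PP
        rw [if_neg (by linarith), if_neg (by linarith), Pd_zero ⟨by linarith, by linarith⟩, add_zero]
        unfold Pc
        gcongr
        linarith
      refine (Ex_mono hpt).trans ((Pc_drift hN20 hv hv' (-0.01 * M) (by linarith) c2 c3).trans ?_)
      rw [Real.exp_add]
      refine mul_le_mul_of_nonneg_left ?_ (Real.exp_pos _).le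
      have hpos : 0 ≤ Pa M N (2 * m2 + τ) + Pb M N m3 := by unfold Pa Pb; positivity
      have h6 : Real.exp ((1 / 10 ^ 10) * (-0.01 * M)) ≤ Real.exp (-(1 / 10 ^ 16) * M) :=
        Real.exp_le_exp.2 (by linarith)
      have := mul_nonneg (by linarith : (0 : ℝ) ≤ Real.exp ((1.7 / 10 ^ 10) * (Q - q))) hpos
      linarith
  · have h4' := not_le.1 h4
    have hP : PP M N m3 (2 * m2 + τ) e q = Pc M N m3 q + Pd M m3 e := by
      unfold PP; rw [if_neg (not_lt.2 hNM), if_neg h4]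
    rw [hP] at h ⊢
    obtain ⟨p1, p2, p3⟩ := phase2_bounds h
    have c2' : 2 * m2 / (N : ℝ) ≤ 0.2475 := by rw [div_le_iff₀ hNp]; linarith
    have hpt : ∀ j3 j2 : ℕ, j3 ≤ m3 → j2 ≤ m2 → Real.exp (v * (j3 + j2)) * PP M (N - 1) (m3 - j3)
        (2 * m2 + τ - 1 + (2 * j3 - j2)) (e + 2 * j3) (Q - 1 + j2 + 2 * j3) ≤
        Real.exp (v * (j3 + j2)) *
          Real.exp ((1 / 10 ^ 10) * ((1.7 * Q + 5.3 * m3 + 0.18 * M - N - 0.7) + 1.7 * j2)) := by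
      intro j3 j2 _ _
      have hj3 : (0 : ℝ) ≤ j3 := Nat.cast_nonneg _
      unfold PP
      rw [if_neg (by linarith), if_neg (by linarith), Pd_zero ⟨by linarith, by linarith⟩, add_zero]
      unfold Pc
      gcongr
      linarith
    refine (Ex_mono hpt).trans ((Pc_drift hN20 hv hv' (1.7 * Q + 5.3 * m3 + 0.18 * M - N)
      (by linarith) c2 c3).trans ?_)
    rw [Real.exp_add, Pd_zero ⟨p2, p3⟩, add_zero]
    refine mul_le_mul_of_nonneg_left ?_ (Real.exp_pos _).le
    have : Real.exp ((1 / 10 ^ 10) * (1.7 * Q + 5.3 * m3 + 0.18 * M - N)) =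
        Real.exp ((1.7 / 10 ^ 10) * (Q - q)) * Pc M N m3 q := by
      unfold Pc
      rw [← Real.exp_add]
      congr 1
      ring
    rw [this]
    have := Real.exp_pos (-(1 / 10 ^ 16) * M)
    linarith

/-- The intensity of dangerous collisions in one step. -/
theorem danger_le {M τ : ℝ} {N : ℕ} (hM : 10 ^ 22 ≤ M) (hN : 0.18 * M ≤ N) (hτ : 0 ≤ τ) (j3 j2 : ℕ) :
    2 * j3 * (τ + j2 + 2 * j3) * (4 / ((N : ℝ) - 1)) ≤
      10 ^ 19 / M * Real.exp ((1 / 10 ^ 15) * τ) * Real.exp (1 / 4 * (j3 + j2)) := by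
  have hM0 : 0 < M := by linarith
  have h1 : (j3 : ℝ) ≤ 8 * Real.exp (1 / 8 * j3) := by
    have := Real.add_one_le_exp (1 / 8 * (j3 : ℝ)); linarith
  have h2 : τ + j2 + 2 * j3 ≤ 10 ^ 15 * Real.exp ((1 / 10 ^ 15) * (τ + j2 + 2 * j3)) := by
    have := Real.add_one_le_exp ((1 / 10 ^ 15) * (τ + j2 + 2 * j3)); linarith
  have h3 : 4 / ((N : ℝ) - 1) ≤ 24 / M := by
    rw [div_le_div_iff₀ (by linarith) hM0]; linarith
  have hj3 : (0 : ℝ) ≤ j3 := Nat.cast_nonneg _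
  have hj2 : (0 : ℝ) ≤ j2 := Nat.cast_nonneg _
  have hNp : 0 < (N : ℝ) - 1 := by linarith
  calc 2 * j3 * (τ + j2 + 2 * j3) * (4 / ((N : ℝ) - 1))
      ≤ 2 * (8 * Real.exp (1 / 8 * j3)) * (10 ^ 15 * Real.exp ((1 / 10 ^ 15) * (τ + j2 + 2 * j3))) *
        (24 / M) := by gcongr
    _ = 16 * 10 ^ 15 * 24 / M * Real.exp ((1 / 10 ^ 15) * τ) *
        Real.exp (1 / 8 * j3 + (1 / 10 ^ 15) * (j2 + 2 * j3)) := by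
      have : (1 / 10 ^ 15) * (τ + j2 + 2 * j3) = (1 / 10 ^ 15) * τ + (1 / 10 ^ 15) * (j2 + 2 * j3) := by ring
      rw [this, Real.exp_add, Real.exp_add]
      ring
    _ ≤ _ := by
      gcongr
      · norm_num
      · linarith

/-! ### One step of the exploration -/

/-- The number `M` of variables is large enough for all estimates. -/
def Big (M : ℝ) : Prop := 10 ^ 120 ≤ M ∧ M ^ 2 ≤ Real.exp ((1 / 10 ^ 23) * M)

/-- The basic failure probability; it increases slightly with the number of variables left to
make room for error terms. -/
noncomputable def base (M x : ℝ) : ℝ := Real.exp (10 ^ 90 * x / M) / M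

theorem base_gain {M : ℝ} (hM : 0 < M) (x h : ℝ) :
    base M (x - h) * (10 ^ 90 * h / M) + base M (x - h) ≤ base M x := by
  unfold base
  have e : 10 ^ 90 * x / M = 10 ^ 90 * (x - h) / M + 10 ^ 90 * h / M := by ring
  rw [e, Real.exp_add]
  have := Real.add_one_le_exp (10 ^ 90 * h / M)
  have h2 : 0 < Real.exp (10 ^ 90 * (x - h) / M) / M := by positivity
  calc _ = Real.exp (10 ^ 90 * (x - h) / M) / M * (10 ^ 90 * h / M + 1) := by ring
    _ ≤ Real.exp (10 ^ 90 * (x - h) / M) / M * Real.exp (10 ^ 90 * h / M) := by gcongr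
    _ = _ := by ring

theorem base_ge {M x : ℝ} (hM : 0 < M) (hx : 0 ≤ x) : 1 / M ≤ base M x := by
  unfold base
  gcongr
  rw [Real.one_le_exp_iff]
  positivity

theorem base_pos {M : ℝ} (hM : 0 < M) (x : ℝ) : 0 < base M x := by unfold base; positivity

theorem base_mono {M x y : ℝ} (hM : 0 < M) (h : x ≤ y) : base M x ≤ base M y := by
  unfold base; gcongr

theorem Big.delta {M : ℝ} (h : Big M) : Real.exp (-(1 / 10 ^ 16) * M) ≤ 1 / M ^ 2 := by
  have hM : 0 < M := by linarith [h.1]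
  have h1 : M ^ 2 ≤ Real.exp ((1 / 10 ^ 16) * M) := h.2.trans (Real.exp_le_exp.2 (by linarith))
  have e : -(1 / 10 ^ 16) * M = -((1 / 10 ^ 16) * M) := by ring
  rw [e, Real.exp_neg, ← one_div]
  gcongr

theorem base_gain_delta {M x h : ℝ} (hB : Big M) (hx : 0 ≤ x - h) (hh : 1 / 2 ≤ h) :
    base M (x - h) + Real.exp (-(1 / 10 ^ 16) * M) ≤ base M x := by
  have hM : 0 < M := by linarith [hB.1]
  have h1 := base_gain hM x h
  have h2 := base_ge hM hx
  have h3 := hB.delta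
  have h4 : 1 / M ^ 2 ≤ base M (x - h) * (10 ^ 90 * h / M) := by
    calc 1 / M ^ 2 = 1 / M * (1 / M) := by field_simp
      _ ≤ base M (x - h) * (10 ^ 90 * h / M) := by
        have := (base_pos hM (x - h)).le
        gcongr
        linarith
  linarith

theorem Big.tau {M τ : ℝ} (h : Big M) (hτ : Real.exp ((4 / 10 ^ 15) * τ) ≤ M ^ 2) : τ ≤ 0.00000001 * M := by
  have := Real.exp_le_exp.1 (hτ.trans h.2)
  linarith [h.1]

theorem Ex_crude {N m3 m2 : ℕ} (hN : (10 ^ 20 : ℝ) ≤ N) {v : ℝ} (hv : 0 ≤ v) (hv' : v ≤ 0.3)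
    (c2 : 2 * (m2 : ℝ) / N ≤ 0.58) (c3 : 3 * (m3 : ℝ) / N ≤ 1.7) :
    Ex N m3 m2 (fun j3 j2 => Real.exp (v * (j3 + j2))) ≤ 3 := by
  have e : (fun j3 j2 : ℕ => Real.exp (v * (j3 + j2))) =
      fun j3 j2 : ℕ => Real.exp (v * j3 + v * j2) := by
    funext j3 j2; rw [mul_add]
  rw [e]
  refine (Ex_exp_le' hN (by rw [abs_le]; constructor <;> linarith)
    (by rw [abs_le]; constructor <;> linarith) c2 c3).trans ?_
  have h0 : 0 ≤ v + v ^ 2 := by positivity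
  have h1 : v + v ^ 2 ≤ 0.39 := by nlinarith
  have h2 : 3 * (m3 : ℝ) / N * (v + v ^ 2) ≤ 1.7 * 0.39 := by gcongr
  have h3 : 2 * (m2 : ℝ) / N * (v + v ^ 2) ≤ 0.58 * 0.39 := by gcongr
  calc _ ≤ Real.exp 1 := Real.exp_le_exp.2 (by linarith)
    _ ≤ 3 := by linarith [Real.exp_one_lt_d9]

theorem exp_neg_le {x : ℝ} (h0 : 0 ≤ x) (h1 : x ≤ 1) : Real.exp (-x) ≤ 1 - x / 2 := by
  have h2 : Real.exp (-x) ≤ 1 / (1 + x) := by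
    rw [Real.exp_neg, ← one_div]
    have := Real.add_one_le_exp x
    gcongr
    linarith
  refine h2.trans ?_
  rw [div_le_iff₀ (by linarith)]
  nlinarith

section Steps
variable {M τ₀ e q L : ℝ} {N m3 m2 : ℕ} {L' P' P'' : ℕ → ℕ → ℝ}

/-- One reveal decreases the bound `W1`, in a form common to slots planned true and planned false.
The last summand of the average is the cost of a collision. -/
theorem step1_gen (hB : Big M) (hτ0 : 0 ≤ τ₀) (hq0 : 0 ≤ q) (hq : q ≤ τ₀ + 1)
    (he : e ≤ 2 * m2 + (τ₀ + 1)) (h2e : 2 * (m2 : ℝ) ≤ e) (hL : 0.0001 * (τ₀ + 1) ≤ L)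
    (hL' : PP M N m3 (2 * m2 + (τ₀ + 1)) e q < 1 → ∀ a : ℝ, (4 / 10 ^ 11) ≤ a → a ≤ 0.00001 →
      Ex N m3 m2 (fun j3 j2 => Real.exp (a * L' j3 j2)) ≤
        Real.exp (-(0.0001 * a)) * Real.exp (a * L))
    (hP' : ∀ j3 j2 : ℕ, j3 ≤ m3 → j2 ≤ m2 → P' j3 j2 ≤ PP M (N - 1) (m3 - j3)
      (2 * m2 + (τ₀ + 1) - 1 + (2 * j3 - j2)) (e + 2 * j3) (q - 1 + j2 + 2 * j3))
    (hW : base M N + PP M N m3 (2 * m2 + (τ₀ + 1)) e q + 10 ^ 45 / M * Real.exp ((4 / 10 ^ 11) * L) < 1) :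
    Ex N m3 m2 (fun j3 j2 => base M ((N : ℝ) - 1) + P' j3 j2 +
      10 ^ 45 / M * Real.exp ((4 / 10 ^ 11) * L' j3 j2) +
      2 * j3 * (τ₀ + j2 + 2 * j3) * (4 / ((N : ℝ) - 1))) ≤
    base M N + PP M N m3 (2 * m2 + (τ₀ + 1)) e q + 10 ^ 45 / M * Real.exp ((4 / 10 ^ 11) * L) := by
  have hM := hB.1
  have hM0 : 0 < M := by linarith
  have hb := base_pos hM0 N
  have hpp := PP_nonneg M N m3 (2 * m2 + (τ₀ + 1)) e q
  have hl : 0 < 10 ^ 45 / M * Real.exp ((4 / 10 ^ 11) * L) := by positivity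
  have hPP : PP M N m3 (2 * m2 + (τ₀ + 1)) e q < 1 := by linarith
  obtain ⟨hN, hNM, c2, c3, -, -⟩ := PP_good hM0 (Nat.cast_nonneg _) (Nat.cast_nonneg _) hq0
    (by linarith) h2e hPP
  have hN20 : (10 ^ 20 : ℝ) ≤ N := by linarith
  have hN1 : 1 ≤ N := by exact_mod_cast (by linarith : (1 : ℝ) ≤ N)
  have hτ : τ₀ + 1 ≤ 0.00000001 * M := by
    refine hB.tau ?_
    have h1 : 10 ^ 45 / M * Real.exp ((4 / 10 ^ 11) * L) < 1 := by linarith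
    rw [div_mul_eq_mul_div, div_lt_one hM0] at h1
    have h2 : Real.exp ((4 / 10 ^ 15) * (τ₀ + 1)) ≤ Real.exp ((4 / 10 ^ 11) * L) :=
      Real.exp_le_exp.2 (by linarith)
    have := Real.exp_pos ((4 / 10 ^ 11) * L)
    nlinarith
  obtain ⟨D, hD⟩ : ∃ D, D = 10 ^ 19 / M * Real.exp ((1 / 10 ^ 15) * τ₀) := ⟨_, rfl⟩
  have hD0 : 0 ≤ D := by rw [hD]; positivity
  have hpt : ∀ j3 j2 : ℕ, j3 ≤ m3 → j2 ≤ m2 → base M ((N : ℝ) - 1) + P' j3 j2 +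
      10 ^ 45 / M * Real.exp ((4 / 10 ^ 11) * L' j3 j2) + 2 * j3 * (τ₀ + j2 + 2 * j3) * (4 / ((N : ℝ) - 1)) ≤
      base M ((N : ℝ) - 1) + Real.exp (0 * (j3 + j2)) * PP M (N - 1) (m3 - j3)
        (2 * m2 + (τ₀ + 1) - 1 + (2 * j3 - j2)) (e + 2 * j3) (q - 1 + j2 + 2 * j3) +
      10 ^ 45 / M * Real.exp ((4 / 10 ^ 11) * L' j3 j2) + D * Real.exp (1 / 4 * (j3 + j2)) := by
    intro j3 j2 h3 h2
    have h4 := danger_le (τ := τ₀) (by linarith) hN hτ0 j3 j2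
    rw [← hD] at h4
    have := hP' j3 j2 h3 h2
    rw [zero_mul, Real.exp_zero, one_mul]
    linarith
  refine (Ex_mono hpt).trans ?_
  rw [Ex_add, Ex_add, Ex_add, Ex_mul, Ex_mul]
  have t1 := Ex_const_le (m3 := m3) (m2 := m2) hN1 (base_pos hM0 ((N : ℝ) - 1)).le
  have t2 := PP_step (by linarith) le_rfl (by norm_num) hτ hq0 le_rfl hq he h2e hPP
  have t3 := hL' hPP (4 / 10 ^ 11) le_rfl (by norm_num)
  have t4 := Ex_crude hN20 (v := 1 / 4) (by norm_num) (by norm_num) c2 c3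
  have t5 : Real.exp (10 * 0 - (1 / 10 ^ 17)) ≤ 1 := by rw [Real.exp_le_one_iff]; norm_num
  rw [sub_self, mul_zero ((1.7 / 10 ^ 10) : ℝ), Real.exp_zero, one_mul] at t2
  have t6 := mul_le_mul_of_nonneg_right t5 (add_nonneg hpp (Real.exp_pos (-(1 / 10 ^ 16) * M)).le)
  have t7 := base_gain_delta (x := N) (h := 1) hB (by linarith) (by norm_num)
  have t8 : Real.exp (-(0.0001 * (4 / 10 ^ 11))) ≤ 1 - (1 / 10 ^ 15) :=
    (exp_neg_le (by norm_num) (by norm_num)).trans (by norm_num)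
  have t9 : Real.exp ((1 / 10 ^ 15) * τ₀) ≤ Real.exp ((4 / 10 ^ 11) * L) := Real.exp_le_exp.2 (by linarith)
  have t10 : 10 ^ 45 / M * Ex N m3 m2 (fun j3 j2 => Real.exp ((4 / 10 ^ 11) * L' j3 j2)) ≤
      10 ^ 45 / M * ((1 - (1 / 10 ^ 15)) * Real.exp ((4 / 10 ^ 11) * L)) := by
    gcongr
    refine t3.trans ?_
    gcongr
  have t11 : D * Ex N m3 m2 (fun j3 j2 => Real.exp (1 / 4 * (j3 + j2))) ≤ D * 3 := by gcongr
  have t12 : D * 3 ≤ 10 ^ 45 / M * ((1 / 10 ^ 15) * Real.exp ((4 / 10 ^ 11) * L)) := by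
    calc D * 3 ≤ 10 ^ 19 / M * Real.exp ((4 / 10 ^ 11) * L) * 3 := by rw [hD]; gcongr
      _ = 3 * 10 ^ 19 / M * Real.exp ((4 / 10 ^ 11) * L) := by ring
      _ ≤ 10 ^ 30 / M * Real.exp ((4 / 10 ^ 11) * L) := by gcongr; norm_num
      _ = _ := by ring
  linarith

set_option maxHeartbeats 800000 in
/-- One reveal takes `Wa` to at most itself, after averaging `W2` and the cost of a collision, which
is now followed by a second attempt. -/
theorem step2_gen (hB : Big M) (hτ0 : 0 ≤ τ₀) (hq0 : 0 ≤ q) (hq : q ≤ τ₀ + 1)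
    (he : e ≤ 2 * m2 + (τ₀ + 1)) (h2e : 2 * (m2 : ℝ) ≤ e) (hL : 0.0001 * (τ₀ + 1) ≤ L)
    (hL' : PP M N m3 (2 * m2 + (τ₀ + 1)) e q < 1 → ∀ a : ℝ, (4 / 10 ^ 11) ≤ a → a ≤ 0.00001 →
      Ex N m3 m2 (fun j3 j2 => Real.exp (a * L' j3 j2)) ≤
        Real.exp (-(0.0001 * a)) * Real.exp (a * L))
    (hP' : ∀ j3 j2 : ℕ, j3 ≤ m3 → j2 ≤ m2 → P' j3 j2 ≤ PP M (N - 1) (m3 - j3)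
      (2 * m2 + (τ₀ + 1) - 1 + (2 * j3 - j2)) (e + 2 * j3) (q - 1 + j2 + 2 * j3))
    (hP'' : ∀ j3 j2 : ℕ, j3 ≤ m3 → j2 ≤ m2 → P'' j3 j2 ≤ PP M (N - 1) (m3 - j3)
      (2 * m2 + (τ₀ + 1) - 1 + (2 * j3 - j2)) (e + 2 * j3) ((τ₀ + 1) - 1 + j2 + 2 * j3))
    (hP0 : ∀ j3 j2, 0 ≤ P'' j3 j2)
    (hW : base M (N - 1 / 2) + PP M N m3 (2 * m2 + (τ₀ + 1)) e q +
      10 ^ 80 / M ^ 2 * Real.exp (10 ^ 90 * N / M) * Real.exp (0.00001 * L) < 1) :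
    Ex N m3 m2 (fun j3 j2 => base M ((N : ℝ) - 1) + P' j3 j2 +
      10 ^ 80 / M ^ 2 * Real.exp (10 ^ 90 * ((N : ℝ) - 1) / M) * Real.exp (0.00001 * L' j3 j2) +
      2 * j3 * (τ₀ + j2 + 2 * j3) * (4 / ((N : ℝ) - 1) * (base M ((N : ℝ) - 1) + P'' j3 j2 +
        (10 ^ 45 / M + 10 ^ 22 / ((N : ℝ) - 1)) * Real.exp ((1.7 / 10 ^ 10) * (τ₀ + j2 + 2 * j3))))) ≤
    base M (N - 1 / 2) + PP M N m3 (2 * m2 + (τ₀ + 1)) e q +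
      10 ^ 80 / M ^ 2 * Real.exp (10 ^ 90 * N / M) * Real.exp (0.00001 * L) := by
  have hM := hB.1
  have hM0 : 0 < M := by linarith
  have hb := base_pos hM0 (N - 1 / 2)
  have hpp := PP_nonneg M N m3 (2 * m2 + (τ₀ + 1)) e q
  have hl : 0 < 10 ^ 80 / M ^ 2 * Real.exp (10 ^ 90 * N / M) * Real.exp (0.00001 * L) := by positivity
  have hPP : PP M N m3 (2 * m2 + (τ₀ + 1)) e q < 1 := by linarith
  obtain ⟨hN, hNM, c2, c3, -, -⟩ := PP_good hM0 (Nat.cast_nonneg _) (Nat.cast_nonneg _) hq0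
    (by linarith) h2e hPP
  have hN20 : (10 ^ 20 : ℝ) ≤ N := by linarith
  have hN1 : 1 ≤ N := by exact_mod_cast (by linarith : (1 : ℝ) ≤ N)
  have hN1' : 0 < (N : ℝ) - 1 := by linarith
  obtain ⟨Λ, hΛ⟩ : ∃ Λ, Λ = Real.exp (0.00001 * L) := ⟨_, rfl⟩
  have hΛ0 : 0 < Λ := by rw [hΛ]; positivity
  have hEN : 1 ≤ Real.exp (10 ^ 90 * N / M) := by rw [Real.one_le_exp_iff]; positivity
  have hΛM : Λ ≤ M ^ 2 := by
    have h1 : 10 ^ 80 / M ^ 2 * Real.exp (10 ^ 90 * N / M) * Real.exp (0.00001 * L) < 1 := by linarith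
    rw [← hΛ] at h1
    have h2 : 1 / M ^ 2 * 1 * Λ ≤ 10 ^ 80 / M ^ 2 * Real.exp (10 ^ 90 * N / M) * Λ := by
      gcongr
      norm_num
    have h3 : Λ / M ^ 2 < 1 := by
      calc Λ / M ^ 2 = 1 / M ^ 2 * 1 * Λ := by ring
        _ < 1 := by linarith
    rw [div_lt_one (by positivity)] at h3
    exact h3.le
  have hτ : τ₀ + 1 ≤ 0.00000001 * M := by
    refine hB.tau (le_trans ?_ hΛM)
    rw [hΛ]
    exact Real.exp_le_exp.2 (by linarith)
  obtain ⟨S, hS⟩ : ∃ S, S = Real.exp ((1.71 / 10 ^ 10) * (τ₀ + 1)) := ⟨_, rfl⟩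
  have hS0 : 0 < S := by rw [hS]; positivity
  have hSM : S ≤ (1 / 10 ^ 39) * M := by
    have h3 : S ^ 3 ≤ M ^ 2 := by
      refine le_trans ?_ hΛM
      rw [hS, hΛ, ← Real.exp_nat_mul]
      refine Real.exp_le_exp.2 ?_
      push_cast
      linarith
    by_contra hc
    push Not at hc
    have : ((1 / 10 ^ 39) * M) ^ 3 < S ^ 3 := by gcongr
    have h4 : ((1 / 10 ^ 39) * M) ^ 3 = (1 / 10 ^ 117) * M * M ^ 2 := by ring
    have h5 : 1 ≤ (1 / 10 ^ 117) * M := by linarith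
    have : 1 * M ^ 2 ≤ (1 / 10 ^ 117) * M * M ^ 2 := by gcongr
    linarith
  have hSΛ : S ≤ Λ := by rw [hS, hΛ]; exact Real.exp_le_exp.2 (by linarith)
  obtain ⟨D, hD⟩ : ∃ D, D = 10 ^ 19 / M * Real.exp ((1 / 10 ^ 15) * τ₀) := ⟨_, rfl⟩
  have hD0 : 0 ≤ D := by rw [hD]; positivity
  obtain ⟨Y, hY⟩ : ∃ Y, Y = Real.exp ((1.7 / 10 ^ 10) * (τ₀ + 1)) := ⟨_, rfl⟩
  have hY0 : 0 < Y := by rw [hY]; positivity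
  have hDY : D * Y ≤ 10 ^ 19 / M * S := by
    rw [hD, hY, hS, mul_assoc, ← Real.exp_add]
    gcongr
    linarith
  have hY1 : 1 ≤ Y := by rw [hY, Real.one_le_exp_iff]; positivity
  have hDS : D ≤ 10 ^ 19 / M * S := by nlinarith
  obtain ⟨b, hb1⟩ : ∃ b, b = base M ((N : ℝ) - 1) := ⟨_, rfl⟩
  have hb0 : 0 < b := by rw [hb1]; exact base_pos hM0 _
  have hpt : ∀ j3 j2 : ℕ, j3 ≤ m3 → j2 ≤ m2 → base M ((N : ℝ) - 1) + P' j3 j2 +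
      10 ^ 80 / M ^ 2 * Real.exp (10 ^ 90 * ((N : ℝ) - 1) / M) * Real.exp (0.00001 * L' j3 j2) +
      2 * j3 * (τ₀ + j2 + 2 * j3) * (4 / ((N : ℝ) - 1) * (base M ((N : ℝ) - 1) + P'' j3 j2 +
        (10 ^ 45 / M + 10 ^ 22 / ((N : ℝ) - 1)) * Real.exp ((1.7 / 10 ^ 10) * (τ₀ + j2 + 2 * j3)))) ≤
      b + Real.exp (0 * (j3 + j2)) * PP M (N - 1) (m3 - j3)
        (2 * m2 + (τ₀ + 1) - 1 + (2 * j3 - j2)) (e + 2 * j3) (q - 1 + j2 + 2 * j3) +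
      10 ^ 80 / M ^ 2 * Real.exp (10 ^ 90 * ((N : ℝ) - 1) / M) * Real.exp (0.00001 * L' j3 j2) +
      D * b * Real.exp (1 / 4 * (j3 + j2)) +
      D * (Real.exp (1 / 4 * (j3 + j2)) * PP M (N - 1) (m3 - j3)
        (2 * m2 + (τ₀ + 1) - 1 + (2 * j3 - j2)) (e + 2 * j3) ((τ₀ + 1) - 1 + j2 + 2 * j3)) +
      D * (10 ^ 46 / M) * Y * Real.exp (0.3 * (j3 + j2)) := by
    intro j3 j2 h3 h2
    have h4 := danger_le (τ := τ₀) (by linarith) hN hτ0 j3 j2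
    rw [← hD] at h4
    have h5 := hP' j3 j2 h3 h2
    have h6 := hP'' j3 j2 h3 h2
    have h0 := hP0 j3 j2
    have hj3 : (0 : ℝ) ≤ j3 := Nat.cast_nonneg _
    have hj2 : (0 : ℝ) ≤ j2 := Nat.cast_nonneg _
    have h7 : 10 ^ 45 / M + 10 ^ 22 / ((N : ℝ) - 1) ≤ 10 ^ 46 / M := by
      have : 10 ^ 22 / ((N : ℝ) - 1) ≤ 10 ^ 23 / M := by
        rw [div_le_div_iff₀ hN1' hM0]; linarith
      have h8 : 10 ^ 46 / M = 10 ^ 45 / M + 9 * 10 ^ 45 / M := by ring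
      have h9 : 10 ^ 23 / M ≤ 9 * 10 ^ 45 / M := by gcongr; norm_num
      linarith
    rw [zero_mul, Real.exp_zero, one_mul, ← hb1]
    have h8 : Real.exp (1 / 4 * (j3 + j2)) * Real.exp ((1.7 / 10 ^ 10) * (τ₀ + j2 + 2 * j3)) ≤
        Y * Real.exp (0.3 * (j3 + j2)) := by
      rw [hY, ← Real.exp_add, ← Real.exp_add]
      refine Real.exp_le_exp.2 (by linarith)
    have h9 : 2 * j3 * (τ₀ + j2 + 2 * j3) * (4 / ((N : ℝ) - 1) * (b + P'' j3 j2 +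
        (10 ^ 45 / M + 10 ^ 22 / ((N : ℝ) - 1)) * Real.exp ((1.7 / 10 ^ 10) * (τ₀ + j2 + 2 * j3)))) ≤
        D * Real.exp (1 / 4 * (j3 + j2)) * (b + PP M (N - 1) (m3 - j3)
        (2 * m2 + (τ₀ + 1) - 1 + (2 * j3 - j2)) (e + 2 * j3) ((τ₀ + 1) - 1 + j2 + 2 * j3) +
        10 ^ 46 / M * Real.exp ((1.7 / 10 ^ 10) * (τ₀ + j2 + 2 * j3))) := by
      rw [← mul_assoc]
      gcongr
    have h10 : D * (10 ^ 46 / M) * (Real.exp (1 / 4 * (j3 + j2)) *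
        Real.exp ((1.7 / 10 ^ 10) * (τ₀ + j2 + 2 * j3))) ≤
        D * (10 ^ 46 / M) * (Y * Real.exp (0.3 * (j3 + j2))) := by gcongr
    linarith
  refine (Ex_mono hpt).trans ?_
  rw [Ex_add, Ex_add, Ex_add, Ex_add, Ex_add, Ex_mul, Ex_mul, Ex_mul, Ex_mul]
  obtain ⟨δ, hδ⟩ : ∃ δ, δ = Real.exp (-(1 / 10 ^ 16) * M) := ⟨_, rfl⟩
  have hδ0 : 0 < δ := by rw [hδ]; positivity
  have t1 := Ex_const_le (m3 := m3) (m2 := m2) hN1 hb0.le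
  have t2 := PP_step (by linarith) le_rfl (by norm_num) hτ hq0 le_rfl hq he h2e hPP
  have t2' := PP_step (v := 1 / 4) (by linarith) (by norm_num) (by norm_num) hτ hq0 hq le_rfl he h2e
    hPP
  have t3 := hL' hPP 0.00001 (by norm_num) le_rfl
  have t4 := Ex_crude hN20 (v := 1 / 4) (by norm_num) (by norm_num) c2 c3
  have t4' := Ex_crude hN20 (v := 0.3) (by norm_num) (by norm_num) c2 c3
  have t5 : Real.exp (10 * 0 - (1 / 10 ^ 17)) ≤ 1 - (5 / 10 ^ 18) := by
    have : (10 * 0 - (1 / 10 ^ 17) : ℝ) = -(1 / 10 ^ 17) := by norm_num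
    rw [this]
    exact (exp_neg_le (by norm_num) (by norm_num)).trans (by norm_num)
  have t5' : Real.exp (10 * (1 / 4) - (1 / 10 ^ 17)) ≤ 27 := by
    calc _ ≤ Real.exp (1 + 1 + 1) := Real.exp_le_exp.2 (by norm_num)
      _ = Real.exp 1 * Real.exp 1 * Real.exp 1 := by rw [Real.exp_add, Real.exp_add]
      _ ≤ 3 * 3 * 3 := by
        have : Real.exp 1 ≤ 3 := by linarith [Real.exp_one_lt_d9]
        gcongr
      _ = 27 := by norm_num
  rw [sub_self, mul_zero ((1.7 / 10 ^ 10) : ℝ), Real.exp_zero, one_mul, ← hδ] at t2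
  rw [← hδ] at t2'
  obtain ⟨p, hp⟩ : ∃ p, p = PP M N m3 (2 * m2 + (τ₀ + 1)) e q := ⟨_, rfl⟩
  rw [← hp] at t2 t2' hpp ⊢
  rw [← hΛ] at t3 ⊢
  have s1 := mul_le_mul_of_nonneg_right t5 (add_nonneg hpp hδ0.le)
  have s2 : Real.exp (10 * (1 / 4) - (1 / 10 ^ 17)) * (Real.exp ((1.7 / 10 ^ 10) * (τ₀ + 1 - q)) * p + δ) ≤
      27 * (Y * (p + δ)) := by
    have hYq : Real.exp ((1.7 / 10 ^ 10) * (τ₀ + 1 - q)) ≤ Y := by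
      rw [hY]; exact Real.exp_le_exp.2 (by linarith)
    have : Real.exp ((1.7 / 10 ^ 10) * (τ₀ + 1 - q)) * p + δ ≤ Y * (p + δ) := by
      have := mul_le_mul_of_nonneg_right hYq hpp
      have := mul_le_mul_of_nonneg_right hY1 hδ0.le
      linarith
    have h0 : 0 ≤ Real.exp ((1.7 / 10 ^ 10) * (τ₀ + 1 - q)) * p + δ := by positivity
    exact mul_le_mul t5' this h0 (by norm_num)
  have s3 := mul_le_mul_of_nonneg_left (t2'.trans s2) hD0
  have s4 : D * (27 * (Y * (p + δ))) ≤ (5 / 10 ^ 18) * (p + δ) := by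
    have : D * Y ≤ (1 / 10 ^ 20) := by
      refine hDY.trans ?_
      calc 10 ^ 19 / M * S ≤ 10 ^ 19 / M * ((1 / 10 ^ 39) * M) := by gcongr
        _ = (1 / 10 ^ 20) := by field_simp
    have := mul_le_mul_of_nonneg_right this (add_nonneg hpp hδ0.le)
    have h0 : 0 ≤ p + δ := by positivity
    linarith
  have s5 := base_gain_delta (x := N - 1 / 2) (h := 1 / 2) hB (by linarith) le_rfl
  have e5 : (N : ℝ) - 1 / 2 - 1 / 2 = N - 1 := by ring
  rw [e5, ← hb1, ← hδ] at s5
  obtain ⟨E, hE⟩ : ∃ E, E = Real.exp (10 ^ 90 * N / M) := ⟨_, rfl⟩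
  rw [← hE] at hEN ⊢
  have hE' : Real.exp (10 ^ 90 * ((N : ℝ) - 1) / M) ≤ E := by rw [hE]; gcongr; linarith
  have hbE : b ≤ E / M := by rw [hb1]; unfold base; gcongr
  have hM2 : 0 < 1 / M ^ 2 := by positivity
  have s6 : 10 ^ 80 / M ^ 2 * Real.exp (10 ^ 90 * ((N : ℝ) - 1) / M) *
      Ex N m3 m2 (fun j3 j2 => Real.exp (0.00001 * L' j3 j2)) ≤
      10 ^ 80 / M ^ 2 * E * ((1 - (5 / 10 ^ 10)) * Λ) := by
    have h1 : Real.exp (-(0.0001 * 0.00001)) ≤ 1 - (5 / 10 ^ 10) :=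
      (exp_neg_le (by norm_num) (by norm_num)).trans (by norm_num)
    have h2 : Ex N m3 m2 (fun j3 j2 => Real.exp (0.00001 * L' j3 j2)) ≤ (1 - (5 / 10 ^ 10)) * Λ :=
      t3.trans (by gcongr)
    calc _ ≤ 10 ^ 80 / M ^ 2 * Real.exp (10 ^ 90 * ((N : ℝ) - 1) / M) * ((1 - (5 / 10 ^ 10)) * Λ) := by gcongr
      _ ≤ _ := by
        have : 0 ≤ (1 - (5 / 10 ^ 10)) * Λ := mul_nonneg (by norm_num) hΛ0.le
        gcongr
  have s7 : D * b * Ex N m3 m2 (fun j3 j2 => Real.exp (1 / 4 * (j3 + j2))) ≤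
      1 / M ^ 2 * E * Λ * 10 ^ 20 := by
    calc _ ≤ D * b * 3 := by gcongr
      _ ≤ 10 ^ 19 / M * S * (E / M) * 3 := by gcongr
      _ ≤ 10 ^ 19 / M * Λ * (E / M) * 3 := by gcongr
      _ = 1 / M ^ 2 * E * Λ * (3 * 10 ^ 19) := by field_simp
      _ ≤ _ := by gcongr; norm_num
  have s8 : D * (10 ^ 46 / M) * Y * Ex N m3 m2 (fun j3 j2 => Real.exp (0.3 * (j3 + j2))) ≤
      1 / M ^ 2 * E * Λ * 10 ^ 66 := by
    calc _ ≤ D * (10 ^ 46 / M) * Y * 3 := by gcongr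
      _ = (D * Y) * (10 ^ 46 / M) * 3 := by ring
      _ ≤ 10 ^ 19 / M * S * (10 ^ 46 / M) * 3 := by gcongr
      _ ≤ 10 ^ 19 / M * Λ * (10 ^ 46 / M) * 3 := by gcongr
      _ = 1 / M ^ 2 * 1 * Λ * (3 * 10 ^ 65) := by field_simp
      _ ≤ _ := by gcongr; norm_num
  have s9 : 0 ≤ 1 / M ^ 2 * E * Λ := by positivity
  have s10 : 10 ^ 80 / M ^ 2 * E * ((1 - (5 / 10 ^ 10)) * Λ) =
      1 / M ^ 2 * E * Λ * 10 ^ 80 - 1 / M ^ 2 * E * Λ * (5 * 10 ^ 70) := by ring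
  have s11 : 10 ^ 80 / M ^ 2 * E * Λ = 1 / M ^ 2 * E * Λ * 10 ^ 80 := by ring
  rw [s10] at s6
  rw [s11]
  linarith

end Steps

/-! ### The bounding functions -/

/-- The weight of an active slot planned true, relative to one planned false. -/
noncomputable def bb (x : ℝ) : ℝ := min (bf x) 4

/-- The weighted number of touched slots. -/
noncomputable def ell (M : ℝ) (N q1 q0 k : ℕ) : ℝ := bb (N / M) * q1 + q0 + 0.0001 * k

/-- The bound for the failure probability of a formula without touched slots. -/
noncomputable def W0 (M : ℝ) (N m3 m2 : ℕ) : ℝ := base M N + PP M N m3 (2 * m2) (2 * m2) 0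

/-- The bound for a formula with a plan for the touched slots. A single collision may cause failure,
whence the error term `O(1 / M)`. -/
noncomputable def W1 (M : ℝ) (N m3 m2 q1 q0 k : ℕ) : ℝ :=
  base M N + PP M N m3 (2 * m2 + (q1 + q0 + k)) (2 * m2 + k) (q1 + q0) +
    10 ^ 45 / M * Real.exp ((4 / 10 ^ 11) * ell M N q1 q0 k)

/-- The bound for a formula with a plan for the touched slots and a flexible set of admissible
values. Here two collisions are needed for failure, whence the error term `O(1 / M ^ 2)`. -/
noncomputable def W2 (M : ℝ) (N m3 m2 q1 q0 k : ℕ) : ℝ :=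
  base M N + PP M N m3 (2 * m2 + (q1 + q0 + k)) (2 * m2 + k) (q1 + q0) +
    10 ^ 80 / M ^ 2 * Real.exp (10 ^ 90 * N / M) * Real.exp (0.00001 * ell M N q1 q0 k)

/-- The variant of `W2` for states with an active slot. The half step spent in `base` pays for
opening a clause. -/
noncomputable def Wa (M : ℝ) (N m3 m2 q1 q0 k : ℕ) : ℝ :=
  base M (N - 1 / 2) + PP M N m3 (2 * m2 + (q1 + q0 + k)) (2 * m2 + k) (q1 + q0) +
    10 ^ 80 / M ^ 2 * Real.exp (10 ^ 90 * N / M) * Real.exp (0.00001 * ell M N q1 q0 k)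

/-- The bound for the probability that two given ones of `τ` touched slots are connected and the
formula fails nevertheless. -/
noncomputable def RR (M : ℝ) (N m3 m2 τ : ℕ) : ℝ :=
  4 / N * (base M N + PP M N m3 (2 * m2 + τ) (2 * m2) τ +
    (10 ^ 45 / M + 10 ^ 22 / N) * Real.exp ((1.7 / 10 ^ 10) * τ))

theorem one_le_bb (x : ℝ) : 1 ≤ bb x := le_min (one_le_bf x) (by norm_num)

theorem bb_le (x : ℝ) : bb x ≤ 4 := min_le_right _ _

theorem bb_eq {M N : ℝ} (hM : 0 < M) (hN : 0 < N) (hNM : N ≤ M) : bb (N / M) = bf (N / M) :=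
  min_eq_left (bf_le (by positivity) ((div_le_one hM).2 hNM))

theorem bb_mono {M N : ℝ} (hM : 0 < M) (hN : 1 < N) : bb ((N - 1) / M) ≤ bb (N / M) := by
  have : 0 < N - 1 := by linarith
  refine min_le_min_right _ (bf_mono (by positivity) ?_)
  gcongr
  linarith

theorem ell_nonneg (M : ℝ) (N q1 q0 k : ℕ) : 0 ≤ ell M N q1 q0 k := by
  have := one_le_bb (N / M)
  unfold ell
  positivity

theorem ell_ge (M : ℝ) (N q1 q0 k : ℕ) : 0.0001 * ((q1 : ℝ) + q0 + k) ≤ ell M N q1 q0 k := by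
  have := one_le_bb (N / M)
  unfold ell
  have h1 : (0 : ℝ) ≤ q1 := Nat.cast_nonneg _
  have h0 : (0 : ℝ) ≤ q0 := Nat.cast_nonneg _
  nlinarith

theorem ell_le (M : ℝ) (N q1 q0 k : ℕ) : ell M N q1 q0 k ≤ 4 * (q1 + q0 + k) := by
  have := bb_le (N / M)
  unfold ell
  have h1 : (0 : ℝ) ≤ q1 := Nat.cast_nonneg _
  have h0 : (0 : ℝ) ≤ q0 := Nat.cast_nonneg _
  have hk : (0 : ℝ) ≤ k := Nat.cast_nonneg _
  nlinarith

theorem ell_true {M a e d q : ℝ} {N m3 m2 : ℕ} (hM : 10 ^ 22 ≤ M) (q1 q0 k : ℕ) (hq : 0 ≤ q)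
    (hd : 2 * (m2 : ℝ) ≤ d) (he : 2 * (m2 : ℝ) ≤ e)
    (h : PP M N m3 d e q < 1) (ha : (4 / 10 ^ 11) ≤ a) (ha' : a ≤ 0.00001) :
    Ex N m3 m2 (fun j3 j2 => Real.exp (a * ell M (N - 1) q1 (q0 + j2 + 2 * j3) k)) ≤
      Real.exp (-(0.0001 * a)) * Real.exp (a * ell M N (q1 + 1) q0 k) := by
  have hM0 : 0 < M := by linarith
  obtain ⟨hN, hNM, c2, c3, -, h2⟩ := PP_good hM0 (Nat.cast_nonneg _) (Nat.cast_nonneg _) hq hd he h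
  have hNp : (0 : ℝ) < N := by linarith
  have hN1 : 1 ≤ N := by exact_mod_cast (by linarith : (1 : ℝ) ≤ N)
  rw [← bb_eq hM0 hNp hNM] at h2
  have hd := drift_true (a := a) (b := bb (N / M)) (by linarith) ha ha' c2 c3 h2
  have hbm := bb_mono (N := N) hM0 (by linarith)
  have hpt : ∀ j3 j2 : ℕ, j3 ≤ m3 → j2 ≤ m2 →
      Real.exp (a * ell M (N - 1) q1 (q0 + j2 + 2 * j3) k) ≤
      Real.exp (a * (ell M N (q1 + 1) q0 k - bb (N / M))) * Real.exp (a * (j2 + 2 * j3)) := by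
    intro j3 j2 _ _
    rw [← Real.exp_add, ← mul_add]
    have ha0 : 0 ≤ a := by linarith
    gcongr
    unfold ell
    push_cast [Nat.cast_sub hN1]
    have h1 : (0 : ℝ) ≤ q1 := Nat.cast_nonneg _
    have := mul_le_mul_of_nonneg_right hbm h1
    linarith
  refine (Ex_mono hpt).trans ?_
  rw [Ex_mul]
  refine (mul_le_mul_of_nonneg_left hd (Real.exp_pos _).le).trans ?_
  rw [← Real.exp_add, ← Real.exp_add]
  exact Real.exp_le_exp.2 (by linarith)

theorem ell_false {M a e d q : ℝ} {N m3 m2 : ℕ} (hM : 10 ^ 22 ≤ M) (q1 q0 k : ℕ) (hq : 0 ≤ q)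
    (hd : 2 * (m2 : ℝ) ≤ d) (he : 2 * (m2 : ℝ) ≤ e)
    (h : PP M N m3 d e q < 1) (ha : (4 / 10 ^ 11) ≤ a) (ha' : a ≤ 0.00001) :
    Ex N m3 m2 (fun j3 j2 => Real.exp (a * ell M (N - 1) (q1 + j2) q0 (k + 2 * j3))) ≤
      Real.exp (-(0.0001 * a)) * Real.exp (a * ell M N q1 (q0 + 1) k) := by
  have hM0 : 0 < M := by linarith
  obtain ⟨hN, hNM, c2, c3, h2, -⟩ := PP_good hM0 (Nat.cast_nonneg _) (Nat.cast_nonneg _) hq hd he h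
  have hNp : (0 : ℝ) < N := by linarith
  have hN1 : 1 ≤ N := by exact_mod_cast (by linarith : (1 : ℝ) ≤ N)
  rw [← bb_eq hM0 hNp hNM] at h2
  have hd := drift_false (a := a) (b := bb (N / M)) (by linarith) ha ha' (one_le_bb _) (bb_le _)
    c2 c3 h2
  have hbm := bb_mono (N := N) hM0 (by linarith)
  have hpt : ∀ j3 j2 : ℕ, j3 ≤ m3 → j2 ≤ m2 →
      Real.exp (a * ell M (N - 1) (q1 + j2) q0 (k + 2 * j3)) ≤
      Real.exp (a * (ell M N q1 (q0 + 1) k - 1)) *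
        Real.exp (a * (bb (N / M) * j2 + 0.0001 * (2 * j3))) := by
    intro j3 j2 _ _
    rw [← Real.exp_add, ← mul_add]
    have ha0 : 0 ≤ a := by linarith
    gcongr
    unfold ell
    push_cast [Nat.cast_sub hN1]
    have h1 : (0 : ℝ) ≤ (q1 : ℝ) + j2 := by positivity
    have := mul_le_mul_of_nonneg_right hbm h1
    linarith
  refine (Ex_mono hpt).trans ?_
  rw [Ex_mul]
  refine (mul_le_mul_of_nonneg_left hd (Real.exp_pos _).le).trans ?_
  rw [← Real.exp_add, ← Real.exp_add]
  exact Real.exp_le_exp.2 (by linarith)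

section Super
variable {M : ℝ}

theorem W1_good (hM : 0 < M) {N m3 m2 q1 q0 k : ℕ} (h : W1 M N m3 m2 q1 q0 k < 1) :
    PP M N m3 (2 * m2 + (q1 + q0 + k)) (2 * m2 + k) (q1 + q0) < 1 := by
  have h1 := base_pos hM N
  have h2 : 0 < 10 ^ 45 / M * Real.exp ((4 / 10 ^ 11) * ell M N q1 q0 k) := by positivity
  unfold W1 at h
  linarith

theorem Wa_good (hM : 0 < M) {N m3 m2 q1 q0 k : ℕ} (h : Wa M N m3 m2 q1 q0 k < 1) :
    PP M N m3 (2 * m2 + (q1 + q0 + k)) (2 * m2 + k) (q1 + q0) < 1 := by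
  have h1 := base_pos hM ((N : ℝ) - 1 / 2)
  have h2 : 0 < 10 ^ 80 / M ^ 2 * Real.exp (10 ^ 90 * N / M) * Real.exp (0.00001 * ell M N q1 q0 k) := by
    positivity
  unfold Wa at h
  linarith

/-- The consequences of `PP_good` for the numbers of clauses. -/
theorem state_good (hM : 10 ^ 22 ≤ M) {N m3 m2 q1 q0 k : ℕ}
    (h : PP M N m3 (2 * m2 + (q1 + q0 + k)) (2 * m2 + k) (q1 + q0) < 1) :
    (10 ^ 20 : ℝ) ≤ N ∧ 1 ≤ N ∧ 2 * (m2 : ℝ) ≤ 0.58 * N := by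
  have h1 : (0 : ℝ) ≤ q1 := Nat.cast_nonneg _
  have h0 : (0 : ℝ) ≤ q0 := Nat.cast_nonneg _
  have hk : (0 : ℝ) ≤ k := Nat.cast_nonneg _
  obtain ⟨hN, -, c2, -, -, -⟩ := PP_good (by linarith) (Nat.cast_nonneg _) (Nat.cast_nonneg m2)
    (by linarith) (by linarith) (by linarith) h
  have hN20 : (10 ^ 20 : ℝ) ≤ N := by linarith
  refine ⟨hN20, by exact_mod_cast (by linarith : (1 : ℝ) ≤ N), ?_⟩
  rwa [div_le_iff₀ (by linarith)] at c2

theorem step1t' (hB : Big M) (N m3 m2 q1 q0 k : ℕ) (hW : W1 M N m3 m2 (q1 + 1) q0 k < 1) :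
    Ex N m3 m2 (fun j3 j2 => W1 M (N - 1) (m3 - j3) (m2 - j2) q1 (q0 + j2 + 2 * j3) k +
      2 * j3 * ((q1 + q0 + k + (j2 + 2 * j3) : ℕ) : ℝ) * (4 / ((N - 1 : ℕ) : ℝ))) ≤
    W1 M N m3 m2 (q1 + 1) q0 k := by
  have hM := hB.1
  have hM0 : 0 < M := by linarith
  have hPP := W1_good hM0 hW
  obtain ⟨hN20, hN1, -⟩ := state_good (by linarith) hPP
  have h1 : (0 : ℝ) ≤ q1 := Nat.cast_nonneg _
  have h0 : (0 : ℝ) ≤ q0 := Nat.cast_nonneg _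
  have hk : (0 : ℝ) ≤ k := Nat.cast_nonneg _
  have hℓ := ell_ge M N (q1 + 1) q0 k
  have ed : (2 * (m2 : ℝ) + (((q1 + 1 : ℕ) : ℝ) + q0 + k)) = 2 * m2 + ((q1 + q0 + k : ℝ) + 1) := by
    push_cast; ring
  have hW' := hW
  unfold W1 at hW' ⊢
  rw [ed] at hPP hW' ⊢
  push_cast at hPP hℓ
  refine le_trans (le_of_eq ?_) (step1_gen (τ₀ := q1 + q0 + k)
    (L' := fun j3 j2 => ell M (N - 1) q1 (q0 + j2 + 2 * j3) k)
    (P' := fun j3 j2 => PP M ((N - 1 : ℕ) : ℝ) ((m3 - j3 : ℕ) : ℝ)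
      (2 * ((m2 - j2 : ℕ) : ℝ) + ((q1 : ℝ) + ((q0 + j2 + 2 * j3 : ℕ) : ℝ) + k))
      (2 * ((m2 - j2 : ℕ) : ℝ) + k) (q1 + ((q0 + j2 + 2 * j3 : ℕ) : ℝ)))
    hB (by linarith) (by positivity) (by push_cast; linarith) (by linarith) (by linarith)
    (by linarith) ?_ ?_ hW')
  · congr 1
    funext j3 j2
    push_cast [Nat.cast_sub hN1]
    ring
  · intro h a ha ha'
    exact ell_true (by linarith) q1 q0 k (by positivity) (by linarith) (by linarith) h ha ha'
  · intro j3 j2 h3 h2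
    push_cast [Nat.cast_sub hN1, Nat.cast_sub h3, Nat.cast_sub h2]
    refine PP_mono hM0.le (by linarith) (by linarith) ?_ (by linarith)
    have : (0 : ℝ) ≤ j3 := Nat.cast_nonneg _
    have : (0 : ℝ) ≤ j2 := Nat.cast_nonneg _
    linarith

theorem step1f' (hB : Big M) (N m3 m2 q1 q0 k : ℕ) (hW : W1 M N m3 m2 q1 (q0 + 1) k < 1) :
    Ex N m3 m2 (fun j3 j2 => W1 M (N - 1) (m3 - j3) (m2 - j2) (q1 + j2) q0 (k + 2 * j3) +
      2 * j3 * ((q1 + q0 + k + (j2 + 2 * j3) : ℕ) : ℝ) * (4 / ((N - 1 : ℕ) : ℝ))) ≤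
    W1 M N m3 m2 q1 (q0 + 1) k := by
  have hM := hB.1
  have hM0 : 0 < M := by linarith
  have hPP := W1_good hM0 hW
  obtain ⟨hN20, hN1, -⟩ := state_good (by linarith) hPP
  have h1 : (0 : ℝ) ≤ q1 := Nat.cast_nonneg _
  have h0 : (0 : ℝ) ≤ q0 := Nat.cast_nonneg _
  have hk : (0 : ℝ) ≤ k := Nat.cast_nonneg _
  have hℓ := ell_ge M N q1 (q0 + 1) k
  have ed : (2 * (m2 : ℝ) + ((q1 : ℝ) + ((q0 + 1 : ℕ) : ℝ) + k)) =
      2 * m2 + ((q1 + q0 + k : ℝ) + 1) := by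
    push_cast; ring
  have hW' := hW
  unfold W1 at hW' ⊢
  rw [ed] at hPP hW' ⊢
  push_cast at hPP hℓ
  refine le_trans (le_of_eq ?_) (step1_gen (τ₀ := q1 + q0 + k)
    (L' := fun j3 j2 => ell M (N - 1) (q1 + j2) q0 (k + 2 * j3))
    (P' := fun j3 j2 => PP M ((N - 1 : ℕ) : ℝ) ((m3 - j3 : ℕ) : ℝ)
      (2 * ((m2 - j2 : ℕ) : ℝ) + (((q1 + j2 : ℕ) : ℝ) + q0 + ((k + 2 * j3 : ℕ) : ℝ)))
      (2 * ((m2 - j2 : ℕ) : ℝ) + ((k + 2 * j3 : ℕ) : ℝ)) (((q1 + j2 : ℕ) : ℝ) + q0))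
    hB (by linarith) (by positivity) (by push_cast; linarith) (by linarith) (by linarith)
    (by linarith) ?_ ?_ hW')
  · congr 1
    funext j3 j2
    push_cast [Nat.cast_sub hN1]
    ring
  · intro h a ha ha'
    exact ell_false (by linarith) q1 q0 k (by positivity) (by linarith) (by linarith) h ha ha'
  · intro j3 j2 h3 h2
    have : (0 : ℝ) ≤ j3 := Nat.cast_nonneg _
    have : (0 : ℝ) ≤ j2 := Nat.cast_nonneg _
    push_cast [Nat.cast_sub hN1, Nat.cast_sub h3, Nat.cast_sub h2]
    refine PP_mono hM0.le (by linarith) (by linarith) ?_ (by linarith)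
    linarith

theorem step2t' (hB : Big M) (N m3 m2 q1 q0 k : ℕ) (hW : Wa M N m3 m2 (q1 + 1) q0 k < 1) :
    Ex N m3 m2 (fun j3 j2 => W2 M (N - 1) (m3 - j3) (m2 - j2) q1 (q0 + j2 + 2 * j3) k +
      2 * j3 * ((q1 + q0 + k + (j2 + 2 * j3) : ℕ) : ℝ) *
        RR M (N - 1) (m3 - j3) (m2 - j2) (q1 + q0 + k + (j2 + 2 * j3))) ≤
    Wa M N m3 m2 (q1 + 1) q0 k := by
  have hM := hB.1
  have hM0 : 0 < M := by linarith
  have hPP := Wa_good hM0 hW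
  obtain ⟨hN20, hN1, -⟩ := state_good (by linarith) hPP
  have h1 : (0 : ℝ) ≤ q1 := Nat.cast_nonneg _
  have h0 : (0 : ℝ) ≤ q0 := Nat.cast_nonneg _
  have hk : (0 : ℝ) ≤ k := Nat.cast_nonneg _
  have hℓ := ell_ge M N (q1 + 1) q0 k
  have ed : (2 * (m2 : ℝ) + (((q1 + 1 : ℕ) : ℝ) + q0 + k)) = 2 * m2 + ((q1 + q0 + k : ℝ) + 1) := by
    push_cast; ring
  have hW' := hW
  unfold Wa at hW' ⊢
  unfold W2 RR
  rw [ed] at hPP hW' ⊢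
  push_cast at hPP hℓ
  refine le_trans (le_of_eq ?_) (step2_gen (τ₀ := q1 + q0 + k)
    (L' := fun j3 j2 => ell M (N - 1) q1 (q0 + j2 + 2 * j3) k)
    (P' := fun j3 j2 => PP M ((N - 1 : ℕ) : ℝ) ((m3 - j3 : ℕ) : ℝ)
      (2 * ((m2 - j2 : ℕ) : ℝ) + ((q1 : ℝ) + ((q0 + j2 + 2 * j3 : ℕ) : ℝ) + k))
      (2 * ((m2 - j2 : ℕ) : ℝ) + k) (q1 + ((q0 + j2 + 2 * j3 : ℕ) : ℝ)))
    (P'' := fun j3 j2 => PP M ((N - 1 : ℕ) : ℝ) ((m3 - j3 : ℕ) : ℝ)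
      (2 * ((m2 - j2 : ℕ) : ℝ) + ((q1 + q0 + k + (j2 + 2 * j3) : ℕ) : ℝ))
      (2 * ((m2 - j2 : ℕ) : ℝ)) ((q1 + q0 + k + (j2 + 2 * j3) : ℕ) : ℝ))
    hB (by linarith) (by positivity) (by push_cast; linarith) (by linarith) (by linarith)
    (by linarith) ?_ ?_ ?_ (fun _ _ => PP_nonneg _ _ _ _ _ _) hW')
  · congr 1
    funext j3 j2
    have e1 : ((q1 + q0 + k + (j2 + 2 * j3) : ℕ) : ℝ) = q1 + q0 + k + j2 + 2 * j3 := by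
      push_cast; ring
    simp only [e1, Nat.cast_sub hN1, Nat.cast_one]
  · intro h a ha ha'
    exact ell_true (by linarith) q1 q0 k (by positivity) (by linarith) (by linarith) h ha ha'
  · intro j3 j2 h3 h2
    have : (0 : ℝ) ≤ j3 := Nat.cast_nonneg _
    have : (0 : ℝ) ≤ j2 := Nat.cast_nonneg _
    push_cast [Nat.cast_sub hN1, Nat.cast_sub h3, Nat.cast_sub h2]
    exact PP_mono hM0.le (by linarith) (by linarith) (by linarith) (by linarith)
  · intro j3 j2 h3 h2
    have : (0 : ℝ) ≤ j3 := Nat.cast_nonneg _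
    have : (0 : ℝ) ≤ j2 := Nat.cast_nonneg _
    push_cast [Nat.cast_sub hN1, Nat.cast_sub h3, Nat.cast_sub h2]
    exact PP_mono hM0.le (by linarith) (by linarith) (by linarith) (by linarith)

theorem step2f' (hB : Big M) (N m3 m2 q1 q0 k : ℕ) (hW : Wa M N m3 m2 q1 (q0 + 1) k < 1) :
    Ex N m3 m2 (fun j3 j2 => W2 M (N - 1) (m3 - j3) (m2 - j2) (q1 + j2) q0 (k + 2 * j3) +
      2 * j3 * ((q1 + q0 + k + (j2 + 2 * j3) : ℕ) : ℝ) *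
        RR M (N - 1) (m3 - j3) (m2 - j2) (q1 + q0 + k + (j2 + 2 * j3))) ≤
    Wa M N m3 m2 q1 (q0 + 1) k := by
  have hM := hB.1
  have hM0 : 0 < M := by linarith
  have hPP := Wa_good hM0 hW
  obtain ⟨hN20, hN1, -⟩ := state_good (by linarith) hPP
  have h1 : (0 : ℝ) ≤ q1 := Nat.cast_nonneg _
  have h0 : (0 : ℝ) ≤ q0 := Nat.cast_nonneg _
  have hk : (0 : ℝ) ≤ k := Nat.cast_nonneg _
  have hℓ := ell_ge M N q1 (q0 + 1) k
  have ed : (2 * (m2 : ℝ) + ((q1 : ℝ) + ((q0 + 1 : ℕ) : ℝ) + k)) =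
      2 * m2 + ((q1 + q0 + k : ℝ) + 1) := by
    push_cast; ring
  have hW' := hW
  unfold Wa at hW' ⊢
  unfold W2 RR
  rw [ed] at hPP hW' ⊢
  push_cast at hPP hℓ
  refine le_trans (le_of_eq ?_) (step2_gen (τ₀ := q1 + q0 + k)
    (L' := fun j3 j2 => ell M (N - 1) (q1 + j2) q0 (k + 2 * j3))
    (P' := fun j3 j2 => PP M ((N - 1 : ℕ) : ℝ) ((m3 - j3 : ℕ) : ℝ)
      (2 * ((m2 - j2 : ℕ) : ℝ) + (((q1 + j2 : ℕ) : ℝ) + q0 + ((k + 2 * j3 : ℕ) : ℝ)))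
      (2 * ((m2 - j2 : ℕ) : ℝ) + ((k + 2 * j3 : ℕ) : ℝ)) (((q1 + j2 : ℕ) : ℝ) + q0))
    (P'' := fun j3 j2 => PP M ((N - 1 : ℕ) : ℝ) ((m3 - j3 : ℕ) : ℝ)
      (2 * ((m2 - j2 : ℕ) : ℝ) + ((q1 + q0 + k + (j2 + 2 * j3) : ℕ) : ℝ))
      (2 * ((m2 - j2 : ℕ) : ℝ)) ((q1 + q0 + k + (j2 + 2 * j3) : ℕ) : ℝ))
    hB (by linarith) (by positivity) (by push_cast; linarith) (by linarith) (by linarith)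
    (by linarith) ?_ ?_ ?_ (fun _ _ => PP_nonneg _ _ _ _ _ _) hW')
  · congr 1
    funext j3 j2
    have e1 : ((q1 + q0 + k + (j2 + 2 * j3) : ℕ) : ℝ) = q1 + q0 + k + j2 + 2 * j3 := by
      push_cast; ring
    simp only [e1, Nat.cast_sub hN1, Nat.cast_one]
  · intro h a ha ha'
    exact ell_false (by linarith) q1 q0 k (by positivity) (by linarith) (by linarith) h ha ha'
  · intro j3 j2 h3 h2
    have : (0 : ℝ) ≤ j3 := Nat.cast_nonneg _
    have : (0 : ℝ) ≤ j2 := Nat.cast_nonneg _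
    push_cast [Nat.cast_sub hN1, Nat.cast_sub h3, Nat.cast_sub h2]
    exact PP_mono hM0.le (by linarith) (by linarith) (by linarith) (by linarith)
  · intro j3 j2 h3 h2
    have : (0 : ℝ) ≤ j3 := Nat.cast_nonneg _
    have : (0 : ℝ) ≤ j2 := Nat.cast_nonneg _
    push_cast [Nat.cast_sub hN1, Nat.cast_sub h3, Nat.cast_sub h2]
    exact PP_mono hM0.le (by linarith) (by linarith) (by linarith) (by linarith)

end Super

/-! ### Verification of the bounding functions -/

section Super
variable {M : ℝ}

theorem W0_nonneg (hM : 0 < M) (N m3 m2 : ℕ) : 0 ≤ W0 M N m3 m2 :=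
  add_nonneg (base_pos hM _).le (PP_nonneg _ _ _ _ _ _)

theorem W1_nonneg (hM : 0 < M) (N m3 m2 q1 q0 k : ℕ) : 0 ≤ W1 M N m3 m2 q1 q0 k :=
  add_nonneg (add_nonneg (base_pos hM _).le (PP_nonneg _ _ _ _ _ _)) (by positivity)

theorem W2_nonneg (hM : 0 < M) (N m3 m2 q1 q0 k : ℕ) : 0 ≤ W2 M N m3 m2 q1 q0 k :=
  add_nonneg (add_nonneg (base_pos hM _).le (PP_nonneg _ _ _ _ _ _)) (by positivity)

theorem Wa_nonneg (hM : 0 < M) (N m3 m2 q1 q0 k : ℕ) : 0 ≤ Wa M N m3 m2 q1 q0 k :=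
  add_nonneg (add_nonneg (base_pos hM _).le (PP_nonneg _ _ _ _ _ _)) (by positivity)

theorem RR_nonneg (hM : 0 < M) (N m3 m2 τ : ℕ) : 0 ≤ RR M N m3 m2 τ :=
  mul_nonneg (by positivity)
    (add_nonneg (add_nonneg (base_pos hM _).le (PP_nonneg _ _ _ _ _ _)) (by positivity))

theorem ell_wake (M : ℝ) (N k : ℕ) : ell M N 0 0 k ≤ ell M N 0 0 (k + 2) := by
  unfold ell
  push_cast
  linarith

theorem PP_wake (M : ℝ) (N m3 m2 k : ℕ) :
    PP M N m3 (2 * ((m2 + 1 : ℕ) : ℝ) + (((0 : ℕ) : ℝ) + ((0 : ℕ) : ℝ) + k))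
      (2 * ((m2 + 1 : ℕ) : ℝ) + k) (((0 : ℕ) : ℝ) + ((0 : ℕ) : ℝ)) =
    PP M N m3 (2 * (m2 : ℝ) + (((0 : ℕ) : ℝ) + ((0 : ℕ) : ℝ) + ((k + 2 : ℕ) : ℝ)))
      (2 * (m2 : ℝ) + ((k + 2 : ℕ) : ℝ)) (((0 : ℕ) : ℝ) + ((0 : ℕ) : ℝ)) := by
  congr 1 <;> push_cast <;> ring

/-- The potential depends on the number of active slots at most through a factor. -/
theorem PP_split (M N m3 d e τ : ℝ) : ∃ A B : ℝ, 0 ≤ A ∧ 0 ≤ B ∧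
    A + B * Real.exp ((1.7 / 10 ^ 10) * τ) = PP M N m3 d e τ ∧
    (0 ≤ M → 0 ≤ N → ∀ d' e' q : ℝ, d' ≤ d → e' ≤ e →
      PP M N m3 d' e' q ≤ A + B * Real.exp ((1.7 / 10 ^ 10) * q)) := by
  by_cases h : N < 0.24 * M ∧ ¬ M < N
  · have e1 : ∀ q, Pc M N m3 q = Pc M N m3 0 * Real.exp ((1.7 / 10 ^ 10) * q) := by
      intro q
      unfold Pc
      rw [← Real.exp_add]
      congr 1; ring
    have e2 : ∀ d e q, PP M N m3 d e q = Pc M N m3 q + Pd M m3 e := by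
      intro d e q
      unfold PP
      rw [if_neg h.2, if_neg (not_le.2 h.1)]
    refine ⟨Pd M m3 e, Pc M N m3 0, Pd_nonneg _ _ _, (Real.exp_pos _).le, ?_, ?_⟩
    · rw [e2, e1 τ]; ring
    · intro _ _ d' e' q _ he
      rw [e2, e1 q]
      have := Pd_mono (M := M) (m3 := m3) he
      linarith
  · refine ⟨PP M N m3 d e τ, 0, PP_nonneg _ _ _ _ _ _, le_rfl, by ring, ?_⟩
    intro hM hN d' e' q hd _
    rw [zero_mul, add_zero]
    unfold PP
    split_ifs with h1 h2
    · rfl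
    · unfold Pa; gcongr
    · exact absurd ⟨not_le.1 h2, h1⟩ h

/-- The geometric bound on `W1` that is fed into `walk`. -/
theorem hR' (hB : Big M) (N m3 m2 τ : ℕ) (hN : 1 ≤ N) :
    ∃ A0 B0 y : ℝ, 0 ≤ A0 ∧ 0 ≤ B0 ∧ 1 ≤ y ∧
    y ≤ 1.2 ∧ (∀ m2' q1 q0 : ℕ, m2' ≤ m2 → 1 ≤ q1 + q0 → 2 * m2' + (q1 + q0) ≤ 2 * m2 + τ →
      W1 M N m3 m2' q1 q0 0 + ((q1 + q0 : ℕ) : ℝ) ^ 2 * (4 / N) ≤ A0 + B0 * y ^ (q1 + q0)) ∧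
    4 / N * (A0 + B0 * y ^ τ) ≤ RR M N m3 m2 τ := by
  have hM := hB.1
  have hM0 : 0 < M := by linarith
  have hN0 : (0 : ℝ) < N := by exact_mod_cast hN
  obtain ⟨A, B, hA, hB', heq, hle⟩ := PP_split M N m3 (2 * m2 + τ) (2 * m2) τ
  have hy : ∀ t : ℕ, Real.exp (1.7 / 10 ^ 10) ^ t = Real.exp ((1.7 / 10 ^ 10) * t) := by
    intro t; rw [← Real.exp_nat_mul, mul_comm]
  have hb := base_pos hM0 N
  refine ⟨base M N + A, B + 10 ^ 45 / M + 10 ^ 22 / N, Real.exp (1.7 / 10 ^ 10), by positivity, by positivity,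
    Real.one_le_exp (by norm_num), ?_, ?_, ?_⟩
  · have h := Real.exp_bound' (x := (1.7 / 10 ^ 10)) (by norm_num) (by norm_num) (n := 1) (by norm_num)
    refine h.trans ?_
    norm_num [Finset.sum_range_succ, Nat.factorial]
  · intro m2' q1 q0 hm hq1 hs
    rw [hy]
    have hm' : (m2' : ℝ) ≤ m2 := by exact_mod_cast hm
    have hs' : 2 * (m2' : ℝ) + (q1 + q0) ≤ 2 * m2 + τ := by exact_mod_cast hs
    have h1 := hle hM0.le hN0.le (2 * m2' + (q1 + q0 + ((0 : ℕ) : ℝ))) (2 * m2' + ((0 : ℕ) : ℝ))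
      (q1 + q0) (by push_cast; linarith) (by push_cast; linarith)
    have h2 := ell_le M N q1 q0 0
    unfold W1
    push_cast at h1 h2 ⊢
    obtain ⟨q, hq⟩ : ∃ q : ℝ, q = q1 + q0 := ⟨_, rfl⟩
    have hq0 : 0 ≤ q := by rw [hq]; positivity
    rw [add_zero, ← hq] at h2
    have h3 : Real.exp ((4 / 10 ^ 11) * ell M N q1 q0 0) ≤ Real.exp ((1.7 / 10 ^ 10) * q) :=
      Real.exp_le_exp.2 (by linarith)
    have h4 : q ^ 2 * 4 ≤ 10 ^ 22 * Real.exp ((1.7 / 10 ^ 10) * q) := by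
      have := Real.quadratic_le_exp_of_nonneg (x := (1.7 / 10 ^ 10) * q) (by positivity)
      nlinarith
    have h5 : q ^ 2 * (4 / N) ≤ 10 ^ 22 / N * Real.exp ((1.7 / 10 ^ 10) * q) := by
      calc q ^ 2 * (4 / N) = q ^ 2 * 4 / N := by ring
        _ ≤ 10 ^ 22 * Real.exp ((1.7 / 10 ^ 10) * q) / N := by gcongr
        _ = _ := by ring
    have h6 : 10 ^ 45 / M * Real.exp ((4 / 10 ^ 11) * ell M N q1 q0 0) ≤
      10 ^ 45 / M * Real.exp ((1.7 / 10 ^ 10) * q) := by gcongr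
    rw [← hq] at h1 ⊢
    linarith
  · rw [hy]
    unfold RR
    rw [← heq]
    refine le_of_eq ?_
    ring

/-- Opening a clause costs less than what `base` gains by half a step. -/
theorem open_gain (hB : Big M) {x Λ : ℝ} (hΛ : Λ ≤ 12) :
    base M (x - 1 / 2) + 10 ^ 80 / M ^ 2 * Real.exp (10 ^ 90 * x / M) * Real.exp (0.00001 * Λ) +
      10 ^ 80 / M ^ 2 * Real.exp (10 ^ 90 * x / M) ≤ base M x := by
  have hM := hB.1
  have hM0 : 0 < M := by linarith
  have h := base_gain hM0 x (1 / 2)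
  obtain ⟨E, hE⟩ : ∃ E, E = Real.exp (10 ^ 90 * x / M) := ⟨_, rfl⟩
  have hE0 : 0 < E := by rw [hE]; positivity
  have h1 : E / M * (1 / 2) ≤ base M (x - 1 / 2) := by
    have e : 10 ^ 90 * (x - 1 / 2) / M = 10 ^ 90 * x / M + -(5 * 10 ^ 89 / M) := by ring
    unfold base
    rw [e, Real.exp_add, ← hE]
    have h2 := Real.add_one_le_exp (-(5 * 10 ^ 89 / M))
    have h3 : 5 * 10 ^ 89 / M ≤ 1 / 2 := by rw [div_le_iff₀ hM0]; linarith
    have h4 : 1 / 2 ≤ Real.exp (-(5 * 10 ^ 89 / M)) := by linarith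
    calc E / M * (1 / 2) = E * (1 / 2) / M := by ring
      _ ≤ _ := by gcongr
  have h2 : E / M * (1 / 2) * (10 ^ 90 * (1 / 2) / M) ≤ base M (x - 1 / 2) * (10 ^ 90 * (1 / 2) / M) := by
    gcongr
  have h3 : Real.exp (0.00001 * Λ) ≤ 3 := by
    calc Real.exp (0.00001 * Λ) ≤ Real.exp 1 := Real.exp_le_exp.2 (by linarith)
      _ ≤ 3 := by linarith [Real.exp_one_lt_d9]
  rw [← hE]
  have h4 : 10 ^ 80 / M ^ 2 * E * Real.exp (0.00001 * Λ) ≤ 10 ^ 80 / M ^ 2 * E * 3 := by gcongr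
  have h5 : E / M * (1 / 2) * (10 ^ 90 * (1 / 2) / M) = E / M ^ 2 * (2.5 * 10 ^ 89) := by ring
  have h6 : 10 ^ 80 / M ^ 2 * E = E / M ^ 2 * 10 ^ 80 := by ring
  have h7 : 0 < E / M ^ 2 := by positivity
  rw [h6] at h4 ⊢
  linarith

/-- Removing a three-clause compensates for three new active slots, unless there is an xor and
many variables are left. -/
theorem PP_open (hB : Big M) {N m3 m2 : ℕ} (h3 : 1 ≤ m3)
    (h : PP M N m3 (2 * m2) (2 * m2) 0 < 1) (hm : (N : ℝ) < 0.24 * M ∨ m2 = 0) :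
    (1 + 36 / N) * PP M N (m3 - 1) (2 * m2 + 3) (2 * m2) 3 ≤
      PP M N m3 (2 * m2) (2 * m2) 0 + 1 / M ^ 2 := by
  have hM := hB.1
  have hM0 : 0 < M := by linarith
  obtain ⟨hN, hNM, -, -, -, -⟩ := PP_good hM0 (Nat.cast_nonneg m3) (Nat.cast_nonneg m2) le_rfl
    le_rfl le_rfl h
  have hN0 : (0 : ℝ) < N := by linarith
  have h36 : 36 / (N : ℝ) ≤ (1 / 10 ^ 15) := by rw [div_le_iff₀ hN0]; linarith
  have hf : 1 + 36 / (N : ℝ) ≤ Real.exp (1 / 10 ^ 15) := by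
    have := Real.add_one_le_exp ((1 / 10 ^ 15) : ℝ)
    linarith
  have h1 : (1 : ℝ) ≤ m3 := by exact_mod_cast h3
  have hM2 : 0 < 1 / M ^ 2 := by positivity
  unfold PP at h ⊢
  rw [if_neg (not_lt.2 hNM)] at h ⊢
  by_cases hp : 0.24 * M ≤ N
  · rw [if_pos hp] at h
    rw [if_neg (not_lt.2 hNM), if_pos hp, if_pos hp]
    have hm0 : m2 = 0 := hm.resolve_left (not_lt.2 hp)
    subst hm0
    have hy := Yf_nonneg (x := N / M) (by rw [le_div_iff₀ hM0]; exact hp)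
      ((div_le_one hM0).2 hNM)
    have hr : M / N ≤ 4.2 := by rw [div_le_iff₀ hN0]; linarith
    have hr1 : 1 ≤ M / N := by rw [le_div_iff₀ hN0]; linarith
    have ha : (1 + 36 / (N : ℝ)) * Pa M N (2 * ((0 : ℕ) : ℝ) + 3) ≤ 1 / M ^ 2 := by
      refine le_trans ?_ hB.delta
      unfold Pa
      calc _ ≤ Real.exp (1 / 10 ^ 15) *
            Real.exp ((1 / 10 ^ 10) * (M / N * (2 * ((0 : ℕ) : ℝ) + 3) - M * Yf (N / M))) := by
            gcongr
        _ ≤ _ := by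
          rw [← Real.exp_add]
          refine Real.exp_le_exp.2 ?_
          have := mul_le_mul_of_nonneg_left hy hM0.le
          push_cast
          linarith
    have hb : (1 + 36 / (N : ℝ)) * Pb M N (m3 - 1) ≤ Pb M N m3 := by
      unfold Pb
      calc _ ≤ Real.exp (1 / 10 ^ 15) * Real.exp ((1 / 10 ^ 10) * ((M / N) ^ 3 * (m3 - 1) - 0.546 * M -
            0.00001 * M * (2 - N / M))) := by gcongr
        _ ≤ _ := by
          rw [← Real.exp_add]
          refine Real.exp_le_exp.2 ?_
          have : 1 ≤ (M / N) ^ 3 := one_le_pow₀ hr1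
          linarith
    have hpa : 0 < Pa M N (2 * ((0 : ℕ) : ℝ)) := Real.exp_pos _
    rw [mul_add]
    refine (add_le_add ha hb).trans ?_
    rw [add_comm]
    exact add_le_add_left (le_add_of_nonneg_left hpa.le) _
  · rw [if_neg hp] at h
    rw [if_neg (not_lt.2 hNM), if_neg hp, if_neg hp]
    obtain ⟨-, hd1, hd2⟩ := phase2_bounds h
    rw [Pd_zero (m3 := (m3 : ℝ)) ⟨hd1, hd2⟩, Pd_zero ⟨by linarith, by linarith⟩]
    have hc : (1 + 36 / (N : ℝ)) * Pc M N (m3 - 1) 3 ≤ Pc M N m3 0 := by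
      unfold Pc
      calc _ ≤ Real.exp (1 / 10 ^ 15) *
            Real.exp ((1 / 10 ^ 10) * (1.7 * 3 + 5.3 * ((m3 : ℝ) - 1) + 0.18 * M - N)) := by gcongr
        _ ≤ _ := by
          rw [← Real.exp_add]
          refine Real.exp_le_exp.2 ?_
          linarith
    linarith

/-- If three-clauses are left, opening an xor or a three-clause does not exceed the bound `W0`. -/
theorem dec' (hB : Big M) (N m3 m2 : ℕ) (hW : W0 M N m3 m2 < 1) : m3 = 0 ∨
    (1 ≤ m2 ∧ Wa M N m3 (m2 - 1) 1 1 0 ≤ W0 M N m3 m2) ∨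
    (1 ≤ m3 ∧ 1 ≤ N ∧ 2 * (m2 : ℝ) ≤ 0.6 * N ∧
      Wa M N (m3 - 1) m2 1 2 0 + 9 * RR M N (m3 - 1) m2 3 ≤ W0 M N m3 m2) := by
  have hM := hB.1
  have hM0 : 0 < M := by linarith
  have hPP : PP M N m3 (2 * m2) (2 * m2) 0 < 1 := by
    have := base_pos hM0 N
    unfold W0 at hW
    linarith
  obtain ⟨hN, hNM, c2, -, -, -⟩ := PP_good hM0 (Nat.cast_nonneg m3) (Nat.cast_nonneg m2) le_rfl
    le_rfl le_rfl hPP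
  have hN0 : (0 : ℝ) < N := by linarith
  rw [div_le_iff₀ hN0] at c2
  rcases Nat.eq_zero_or_pos m3 with h3 | h3
  · exact Or.inl h3
  right
  by_cases hp : 0.24 * M ≤ N ∧ m2 ≠ 0
  · left
    have h2 : 1 ≤ m2 := Nat.one_le_iff_ne_zero.2 hp.2
    refine ⟨h2, ?_⟩
    have hl := ell_le M N 1 1 0
    have hg := open_gain hB (x := N) (Λ := ell M N 1 1 0)
      (hl.trans (by norm_num))
    have h0 : 0 < 10 ^ 80 / M ^ 2 * Real.exp (10 ^ 90 * N / M) := by positivity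
    unfold Wa W0
    have e1 : PP M N m3 (2 * ((m2 - 1 : ℕ) : ℝ) + (((1 : ℕ) : ℝ) + ((1 : ℕ) : ℝ) + ((0 : ℕ) : ℝ)))
        (2 * ((m2 - 1 : ℕ) : ℝ) + ((0 : ℕ) : ℝ)) (((1 : ℕ) : ℝ) + ((1 : ℕ) : ℝ)) =
        PP M N m3 (2 * m2) (2 * m2) 0 := by
      unfold PP
      rw [if_neg (not_lt.2 hNM), if_neg (not_lt.2 hNM), if_pos hp.1, if_pos hp.1]
      congr 2
      push_cast [Nat.cast_sub h2]
      ring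
    rw [e1]
    linarith
  · right
    refine ⟨h3, by exact_mod_cast (by linarith : (1 : ℝ) ≤ N), by linarith, ?_⟩
    have hm : (N : ℝ) < 0.24 * M ∨ m2 = 0 := by
      by_contra hc
      push Not at hc
      exact hp hc
    have ho := PP_open hB h3 hPP hm
    have hl := ell_le M N 1 2 0
    have hg := open_gain hB (x := N) (Λ := ell M N 1 2 0)
      (hl.trans (by norm_num))
    unfold Wa W0 RR
    push_cast [Nat.cast_sub h3]
    have e1 : PP M N (m3 - 1) (2 * m2 + (1 + 2 + 0)) (2 * m2 + 0) (1 + 2) =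
        PP M N (m3 - 1) (2 * m2 + 3) (2 * m2) 3 := by norm_num
    rw [e1]
    obtain ⟨E, hE⟩ : ∃ E, E = Real.exp (10 ^ 90 * N / M) := ⟨_, rfl⟩
    have hE1 : 1 ≤ E := by rw [hE, Real.one_le_exp_iff]; positivity
    rw [← hE] at hg ⊢
    have hbE : base M N = E / M := by rw [hE]; rfl
    have hNi : 36 / (N : ℝ) ≤ 200 / M := by rw [div_le_div_iff₀ hN0 hM0]; linarith
    have hNi' : 10 ^ 22 / (N : ℝ) ≤ 10 ^ 25 / M := by rw [div_le_div_iff₀ hN0 hM0]; linarith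
    have hy : Real.exp ((1.7 / 10 ^ 10) * 3) ≤ 3 := by
      calc Real.exp ((1.7 / 10 ^ 10) * 3) ≤ Real.exp 1 := Real.exp_le_exp.2 (by norm_num)
        _ ≤ 3 := by linarith [Real.exp_one_lt_d9]
    have k1 : 36 / N * base M N ≤ E / M ^ 2 * 200 := by
      rw [hbE]
      calc 36 / N * (E / M) ≤ 200 / M * (E / M) := by gcongr
        _ = _ := by ring
    have k2 : 36 / N * ((10 ^ 45 / M + 10 ^ 22 / N) * Real.exp ((1.7 / 10 ^ 10) * 3)) ≤ E / M ^ 2 * 10 ^ 50 := by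
      calc _ ≤ 200 / M * ((10 ^ 45 / M + 10 ^ 25 / M) * 3) := by gcongr
        _ = 1 / M ^ 2 * (600 * (10 ^ 45 + 10 ^ 25)) := by ring
        _ ≤ E / M ^ 2 * 10 ^ 50 := by gcongr; norm_num
    have k3 : 1 / M ^ 2 ≤ E / M ^ 2 := by gcongr
    have k4 : 10 ^ 80 / M ^ 2 * E = E / M ^ 2 * 10 ^ 80 := by ring
    have k5 : 0 < E / M ^ 2 := by positivity
    have k6 : 9 * (4 / N * (base M N + PP M N (m3 - 1) (2 * m2 + 3) (2 * m2) 3 +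
        (10 ^ 45 / M + 10 ^ 22 / N) * Real.exp ((1.7 / 10 ^ 10) * 3))) =
        36 / N * base M N + 36 / N * PP M N (m3 - 1) (2 * m2 + 3) (2 * m2) 3 +
        36 / N * ((10 ^ 45 / M + 10 ^ 22 / N) * Real.exp ((1.7 / 10 ^ 10) * 3)) := by ring
    rw [k6]
    linarith

theorem superBounds (hB : Big M) : Super (W0 M) (W1 M) (W2 M) (Wa M) (RR M) := by
  have hM := hB.1
  have hM0 : 0 < M := by linarith
  constructor
  · exact W0_nonneg hM0
  · exact W1_nonneg hM0
  · exact W2_nonneg hM0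
  · exact Wa_nonneg hM0
  · exact RR_nonneg hM0
  · intro N m3 m2 q1 q0 k
    have := base_mono hM0 (show (N : ℝ) - 1 / 2 ≤ N by linarith)
    unfold Wa W2
    linarith
  · intro N m3 m2 τ hN _
    exact hR' hB N m3 m2 τ hN
  · intro N m3 m2 q1 q0 k _ h
    obtain ⟨h1, h2, h3⟩ := state_good (by linarith)
      (h.elim (fun h => W1_good hM0 h) (fun h => Wa_good hM0 h))
    refine ⟨by exact_mod_cast (by linarith : (2 : ℝ) ≤ N), ?_⟩
    push_cast [Nat.cast_sub h2]
    linarith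
  · exact step1t' hB
  · exact step1f' hB
  · exact step2t' hB
  · exact step2f' hB
  · exact dec' hB
  · intro N m3 m2
    unfold W0 W1
    simp only [Nat.cast_zero, add_zero]
    have : 0 < 10 ^ 45 / M * Real.exp ((4 / 10 ^ 11) * ell M N 0 0 0) := by positivity
    linarith
  · intro N m3 m2
    unfold W0 W2
    simp only [Nat.cast_zero, add_zero]
    have : 0 < 10 ^ 80 / M ^ 2 * Real.exp (10 ^ 90 * N / M) * Real.exp (0.00001 * ell M N 0 0 0) := by
      positivity
    linarith
  · intro N m3 m2 k
    unfold W1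
    rw [PP_wake]
    have := ell_wake M N k
    gcongr
  · intro N m3 m2 k
    unfold W2
    rw [PP_wake]
    have := ell_wake M N k
    gcongr

end Super

/-! ### Unordered clauses and the limit -/

/-- The slot formula obtained by ordering every clause of `φ` according to `π`. -/
noncomputable def orderBy {n m : ℕ} (φ : Fin m → EC3Clause n) (π : Fin m → Equiv.Perm (Fin 3)) :
    Cfg (Fin m) Empty Empty (Fin n) :=
  (fun i p => (φ i).1.orderEmbOfFin (φ i).2 (π i p), fun u => u.elim, fun t => t.elim)

theorem orderBy_injective {n m : ℕ} : Function.Injective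
    (fun x : (Fin m → EC3Clause n) × (Fin m → Equiv.Perm (Fin 3)) => orderBy x.1 x.2) := by
  rintro ⟨φ, π⟩ ⟨φ', π'⟩ h
  have h1 : ∀ i p, (φ i).1.orderEmbOfFin (φ i).2 (π i p) =
      (φ' i).1.orderEmbOfFin (φ' i).2 (π' i p) :=
    fun i p => congrFun (congrFun (congrArg Prod.fst h) i) p
  have h2 : φ = φ' := by
    funext i
    refine Subtype.ext (Finset.coe_injective ?_)
    rw [← Finset.range_orderEmbOfFin _ (φ i).2, ← Finset.range_orderEmbOfFin _ (φ' i).2,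
      ← (π i).surjective.range_comp ((φ i).1.orderEmbOfFin (φ i).2),
      ← (π' i).surjective.range_comp ((φ' i).1.orderEmbOfFin (φ' i).2)]
    exact congrArg Set.range (funext (h1 i))
  subst h2
  have h3 : π = π' := by
    funext i
    refine Equiv.ext fun p => ?_
    exact ((φ i).1.orderEmbOfFin (φ i).2).injective (h1 i p)
  rw [h3]

theorem satisfiable_of_sat {n m : ℕ} {φ : Fin m → EC3Clause n} {π : Fin m → Equiv.Perm (Fin 3)}
    (h : Sat Set.univ (orderBy φ π)) : FormulaSatisfiable φ := by
  obtain ⟨σ, h1, -, -⟩ := h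
  refine ⟨σ, fun i => ?_⟩
  obtain ⟨p, hp, hu⟩ := h1 i
  refine Finset.card_eq_one.2 ⟨(orderBy φ π).1 i p, ?_⟩
  ext v
  rw [Finset.mem_filter, Finset.mem_singleton]
  constructor
  · rintro ⟨hv, hσ⟩
    have : v ∈ Set.range ((φ i).1.orderEmbOfFin (φ i).2) := by
      rw [Finset.range_orderEmbOfFin]; exact hv
    obtain ⟨k, rfl⟩ := this
    have e : (φ i).1.orderEmbOfFin (φ i).2 k = (orderBy φ π).1 i ((π i).symm k) := by
      simp only [orderBy, Equiv.apply_symm_apply]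
    rw [e] at hσ ⊢
    rw [hu _ hσ]
  · rintro rfl
    exact ⟨Finset.orderEmbOfFin_mem _ _ _, hp⟩

theorem card_clause (n : ℕ) : Nat.card (EC3Clause n) = n.choose 3 := by
  unfold EC3Clause
  rw [Nat.card_eq_fintype_card, Fintype.card_finset_len, Fintype.card_fin]

instance (n : ℕ) : Finite (EC3Clause n) := by unfold EC3Clause; infer_instance

/-- Every unsatisfiable formula arises from `6 ^ m` unsatisfiable non-degenerate slot formulas. -/
theorem card_unsat_le (n m : ℕ) :
    Nat.card {φ : Fin m → EC3Clause n // ¬ FormulaSatisfiable φ} * 6 ^ m ≤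
      Nat.card {f : Cfg (Fin m) Empty Empty (Fin n) // ¬ Sat Set.univ f ∧ NA f ∧ TD f} := by
  have e : Nat.card ({φ : Fin m → EC3Clause n // ¬ FormulaSatisfiable φ} ×
      (Fin m → Equiv.Perm (Fin 3))) =
      Nat.card {φ : Fin m → EC3Clause n // ¬ FormulaSatisfiable φ} * 6 ^ m := by
    rw [Nat.card_prod, Nat.card_fun, Nat.card_perm, Nat.card_eq_fintype_card (α := Fin 3),
      Nat.card_eq_fintype_card (α := Fin m), Fintype.card_fin, Fintype.card_fin]
    rfl
  rw [← e]
  refine Nat.card_le_card_of_injective (fun x => ⟨orderBy x.1.1 x.2, ?_, ⟨?_, ?_⟩, ?_⟩) ?_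
  · exact fun h => x.1.2 (satisfiable_of_sat h)
  · intro i p p' hp
    exact (x.2 i).injective (((x.1.1 i).1.orderEmbOfFin (x.1.1 i).2).injective hp)
  · intro u; exact u.elim
  · intro t; exact t.elim
  · intro x y h
    have := orderBy_injective (a₁ := (x.1.1, x.2)) (a₂ := (y.1.1, y.2)) (congrArg Subtype.val h)
    rw [Prod.mk.injEq] at this
    exact Prod.ext (Subtype.ext this.1) this.2

theorem Psat_eq {n : ℕ} (hn : 3 ≤ n) (m : ℕ) :
    Psat n m = 1 - pr (fun φ : Fin m → EC3Clause n => ¬ FormulaSatisfiable φ) := by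
  classical
  have := Fintype.ofFinite (Fin m → EC3Clause n)
  have h0 : (Nat.card (Fin m → EC3Clause n) : ℝ) ≠ 0 := by
    rw [Nat.card_fun, card_clause]
    have : 0 < n.choose 3 := Nat.choose_pos hn
    positivity
  have h1 : Nat.card {φ : Fin m → EC3Clause n // FormulaSatisfiable φ} +
      Nat.card {φ : Fin m → EC3Clause n // ¬ FormulaSatisfiable φ} =
      Nat.card (Fin m → EC3Clause n) := by
    rw [← Nat.card_sum]
    exact Nat.card_congr (Equiv.sumCompl _)
  unfold Psat pr
  rw [eq_sub_iff_add_eq, ← add_div, div_eq_one_iff_eq h0]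
  exact_mod_cast h1

/-- Passing from uniformly random slots to uniformly random clauses costs at most the factor
`(n ^ 3 / (n * (n - 1) * (n - 2))) ^ m`, which is bounded when `m ≤ n`. -/
theorem unsat_le {n m : ℕ} (hn : 4 ≤ n) (hm : m ≤ n) :
    pr (fun φ : Fin m → EC3Clause n => ¬ FormulaSatisfiable φ) ≤
      Real.exp 12 * pr (fun f : Cfg (Fin m) Empty Empty (Fin n) =>
        ¬ Sat Set.univ f ∧ NA f ∧ TD f) := by
  have h := card_unsat_le n m
  have hn4 : (4 : ℝ) ≤ n := by exact_mod_cast hn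
  have hn0 : (0 : ℝ) < n := by linarith
  have hC : (6 * n.choose 3 : ℝ) = n * (n - 1) * (n - 2) := by
    have h1 := Nat.descFactorial_eq_factorial_mul_choose n 3
    have h2 : n.descFactorial 3 = (n - 2) * ((n - 1) * n) := by
      simp [Nat.descFactorial]
    rw [h2] at h1
    have h3 : ((n - 2 : ℕ) : ℝ) * (((n - 1 : ℕ) : ℝ) * n) = 6 * n.choose 3 := by
      exact_mod_cast h1
    rw [← h3]
    push_cast [Nat.cast_sub (show 2 ≤ n by omega), Nat.cast_sub (show 1 ≤ n by omega)]
    ring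
  have hC0 : (0 : ℝ) < n.choose 3 := by exact_mod_cast Nat.choose_pos (by omega)
  have hr : (n : ℝ) ^ 3 ≤ Real.exp (12 / n) * (6 * n.choose 3) := by
    rw [hC]
    have h1 := Real.add_one_le_exp (12 / (n : ℝ))
    have h2 : (n : ℝ) ^ 3 ≤ (12 / n + 1) * (n * (n - 1) * (n - 2)) := by
      have : (12 / (n : ℝ) + 1) * (n * (n - 1) * (n - 2)) = (12 + n) * (n - 1) * (n - 2) := by
        field_simp
      rw [this]
      nlinarith
    refine h2.trans ?_
    have : (0 : ℝ) ≤ n * (n - 1) * (n - 2) :=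
      mul_nonneg (mul_nonneg hn0.le (by linarith)) (by linarith)
    gcongr
  have hrm : ((n : ℝ) ^ 3) ^ m ≤ Real.exp 12 * (6 ^ m * (n.choose 3 : ℝ) ^ m) := by
    calc ((n : ℝ) ^ 3) ^ m ≤ (Real.exp (12 / n) * (6 * n.choose 3)) ^ m := by gcongr
      _ = Real.exp (12 / n) ^ m * (6 ^ m * (n.choose 3 : ℝ) ^ m) := by rw [mul_pow, mul_pow]
      _ ≤ _ := by
        gcongr
        rw [← Real.exp_nat_mul]
        refine Real.exp_le_exp.2 ?_
        have : (m : ℝ) ≤ n := by exact_mod_cast hm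
        rw [mul_div_assoc', div_le_iff₀ hn0]
        linarith
  unfold pr
  rw [card_cfg, Nat.card_fun, card_clause]
  simp only [Nat.card_eq_fintype_card (α := Fin n), Nat.card_eq_fintype_card (α := Fin m),
    Fintype.card_fin, Nat.card_of_isEmpty, mul_zero, add_zero]
  push_cast
  rw [pow_mul]
  obtain ⟨a, ha⟩ : ∃ a, a = Nat.card {φ : Fin m → EC3Clause n // ¬ FormulaSatisfiable φ} :=
    ⟨_, rfl⟩
  obtain ⟨b, hb⟩ : ∃ b, b = Nat.card {f : Cfg (Fin m) Empty Empty (Fin n) //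
    ¬ Sat Set.univ f ∧ NA f ∧ TD f} := ⟨_, rfl⟩
  rw [← ha, ← hb] at h ⊢
  have h' : (a : ℝ) * 6 ^ m ≤ b := by exact_mod_cast h
  rw [mul_div_assoc', div_le_div_iff₀ (by positivity) (by positivity)]
  calc (a : ℝ) * ((n : ℝ) ^ 3) ^ m ≤ a * (Real.exp 12 * (6 ^ m * (n.choose 3 : ℝ) ^ m)) := by gcongr
    _ = Real.exp 12 * (a * 6 ^ m) * (n.choose 3 : ℝ) ^ m := by ring
    _ ≤ Real.exp 12 * b * (n.choose 3 : ℝ) ^ m := by gcongr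

theorem eventually_big : ∀ᶠ n : ℕ in atTop, Big (n : ℝ) := by
  have h1 : ∀ᶠ x : ℝ in atTop, Big x := by
    have h := (isLittleO_pow_exp_pos_mul_atTop 2 (b := (1 / 10 ^ 23)) (by norm_num)).bound
      (c := 1) (by norm_num)
    filter_upwards [h, eventually_ge_atTop (10 ^ 120 : ℝ)] with x hx hx2
    refine ⟨hx2, ?_⟩
    rw [one_mul, Real.norm_of_nonneg (by positivity), Real.norm_of_nonneg (by positivity)] at hx
    exact hx
  exact tendsto_natCast_atTop_atTop.eventually h1

theorem W0_start {n m : ℕ} (hB : Big (n : ℝ)) (hm : (m : ℝ) ≤ 0.546 * n) :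
    W0 n n m 0 ≤ (Real.exp (10 ^ 90) + 2) / n := by
  have hM := hB.1
  have hn0 : (0 : ℝ) < n := by linarith
  have hd : Real.exp (-(1 / 10 ^ 16) * n) ≤ 1 / n := by
    refine hB.delta.trans ?_
    have : (n : ℝ) ≤ n ^ 2 := by nlinarith
    gcongr
  unfold W0 PP
  rw [if_neg (lt_irrefl _), if_pos (by linarith)]
  have hb : base n n = Real.exp (10 ^ 90) / n := by
    unfold base; rw [mul_div_assoc, div_self hn0.ne', mul_one]
  have ha : Pa n n (2 * ((0 : ℕ) : ℝ)) ≤ 1 / n := by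
    refine le_trans (Real.exp_le_exp.2 ?_) hd
    unfold Yf
    rw [div_self hn0.ne', Real.log_one]
    push_cast
    linarith
  have hc : Pb n n m ≤ 1 / n := by
    refine le_trans (Real.exp_le_exp.2 ?_) hd
    rw [div_self hn0.ne']
    linarith
  rw [hb]
  have : (Real.exp (10 ^ 90) + 2) / n = Real.exp (10 ^ 90) / n + 1 / n + 1 / n := by ring
  linarith

/-- The formula is satisfiable with probability `1 - O(1/n)`. -/
theorem main_bound {n m : ℕ} (hB : Big (n : ℝ)) (hm : (m : ℝ) ≤ 0.546 * n) :
    1 - Real.exp 12 * ((Real.exp (10 ^ 90) + 2) / n) ≤ Psat n m := by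
  have hM := hB.1
  have hn : 4 ≤ n := by exact_mod_cast (by linarith : (4 : ℝ) ≤ n)
  have hmn : m ≤ n := by exact_mod_cast (by linarith : (m : ℝ) ≤ n)
  rw [Psat_eq (by omega)]
  have h1 := unsat_le hn hmn
  have h2 := ((superBounds hB).level n).1 (Fin m) Empty Empty (Fin n) Set.univ Set.univ_nonempty
    (by simp)
  simp only [Nat.card_eq_fintype_card (α := Fin m), Fintype.card_fin, Nat.card_of_isEmpty] at h2
  have h3 := mul_le_mul_of_nonneg_left (h2.trans (W0_start hB hm)) (Real.exp_pos 12).le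
  linarith

end EC3

/-- If `r < 0.546`, a random EC3 formula on `n` variables with `⌊r n⌋` clauses is
satisfiable with probability tending to 1 as `n → ∞`. -/
theorem ec3_sat_whp (r : ℝ) (hr : r < 0.546) :
    Tendsto (fun n : ℕ => Psat n ⌊r * (n : ℝ)⌋₊) atTop (𝓝 1) := by
  have hlim : Tendsto (fun n : ℕ => 1 - Real.exp 12 * ((Real.exp (10 ^ 90) + 2) / n)) atTop (𝓝 1) := by
    have h := ((tendsto_const_div_atTop_nhds_zero_nat (Real.exp (10 ^ 90) + 2)).const_mul
      (Real.exp 12)).const_sub 1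
    simpa only [mul_zero, sub_zero] using h
  refine tendsto_of_tendsto_of_tendsto_of_le_of_le' hlim tendsto_const_nhds ?_ ?_
  · filter_upwards [EC3.eventually_big] with n hn
    refine EC3.main_bound hn ?_
    have h1 : ⌊r * (n : ℝ)⌋₊ ≤ ⌊0.546 * (n : ℝ)⌋₊ := Nat.floor_le_floor (by gcongr)
    have h2 : (⌊0.546 * (n : ℝ)⌋₊ : ℝ) ≤ 0.546 * n := Nat.floor_le (by positivity)
    have h3 : (⌊r * (n : ℝ)⌋₊ : ℝ) ≤ ⌊0.546 * (n : ℝ)⌋₊ := by exact_mod_cast h1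
    linarith
  · filter_upwards with n
    exact EC3.pr_le_one _
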